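/- Let (u, π, v, θ) be a smooth solution of the 3D stationary tropical climate model on ℝ³. Suppose p ∈ (3/2, 3), q ∈ [1, 6], λ ∈ [1, 2], α ∈ [0, 2/p − 1/3], β ∈ [0, 3/q − 1/2], γ ∈ [0, 3/λ − 3/2]. Assume that liminf_{R→+∞} (X_{α,p,R} + Y_{β,q,R} + Z'_{γ,λ,R}) < +∞. Assume moreover that (with p' = p/(p−1)) one of the following eight conditions holds: (A10)' q ∈ [1,2), λ ∈ [1, 6/5), α + ((4p−6)q)/((6−q)p)·β ≤ 1, α + ((4p−6)λ)/((6−3λ)p)·γ ≤ 1, (2q/(6−q))β + (2λ/(6−3λ))γ ≤ 1; (A11)' q ∈ [1,2), λ ∈ [6/5, 6p/(5p−3)), α + ((4p−6)q)/((6−q)p)·β ≤ 1, α + ((4p−6)λ)/((6−3λ)p)·γ ≤ 1, (2q/(6−q))β + γ ≤ (6−3λ)/(2λ); (A12)' q ∈ [1,2), λ ∈ [6p/(5p−3), 2], α + ((4p−6)q)/((6−q)p)·β ≤ 1, α + 2γ < 3/p + 6/λ − 4, (2q/(6−q))β + γ ≤ (6−3λ)/(2λ); (A13)' q ∈ [2,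 2p'), λ ∈ [1, 6/5), α + ((4p−6)q)/((6−q)p)·β ≤ 1, α + ((4p−6)λ)/((6−3λ)p)·γ ≤ 1, β + (2λ/(6−3λ))γ ≤ (6−q)/(2q); (A14)' q ∈ [2, 2p'), λ ∈ [6/5, 6p/(5p−3)), α + ((4p−6)q)/((6−q)p)·β ≤ 1, α + ((4p−6)λ)/((6−3λ)p)·γ ≤ 1, β + γ < 3/q + 3/λ − 3; (A15)' q ∈ [2, 2p'), λ ∈ [6p/(5p−3), 2], α + ((4p−6)q)/((6−q)p)·β ≤ 1, α + 2γ < 3/p + 6/λ − 4, β + γ < 3/q + 3/λ − 3; (A16)' q ∈ [2p', 6], λ ∈ [1, 6/5), α + 2β < 3/p + 6/q − 2, α + ((4p−6)λ)/((6−3λ)p)·γ ≤ 1, β + (2λ/(6−3λ))γ ≤ (6−q)/(2q); (A17)' q ∈ [2p', 6], λ ∈ [6/5, 6p/(5p−3)), α + 2β < 3/p + 6/q − 2, α + ((4p−6)λ)/((6−3λ)p)·γ ≤ 1, β + γ < 3/q + 3/λ − 3. Then u = 0 and v = 0 on ℝ³, and θ is a constant function. -/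

import Mathlib

/-!
The proof is an energy argument. Testing the three equations with `u φ`, `v φ` and `(θ - c) φ`, where
`φ` is a cutoff between the balls of radius `ρ` and `ρ + 8h` with `R ≤ ρ < ρ + 8h ≤ 3R/2`, gives
`∫ (|∇u|² + |∇v|² + |∇θ|²) φ` in terms of integrals over a shell (`Sys.energy`): a viscous term,
cubic terms `|u| (|u|² + |v|² + |θ - c|²) |∇φ|`, the bilinear flux `(θ - c) v · ∇φ` and the pressure
flux `π u · ∇φ`. Since only derivatives of `θ` occur in the system, the constant `c` can be chosen as a
local mean, and the Poincaré–Sobolev inequality on the shell (`poincare_sobolev`) turns the hypothesis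
on `∇θ` in `L^λ` into a bound for `θ - c` in `L^r`, `1/r = 1/λ - 1/3`. In this way the conditions on
`(λ, γ)` take the same form as those on `(q, β)`.

Let `G` be the size of the `L²` norms of the gradients and the `L⁶` norms of `u, v` on the shell. The
cubic terms are interpolated between the growth hypotheses and `G`. The condition `Adm` says that they
grow at most linearly in `R` with a power of `G` strictly below `2` (`cubic`), and the factor `1/h` of
`∇φ` compensates the growth. The condition `Bil` does the same for the bilinear flux.

The pressure flux is treated without singular integrals. As `u · ∇φ` has mean zero, only the
oscillation of `π` matters. The pressure equals its mollification at a scale `l` comparable to `h`,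
whose gradient is bounded pointwise by the momentum equation, plus the integral over the scales `s < l`
of the `s`-derivative of the mollifications (`mol_repr`). In the latter, the momentum equation
`∇π = div (∇u - u ⊗ u - v ⊗ v)` is inserted. For `s` below a threshold `δ` one bounds
`div (u ⊗ u + v ⊗ v)` in `L^{3/2}` by `G²`, with a factor that is small because `p > 3/2`; above `δ` the
derivative is moved to the kernel, which leaves powers of `G` below `2` (`Pres.main`, `press_num`,
`Sys.press`).

Altogether the energy in the ball of radius `ρ` is at most `ε G²` plus powers of `G` between `0` and
`2`, with a constant polynomial in `R / h` (`propA`, `step`). Since `G²` is controlled by the energy in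
a slightly larger ball (`l6_ball`), Young's inequality and a hole-filling iteration (`iterate`) bound
the energy in the ball of radius `R` independently of `R` at all good scales (`stage1`). Hence the
Dirichlet integral is finite, `G → 0` along good scales going to infinity, and the same inequality
shows that the energy vanishes (`core`). Then `u`, `v` and `θ` are constant, and the global `L⁶` bounds
for `u` and `v` force these two to be zero.

The eight alternatives reduce to `Adm` and `Bil`. For exponents below `2p'` the weighted
inequality is `Adm` itself; at or above `2p'` the strict inequality allows one to lower the exponent by
Hölder's inequality on the shell, which preserves the difference of the growth rate and `3/s`
(`shell_holder`, `side`). The conditions coupling `β` and `γ` give `Bil` (`bil_exists`).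
-/

open MeasureTheory Metric Filter
open scoped ENNReal NNReal

noncomputable section

/-- Euclidean `ℝ³`. -/
abbrev E3 := EuclideanSpace ℝ (Fin 3)

/-- The annulus `B_{2R} \ B_R` centered at the origin. -/
def Ann (R : ℝ) : Set E3 := ball (0 : E3) (2 * R) \ ball (0 : E3) R

/-- Mean value of `θ` over the annulus `B_{2R} \ B_R`. -/
def thetaBar (θ : E3 → ℝ) (R : ℝ) : ℝ := ⨍ x in Ann R, θ x

/-- `L^p` norm (with real exponent `p`) of `f` over the set `s`, valued in `ℝ≥0∞`. -/
def LpS {F : Type*} [NormedAddCommGroup F] (f : E3 → F) (p : ℝ) (s : Set E3) : ℝ≥0∞ :=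
  eLpNorm f (ENNReal.ofReal p) (volume.restrict s)

/-- Partial derivative `∂_j f` of a scalar function on `ℝ³`. -/
def pd3 (j : Fin 3) (f : E3 → ℝ) (x : E3) : ℝ :=
  fderiv ℝ f x (EuclideanSpace.single j 1)

/-- Laplacian `Δ f = Σ_j ∂_j ∂_j f` of a scalar function on `ℝ³`. -/
def lap3 (f : E3 → ℝ) (x : E3) : ℝ := ∑ j : Fin 3, pd3 j (pd3 j f) x

/-- `(u, pr, v, θ)` is a smooth solution of the 3D stationary tropical climate model. -/
structure IsTCMSolution (u : E3 → E3) (pr : E3 → ℝ) (v : E3 → E3) (θ : E3 → ℝ) : Prop where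
  smooth_u : ContDiff ℝ (⊤ : ℕ∞) u
  smooth_pr : ContDiff ℝ (⊤ : ℕ∞) pr
  smooth_v : ContDiff ℝ (⊤ : ℕ∞) v
  smooth_θ : ContDiff ℝ (⊤ : ℕ∞) θ
  eq_u : ∀ x : E3, ∀ i : Fin 3,
    -lap3 (fun y => u y i) x + (∑ j : Fin 3, u x j * pd3 j (fun y => u y i) x)
      + pd3 i pr x + (∑ j : Fin 3, pd3 j (fun y => v y j * v y i) x) = 0
  eq_v : ∀ x : E3, ∀ i : Fin 3,
    -lap3 (fun y => v y i) x + (∑ j : Fin 3, u x j * pd3 j (fun y => v y i) x)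
      + pd3 i θ x + (∑ j : Fin 3, v x j * pd3 j (fun y => u y i) x) = 0
  eq_θ : ∀ x : E3,
    -lap3 θ x + (∑ j : Fin 3, u x j * pd3 j θ x) + (∑ j : Fin 3, pd3 j (fun y => v y j) x) = 0
  div_u : ∀ x : E3, ∑ j : Fin 3, pd3 j (fun y => u y j) x = 0

/-- `X_{α,p,R} = R^{-α} ‖u‖_{L^p(B_{2R} \ B_R)}`. -/
def Xn (u : E3 → E3) (α p R : ℝ) : ℝ≥0∞ := ENNReal.ofReal (R ^ (-α)) * LpS u p (Ann R)

/-- `Y_{β,q,R} = R^{-β} ‖v‖_{L^q(B_{2R} \ B_R)}`. -/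
def Yn (v : E3 → E3) (β q R : ℝ) : ℝ≥0∞ := ENNReal.ofReal (R ^ (-β)) * LpS v q (Ann R)

/-- `Z̄_{γ,r,R} = R^{-γ} ‖θ - θ̄_R‖_{L^r(B_{2R} \ B_R)}`. -/
def Zbarn (θ : E3 → ℝ) (γ r R : ℝ) : ℝ≥0∞ :=
  ENNReal.ofReal (R ^ (-γ)) * LpS (fun x => θ x - thetaBar θ R) r (Ann R)

/-- `Z'_{γ,λ,R} = R^{-γ} ‖∇θ‖_{L^λ(B_{2R} \ B_R)}`. -/
def Zgradn (θ : E3 → ℝ) (γ lam R : ℝ) : ℝ≥0∞ :=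
  ENNReal.ofReal (R ^ (-γ)) * LpS (gradient θ) lam (Ann R)

namespace TCM

/-! ### Real `L^s` norms over compact sets and Hölder inequalities -/

/-- The `L^s` norm of a real function over `A`, as a real number. It is used for continuous
functions and compact `A` only, so that the Bochner integral never takes its junk value. -/
def nr (s : ℝ) (f : E3 → ℝ) (A : Set E3) : ℝ := (∫ x in A, |f x| ^ s) ^ (1 / s)

lemma nr_nonneg (s : ℝ) (f : E3 → ℝ) (A : Set E3) : 0 ≤ nr s f A :=
  Real.rpow_nonneg (integral_nonneg fun _ => Real.rpow_nonneg (abs_nonneg _) _) _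

lemma cont_abs_rpow {f : E3 → ℝ} (hf : Continuous f) {s : ℝ} (hs : 0 ≤ s) :
    Continuous fun x => |f x| ^ s :=
  hf.abs.rpow_const fun _ => Or.inr hs

lemma intOn {f : E3 → ℝ} (hf : Continuous f) {A : Set E3} (hA : IsCompact A) :
    IntegrableOn f A := hf.continuousOn.integrableOn_compact hA

lemma nr_pow {s : ℝ} (hs : 0 < s) (f : E3 → ℝ) (A : Set E3) :
    nr s f A ^ s = ∫ x in A, |f x| ^ s := by
  unfold nr
  rw [← Real.rpow_mul (integral_nonneg fun _ => Real.rpow_nonneg (abs_nonneg _) _),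
    one_div, inv_mul_cancel₀ hs.ne', Real.rpow_one]

lemma int_rpow_eq {s : ℝ} (hs : 0 < s) (f : E3 → ℝ) (A : Set E3) (w : ℝ) :
    (∫ x in A, |f x| ^ s) ^ w = nr s f A ^ (s * w) := by
  rw [← nr_pow hs, ← Real.rpow_mul (nr_nonneg _ _ _)]

lemma nr_mono_set {s : ℝ} (hs : 0 < s) {f : E3 → ℝ} (hf : Continuous f) {A B : Set E3}
    (hB : IsCompact B) (h : A ⊆ B) : nr s f A ≤ nr s f B := by
  unfold nr
  refine Real.rpow_le_rpow (integral_nonneg fun _ => Real.rpow_nonneg (abs_nonneg _) _) ?_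
    (by positivity)
  exact setIntegral_mono_set (intOn (cont_abs_rpow hf hs.le) hB)
    (ae_of_all _ fun _ => Real.rpow_nonneg (abs_nonneg _) _) (ae_of_all _ h)

lemma nr_mono {s : ℝ} (hs : 0 < s) {f g : E3 → ℝ} (hf : Continuous f) (hg : Continuous g)
    {A : Set E3} (hA : IsCompact A) (h : ∀ x ∈ A, |f x| ≤ |g x|) : nr s f A ≤ nr s g A := by
  unfold nr
  refine Real.rpow_le_rpow (integral_nonneg fun _ => Real.rpow_nonneg (abs_nonneg _) _) ?_
    (by positivity)
  exact setIntegral_mono_on (intOn (cont_abs_rpow hf hs.le) hA) (intOn (cont_abs_rpow hg hs.le) hA)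
    hA.measurableSet fun x hx => Real.rpow_le_rpow (abs_nonneg _) (h x hx) hs.le

lemma nr_const_mul {s : ℝ} (hs : 0 < s) {c : ℝ} (hc : 0 ≤ c) (f : E3 → ℝ) (A : Set E3) :
    nr s (fun x => c * f x) A = c * nr s f A := by
  unfold nr
  have : ∀ x, |c * f x| ^ s = c ^ s * |f x| ^ s := fun x => by
    rw [abs_mul, abs_of_nonneg hc, Real.mul_rpow hc (abs_nonneg _)]
  simp_rw [this]
  rw [integral_const_mul, Real.mul_rpow (by positivity)
    (integral_nonneg fun _ => Real.rpow_nonneg (abs_nonneg _) _), ← Real.rpow_mul hc,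
    mul_one_div_cancel hs.ne', Real.rpow_one]

/-- Three-term weighted Hölder inequality on a compact set. -/
lemma holder3 {Ω : Type*} [NormedAddCommGroup Ω] [MeasureSpace Ω] [BorelSpace Ω]
    [IsFiniteMeasureOnCompacts (volume : Measure Ω)]
    {A : Set Ω} (hA : IsCompact A) {F1 F2 F3 : Ω → ℝ} (h1 : Continuous F1)
    (h2 : Continuous F2) (h3 : Continuous F3) (p1 : ∀ x, 0 ≤ F1 x) (p2 : ∀ x, 0 ≤ F2 x)
    (p3 : ∀ x, 0 ≤ F3 x) {w1 w2 w3 : ℝ} (q1 : 0 ≤ w1) (q2 : 0 ≤ w2) (q3 : 0 ≤ w3)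
    (hw : w1 + w2 + w3 = 1) :
    ∫ x in A, F1 x ^ w1 * F2 x ^ w2 * F3 x ^ w3 ≤
      (∫ x in A, F1 x) ^ w1 * (∫ x in A, F2 x) ^ w2 * (∫ x in A, F3 x) ^ w3 := by
  have key := ENNReal.lintegral_prod_norm_pow_le (μ := volume.restrict A)
    (Finset.univ : Finset (Fin 3))
    (f := fun i x => ENNReal.ofReal (![F1, F2, F3] i x)) (p := ![w1, w2, w3])
    (by intro i _; fin_cases i
        · exact h1.measurable.ennreal_ofReal.aemeasurable
        · exact h2.measurable.ennreal_ofReal.aemeasurable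
        · exact h3.measurable.ennreal_ofReal.aemeasurable)
    (by simp [Fin.sum_univ_three, hw])
    (by intro i _; fin_cases i <;> simpa)
  simp only [Fin.prod_univ_three, Matrix.cons_val_zero, Matrix.cons_val_one,
    Matrix.cons_val] at key
  have c : Continuous fun x => F1 x ^ w1 * F2 x ^ w2 * F3 x ^ w3 :=
    ((h1.rpow_const fun _ => Or.inr q1).mul (h2.rpow_const fun _ => Or.inr q2)).mul
      (h3.rpow_const fun _ => Or.inr q3)
  have pos : ∀ x, 0 ≤ F1 x ^ w1 * F2 x ^ w2 * F3 x ^ w3 := fun x =>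
    mul_nonneg (mul_nonneg (Real.rpow_nonneg (p1 x) _) (Real.rpow_nonneg (p2 x) _))
      (Real.rpow_nonneg (p3 x) _)
  have e : ∀ x, ENNReal.ofReal (F1 x) ^ w1 * ENNReal.ofReal (F2 x) ^ w2 * ENNReal.ofReal (F3 x) ^ w3
      = ENNReal.ofReal (F1 x ^ w1 * F2 x ^ w2 * F3 x ^ w3) := fun x => by
    rw [ENNReal.ofReal_rpow_of_nonneg (p1 x) q1, ENNReal.ofReal_rpow_of_nonneg (p2 x) q2,
      ENNReal.ofReal_rpow_of_nonneg (p3 x) q3, ← ENNReal.ofReal_mul (Real.rpow_nonneg (p1 x) _),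
      ← ENNReal.ofReal_mul (mul_nonneg (Real.rpow_nonneg (p1 x) _) (Real.rpow_nonneg (p2 x) _))]
  simp_rw [e] at key
  have i1 : 0 ≤ ∫ x in A, F1 x := integral_nonneg p1
  have i2 : 0 ≤ ∫ x in A, F2 x := integral_nonneg p2
  have i3 : 0 ≤ ∫ x in A, F3 x := integral_nonneg p3
  rw [← ofReal_integral_eq_lintegral_ofReal (c.continuousOn.integrableOn_compact hA) (ae_of_all _ pos),
    ← ofReal_integral_eq_lintegral_ofReal (h1.continuousOn.integrableOn_compact hA) (ae_of_all _ p1),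
    ← ofReal_integral_eq_lintegral_ofReal (h2.continuousOn.integrableOn_compact hA) (ae_of_all _ p2),
    ← ofReal_integral_eq_lintegral_ofReal (h3.continuousOn.integrableOn_compact hA) (ae_of_all _ p3),
    ENNReal.ofReal_rpow_of_nonneg i1 q1, ENNReal.ofReal_rpow_of_nonneg i2 q2,
    ENNReal.ofReal_rpow_of_nonneg i3 q3, ← ENNReal.ofReal_mul (by positivity),
    ← ENNReal.ofReal_mul (by positivity), ENNReal.ofReal_le_ofReal_iff (by positivity)] at key
  exact key

/-- Hölder's inequality with a volume factor making up for missing integrability. -/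
lemma holder2 {A : Set E3} (hA : IsCompact A) {f g : E3 → ℝ} (hf : Continuous f)
    (hg : Continuous g) {a b : ℝ} (ha : 0 < a) (hb : 0 < b) (hab : 1 / a + 1 / b ≤ 1) :
    ∫ x in A, |f x| * |g x| ≤
      nr a f A * nr b g A * (volume.real A) ^ (1 - 1 / a - 1 / b) := by
  have := holder3 hA (cont_abs_rpow hf ha.le) (cont_abs_rpow hg hb.le)
    (continuous_const (y := (1 : ℝ)))
    (fun _ => Real.rpow_nonneg (abs_nonneg _) _) (fun _ => Real.rpow_nonneg (abs_nonneg _) _)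
    (fun _ => zero_le_one) (w1 := 1 / a) (w2 := 1 / b) (w3 := 1 - 1 / a - 1 / b)
    (by positivity) (by positivity) (by linarith) (by ring)
  have e1 : ∀ x, (|f x| ^ a) ^ (1 / a) = |f x| := fun x => by
    rw [← Real.rpow_mul (abs_nonneg _), mul_one_div_cancel ha.ne', Real.rpow_one]
  have e2 : ∀ x, (|g x| ^ b) ^ (1 / b) = |g x| := fun x => by
    rw [← Real.rpow_mul (abs_nonneg _), mul_one_div_cancel hb.ne', Real.rpow_one]
  simp only [e1, e2, Real.one_rpow, mul_one] at this
  simpa [nr] using this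

/-- `L^σ` norms interpolate between `L^s` and `L^6`, with a volume factor when the interpolated
exponent exceeds `σ`. -/
lemma interp {A : Set E3} (hA : IsCompact A) {f : E3 → ℝ} (hf : Continuous f)
    {s σ t : ℝ} (hs : 0 < s) (hσ : 0 < σ) (ht0 : 0 ≤ t) (ht1 : t ≤ 1)
    (h : (1 - t) / s + t / 6 ≤ 1 / σ) :
    nr σ f A ≤ nr s f A ^ (1 - t) * nr 6 f A ^ t *
      (volume.real A) ^ (1 / σ - (1 - t) / s - t / 6) := by
  have h' : 0 ≤ 1 - σ * (1 - t) / s - σ * t / 6 := by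
    have := mul_le_mul_of_nonneg_left h hσ.le
    rw [mul_one_div_cancel hσ.ne'] at this
    have e : σ * ((1 - t) / s + t / 6) = σ * (1 - t) / s + σ * t / 6 := by ring
    linarith
  have h1t : 0 ≤ 1 - t := by linarith
  have key := holder3 hA (cont_abs_rpow hf hs.le) (cont_abs_rpow hf (s := 6) (by norm_num))
    (continuous_const (y := (1 : ℝ)))
    (fun _ => Real.rpow_nonneg (abs_nonneg _) _) (fun _ => Real.rpow_nonneg (abs_nonneg _) _)
    (fun _ => zero_le_one) (w1 := σ * (1 - t) / s) (w2 := σ * t / 6)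
    (w3 := 1 - σ * (1 - t) / s - σ * t / 6)
    (by positivity) (by positivity) h' (by ring)
  have e1 : ∀ x, (|f x| ^ s) ^ (σ * (1 - t) / s) * (|f x| ^ (6:ℝ)) ^ (σ * t / 6) = |f x| ^ σ :=
    fun x => by
    rw [← Real.rpow_mul (abs_nonneg _), ← Real.rpow_mul (abs_nonneg _),
      show s * (σ * (1 - t) / s) = σ * (1 - t) by field_simp,
      show (6:ℝ) * (σ * t / 6) = σ * t by ring,
      ← Real.rpow_add_of_nonneg (abs_nonneg _) (by positivity) (by positivity)]
    congr 1; ring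
  simp only [e1, Real.one_rpow, mul_one] at key
  rw [int_rpow_eq hs, int_rpow_eq (by norm_num : (0:ℝ) < 6)] at key
  have key2 := Real.rpow_le_rpow (integral_nonneg fun _ => Real.rpow_nonneg (abs_nonneg _) _) key
    (by positivity : 0 ≤ 1 / σ)
  have n1 := nr_nonneg s f A
  have n2 := nr_nonneg 6 f A
  refine key2.trans (le_of_eq ?_)
  have vv : (0:ℝ) ≤ ∫ x in A, (1:ℝ) := integral_nonneg fun _ => zero_le_one
  rw [Real.mul_rpow (by positivity) (by positivity), Real.mul_rpow (by positivity) (by positivity),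
    ← Real.rpow_mul n1, ← Real.rpow_mul n2, ← Real.rpow_mul vv]
  congr 1
  · congr 1 <;> congr 1 <;> field_simp
  · simp only [integral_const, smul_eq_mul, mul_one]
    congr 1
    · simp
    · field_simp

/-- `∫ |f| g²` by Hölder with exponents `p` and `p' = m`. -/
lemma holder_sq {A : Set E3} (hA : IsCompact A) {f g : E3 → ℝ} (hf : Continuous f)
    (hg : Continuous g) {p m : ℝ} (hp : 0 < p) (hm : 0 < m) (h : 1 / p + 1 / m = 1) :
    ∫ x in A, |f x| * g x ^ 2 ≤ nr p f A * nr (2 * m) g A ^ 2 := by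
  have := holder3 hA (cont_abs_rpow hf hp.le) (cont_abs_rpow hg (s := 2 * m) (by positivity))
    (continuous_const (y := (1 : ℝ)))
    (fun _ => Real.rpow_nonneg (abs_nonneg _) _) (fun _ => Real.rpow_nonneg (abs_nonneg _) _)
    (fun _ => zero_le_one) (w1 := 1 / p) (w2 := 1 / m) (w3 := 0)
    (by positivity) (by positivity) le_rfl (by linarith)
  have e1 : ∀ x, (|f x| ^ p) ^ (1 / p) = |f x| := fun x => by
    rw [← Real.rpow_mul (abs_nonneg _), mul_one_div_cancel hp.ne', Real.rpow_one]
  have e2 : ∀ x, (|g x| ^ (2 * m)) ^ (1 / m) = g x ^ 2 := fun x => by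
    rw [← Real.rpow_mul (abs_nonneg _), show 2 * m * (1 / m) = (2:ℕ) by field_simp; norm_num,
      Real.rpow_natCast, sq_abs]
  simp only [e1, e2, mul_one, Real.rpow_zero] at this
  rw [int_rpow_eq (by positivity : 0 < 2 * m), show 2 * m * (1 / m) = (2:ℕ) by field_simp; norm_num,
      Real.rpow_natCast] at this
  exact this

/-- `‖f g‖_c ≤ ‖f‖_a ‖g‖_b` for `1/c = 1/a + 1/b`. -/
lemma nr_mul {A : Set E3} (hA : IsCompact A) {f g : E3 → ℝ} (hf : Continuous f)
    (hg : Continuous g) {a b c : ℝ} (ha : 0 < a) (hb : 0 < b) (hc : 0 < c)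
    (h : 1 / a + 1 / b = 1 / c) :
    nr c (fun x => f x * g x) A ≤ nr a f A * nr b g A := by
  have hw : c / a + c / b + 0 = 1 := by
    have : c * (1 / a + 1 / b) = c * (1 / c) := by rw [h]
    rw [mul_one_div_cancel hc.ne'] at this
    rw [← this]; ring
  have key := holder3 hA (cont_abs_rpow hf ha.le) (cont_abs_rpow hg hb.le)
    (continuous_const (y := (1 : ℝ)))
    (fun _ => Real.rpow_nonneg (abs_nonneg _) _) (fun _ => Real.rpow_nonneg (abs_nonneg _) _)
    (fun _ => zero_le_one) (w1 := c / a) (w2 := c / b) (w3 := 0)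
    (by positivity) (by positivity) le_rfl hw
  have e1 : ∀ x, (|f x| ^ a) ^ (c / a) * (|g x| ^ b) ^ (c / b) = |f x * g x| ^ c := fun x => by
    rw [← Real.rpow_mul (abs_nonneg _), ← Real.rpow_mul (abs_nonneg _), mul_div_cancel₀ _ ha.ne',
      mul_div_cancel₀ _ hb.ne', abs_mul, Real.mul_rpow (abs_nonneg _) (abs_nonneg _)]
  simp only [e1, mul_one, Real.rpow_zero] at key
  rw [int_rpow_eq ha, int_rpow_eq hb, mul_div_cancel₀ _ ha.ne', mul_div_cancel₀ _ hb.ne'] at key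
  have key2 := Real.rpow_le_rpow (integral_nonneg fun _ => Real.rpow_nonneg (abs_nonneg _) _) key
    (by positivity : 0 ≤ 1 / c)
  refine key2.trans (le_of_eq ?_)
  have n1 := nr_nonneg a f A
  have n2 := nr_nonneg b g A
  rw [Real.mul_rpow (by positivity) (by positivity), ← Real.rpow_mul n1, ← Real.rpow_mul n2,
    mul_one_div_cancel hc.ne', Real.rpow_one, Real.rpow_one]

lemma nr_sq {A : Set E3} {g : E3 → ℝ} {m : ℝ} (hm : 0 < m) :
    nr m (fun x => g x ^ 2) A = nr (2 * m) g A ^ 2 := by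
  have e2 : ∀ x, |g x ^ 2| ^ m = |g x| ^ (2 * m) := fun x => by
    rw [abs_pow, ← Real.rpow_natCast, ← Real.rpow_mul (abs_nonneg _)]; norm_num
  rw [nr]; simp only [e2]
  rw [int_rpow_eq (by positivity : 0 < 2 * m), ← Real.rpow_natCast]
  congr 1; field_simp; norm_num

lemma nr_eLpNorm {s : ℝ} (hs : 0 < s) {F : Type*} [NormedAddCommGroup F] {f : E3 → F}
    (hf : Continuous f) {A : Set E3} (hA : IsCompact A) :
    eLpNorm f (ENNReal.ofReal s) (volume.restrict A) = ENNReal.ofReal (nr s (fun x => ‖f x‖) A) := by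
  rw [eLpNorm_eq_lintegral_rpow_enorm_toReal (by simpa using hs) ENNReal.ofReal_ne_top,
    ENNReal.toReal_ofReal hs.le, nr,
    ← ENNReal.ofReal_rpow_of_nonneg
      (integral_nonneg fun _ => Real.rpow_nonneg (abs_nonneg _) _) (by positivity),
    ofReal_integral_eq_lintegral_ofReal (intOn (cont_abs_rpow hf.norm hs.le) hA)
      (ae_of_all _ fun _ => Real.rpow_nonneg (abs_nonneg _) _)]
  congr 2
  ext x
  rw [← ENNReal.ofReal_rpow_of_nonneg (abs_nonneg _) hs.le, abs_norm, ofReal_norm]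

end TCM

namespace TCM

/-! ### Fubini, changes of variables and a Young-type bound -/

/-- The closed unit ball, over which the mollification variable ranges. -/
def B1 : Set E3 := closedBall 0 1

lemma B1_compact : IsCompact B1 := isCompact_closedBall 0 1

lemma finrank_E3 : Module.finrank ℝ E3 = 3 := by simp

/-- Continuous functions on a product of compact sets: Fubini. -/
lemma fubini {A B : Set E3} (hA : IsCompact A) (hB : IsCompact B) {f : E3 × E3 → ℝ}
    (hf : Continuous f) :
    ∫ y in A ×ˢ B, f y = ∫ x in A, ∫ z in B, f (x, z) :=
  setIntegral_prod f (hf.continuousOn.integrableOn_compact (hA.prod hB))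

lemma fubini_symm {A B : Set E3} (hA : IsCompact A) (hB : IsCompact B) {f : E3 × E3 → ℝ}
    (hf : Continuous f) :
    ∫ y in A ×ˢ B, f y = ∫ z in B, ∫ x in A, f (x, z) := by
  rw [fubini hA hB hf]
  refine integral_integral_swap ?_
  have := (hf.continuousOn.integrableOn_compact (hA.prod hB) : IntegrableOn f (A ×ˢ B) volume)
  rwa [IntegrableOn, Measure.volume_eq_prod, ← Measure.prod_restrict] at this

/-- Translating a nonnegative integrand within `A'`. -/
lemma int_translate {A A' : Set E3} (hA' : IsCompact A') {n : E3 → ℝ}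
    (hn : Continuous n) (pos : ∀ x, 0 ≤ n x) (y : E3) (h : ∀ x ∈ A, x - y ∈ A') :
    ∫ x in A, n (x - y) ≤ ∫ x in A', n x := by
  have mp : MeasurePreserving (fun x : E3 => x - y) volume volume :=
    measurePreserving_sub_right volume y
  have me : MeasurableEmbedding (fun x : E3 => x - y) := (MeasurableEquiv.subRight y).measurableEmbedding
  have e := mp.setIntegral_preimage_emb me n A'
  rw [← e]
  refine setIntegral_mono_set ?_ (ae_of_all _ fun _ => pos _) (ae_of_all _ h)
  have := (mp.integrableOn_comp_preimage me (f := n) (s := A')).2 (intOn hn hA')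
  exact this

/-- Integrating over the mollification variable: the substitution `y = x - s z`. -/
lemma int_scale {A' : Set E3} (hA' : IsCompact A') {n : E3 → ℝ}
    (hn : Continuous n) (pos : ∀ x, 0 ≤ n x) (x : E3) {s : ℝ} (hs : 0 < s)
    (h : ∀ z ∈ B1, x - s • z ∈ A') :
    ∫ z in B1, n (x - s • z) ≤ s ^ (-3 : ℝ) * ∫ x in A', n x := by
  have hm := hA'.measurableSet
  have i1 : Integrable (A'.indicator n) := (integrable_indicator_iff hm).2 (intOn hn hA')
  have i2 : Integrable fun z => A'.indicator n (x - s • z) := by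
    have := (i1.comp_sub_left x).comp_smul hs.ne'
    exact this
  have e1 : ∫ z in B1, n (x - s • z) = ∫ z in B1, A'.indicator n (x - s • z) := by
    refine setIntegral_congr_fun B1_compact.measurableSet fun z hz => ?_
    simp [Set.indicator_of_mem (h z hz)]
  have e2 : ∫ z in B1, A'.indicator n (x - s • z) ≤ ∫ z, A'.indicator n (x - s • z) :=
    setIntegral_le_integral i2 (ae_of_all _ fun z => Set.indicator_nonneg (fun _ _ => pos _) _)
  have e3 : ∫ z, A'.indicator n (x - s • z) = s ^ (-3 : ℝ) * ∫ x in A', n x := by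
    rw [Measure.integral_comp_smul volume (fun y => A'.indicator n (x - y)) s,
      integral_sub_left_eq_self (A'.indicator n) volume x, integral_indicator hm, finrank_E3,
      abs_of_nonneg (by positivity), smul_eq_mul, Real.rpow_neg hs.le]
    norm_cast
  rw [e1, ← e3]; exact e2

/-- Young-type bound for mollified bilinear integrals. -/
lemma young {A A' : Set E3} (hA : IsCompact A) (hA' : IsCompact A') {g n : E3 → ℝ}
    (hg : Continuous g) (hn : Continuous n) {a b s : ℝ} (ha : 1 ≤ a) (hb : 1 ≤ b)
    (hab : 1 ≤ 1 / a + 1 / b) (hs : 0 < s) (h : ∀ x ∈ A, ∀ z ∈ B1, x - s • z ∈ A') :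
    ∫ y in A ×ˢ B1, |g y.1| * |n (y.1 - s • y.2)| ≤
      (1 + volume.real B1) ^ (2 : ℝ) * s ^ (-3 * (1 / a + 1 / b - 1)) * (nr a g A * nr b n A') := by
  have ha0 : 0 < a := by linarith
  have hb0 : 0 < b := by linarith
  have ha1 : 1 / a ≤ 1 := (div_le_one ha0).2 ha
  have hb1 : 1 / b ≤ 1 := (div_le_one hb0).2 hb
  have cG : Continuous fun y : E3 × E3 => |g y.1| ^ a := (cont_abs_rpow hg ha0.le).comp continuous_fst
  have cN : Continuous fun y : E3 × E3 => |n (y.1 - s • y.2)| ^ b :=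
    (cont_abs_rpow hn hb0.le).comp (by fun_prop)
  have cGN : Continuous fun y : E3 × E3 => |g y.1| ^ a * |n (y.1 - s • y.2)| ^ b := cG.mul cN
  have nG : ∀ x, 0 ≤ |g x| ^ a := fun _ => Real.rpow_nonneg (abs_nonneg _) _
  have nN : ∀ x, 0 ≤ |n x| ^ b := fun _ => Real.rpow_nonneg (abs_nonneg _) _
  have key := holder3 (hA.prod B1_compact) cGN cG cN
    (fun _ => mul_nonneg (nG _) (nN _)) (fun _ => nG _) (fun _ => nN _)
    (w1 := 1 / a + 1 / b - 1) (w2 := 1 - 1 / b) (w3 := 1 - 1 / a)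
    (by linarith) (by linarith) (by linarith) (by ring)
  have e : ∀ y : E3 × E3, (|g y.1| ^ a * |n (y.1 - s • y.2)| ^ b) ^ (1 / a + 1 / b - 1) *
      (|g y.1| ^ a) ^ (1 - 1 / b) * (|n (y.1 - s • y.2)| ^ b) ^ (1 - 1 / a) =
      |g y.1| * |n (y.1 - s • y.2)| := fun y => by
    rw [Real.mul_rpow (nG _) (nN _), mul_right_comm (c := (|g y.1| ^ a) ^ (1 - 1 / b)), mul_assoc (_ * _),
      ← Real.rpow_add_of_nonneg (nG _) (by linarith) (by linarith),
      ← Real.rpow_add_of_nonneg (nN _) (by linarith) (by linarith),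
      ← Real.rpow_mul (abs_nonneg _), ← Real.rpow_mul (abs_nonneg _),
      show a * (1 / a + 1 / b - 1 + (1 - 1 / b)) = 1 by field_simp; ring,
      show b * (1 / a + 1 / b - 1 + (1 - 1 / a)) = 1 by field_simp; ring, Real.rpow_one,
      Real.rpow_one]
  simp only [e] at key
  refine key.trans ?_
  set IG := ∫ x in A, |g x| ^ a with hIG
  set IN := ∫ x in A', |n x| ^ b with hIN
  have pG : 0 ≤ IG := integral_nonneg nG
  have pN : 0 ≤ IN := integral_nonneg nN
  have vB : 0 ≤ volume.real B1 := measureReal_nonneg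
  have b1 : ∫ y in A ×ˢ B1, |g y.1| ^ a * |n (y.1 - s • y.2)| ^ b ≤ s ^ (-3 : ℝ) * (IG * IN) := by
    rw [fubini hA B1_compact cGN]
    have : ∀ x ∈ A, ∫ z in B1, |g x| ^ a * |n (x - s • z)| ^ b ≤ |g x| ^ a * (s ^ (-3 : ℝ) * IN) := by
      intro x hx
      rw [integral_const_mul]
      exact mul_le_mul_of_nonneg_left
        (int_scale hA' (cont_abs_rpow hn hb0.le) nN x hs (h x hx)) (nG x)
    refine (setIntegral_mono_on ?_ ?_ hA.measurableSet this).trans (le_of_eq ?_)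
    · have := (cGN.continuousOn.integrableOn_compact (hA.prod B1_compact) :
        IntegrableOn _ (A ×ˢ B1) volume)
      rw [IntegrableOn, Measure.volume_eq_prod, ← Measure.prod_restrict] at this
      exact this.integral_prod_left
    · exact (intOn ((cont_abs_rpow hg ha0.le).mul continuous_const) hA)
    · rw [integral_mul_const]; ring
  have b2 : ∫ y in A ×ˢ B1, |g y.1| ^ a ≤ (1 + volume.real B1) * IG := by
    rw [fubini_symm hA B1_compact cG]
    simp only [integral_const, measureReal_restrict_apply_univ, smul_eq_mul]
    nlinarith
  have b3 : ∫ y in A ×ˢ B1, |n (y.1 - s • y.2)| ^ b ≤ (1 + volume.real B1) * IN := by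
    rw [fubini_symm hA B1_compact cN]
    have : ∀ z ∈ B1, ∫ x in A, |n (x - s • z)| ^ b ≤ IN := fun z hz =>
      int_translate hA' (cont_abs_rpow hn hb0.le) nN _ fun x hx => h x hx z hz
    refine (setIntegral_mono_on (g := fun _ => IN) ?_ ?_ B1_compact.measurableSet this).trans ?_
    · have := ((cN).continuousOn.integrableOn_compact (hA.prod B1_compact) :
        IntegrableOn _ (A ×ˢ B1) volume)
      rw [IntegrableOn, Measure.volume_eq_prod, ← Measure.prod_restrict] at this
      exact this.integral_prod_right
    · exact intOn continuous_const B1_compact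
    · simp only [integral_const, measureReal_restrict_apply_univ, smul_eq_mul]
      nlinarith
  set K := 1 + volume.real B1 with hK
  have K1 : 1 ≤ K := by linarith
  have k0 : (0:ℝ) ≤ ∫ y in A ×ˢ B1, |g y.1| ^ a * |n (y.1 - s • y.2)| ^ b :=
    integral_nonneg fun _ => mul_nonneg (nG _) (nN _)
  have k1 : (0:ℝ) ≤ ∫ y in A ×ˢ B1, |g y.1| ^ a := integral_nonneg fun _ => nG _
  have k2 : (0:ℝ) ≤ ∫ y in A ×ˢ B1, |n (y.1 - s • y.2)| ^ b := integral_nonneg fun _ => nN _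
  calc _ ≤ (s ^ (-3 : ℝ) * (IG * IN)) ^ (1 / a + 1 / b - 1) * (K * IG) ^ (1 - 1 / b) *
        (K * IN) ^ (1 - 1 / a) := by
        gcongr
    _ = K ^ (1 - 1 / b + (1 - 1 / a)) * s ^ (-3 * (1 / a + 1 / b - 1)) * (nr a g A * nr b n A') := by
        have s3 : 0 ≤ s ^ (-3 : ℝ) := by positivity
        have K0 : 0 ≤ K := by linarith
        rw [Real.mul_rpow s3 (by positivity), Real.mul_rpow pG pN, Real.mul_rpow K0 pG,
          Real.mul_rpow K0 pN, Real.rpow_add_of_nonneg K0 (by linarith) (by linarith),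
          ← Real.rpow_mul hs.le]
        have f1 : nr a g A = IG ^ (1 / a + 1 / b - 1) * IG ^ (1 - 1 / b) := by
          rw [← Real.rpow_add_of_nonneg pG (by linarith) (by linarith), nr]
          congr 1; ring
        have f2 : nr b n A' = IN ^ (1 / a + 1 / b - 1) * IN ^ (1 - 1 / a) := by
          rw [← Real.rpow_add_of_nonneg pN (by linarith) (by linarith), nr]
          congr 1; ring
        rw [f1, f2]; ring
    _ ≤ _ := by
        have := nr_nonneg a g A
        have := nr_nonneg b n A'
        gcongr
        · have : 0 < 1 / a := by positivity
          have : 0 < 1 / b := by positivity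
          linarith

end TCM

namespace TCM

/-! ### Smooth functions and partial derivatives -/

/-- Smooth scalar functions on `ℝ³`. -/
abbrev Sm (f : E3 → ℝ) : Prop := ContDiff ℝ (⊤ : ℕ∞) f

lemma Sm.diff {f : E3 → ℝ} (hf : Sm f) : Differentiable ℝ f := hf.differentiable (by simp)
lemma Sm.cont {f : E3 → ℝ} (hf : Sm f) : Continuous f := hf.continuous

lemma Sm.fderiv {f : E3 → ℝ} (hf : Sm f) : ContDiff ℝ (⊤ : ℕ∞) (fderiv ℝ f) :=
  hf.fderiv_right (by simp)

lemma Sm.pd {f : E3 → ℝ} (hf : Sm f) (j : Fin 3) : Sm (pd3 j f) :=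
  hf.fderiv.clm_apply contDiff_const

lemma Sm.add {f g : E3 → ℝ} (hf : Sm f) (hg : Sm g) : Sm fun x => f x + g x := ContDiff.add hf hg
lemma Sm.sub {f g : E3 → ℝ} (hf : Sm f) (hg : Sm g) : Sm fun x => f x - g x := ContDiff.sub hf hg
lemma Sm.mul {f g : E3 → ℝ} (hf : Sm f) (hg : Sm g) : Sm fun x => f x * g x := ContDiff.mul hf hg
lemma Sm.const (c : ℝ) : Sm fun _ => c := contDiff_const
lemma Sm.sum {ι : Type*} {s : Finset ι} {f : ι → E3 → ℝ} (hf : ∀ i ∈ s, Sm (f i)) :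
    Sm fun x => ∑ i ∈ s, f i x := ContDiff.sum hf

lemma pd3_mul {f g : E3 → ℝ} (hf : Sm f) (hg : Sm g) (j : Fin 3) (x : E3) :
    pd3 j (fun y => f y * g y) x = pd3 j f x * g x + f x * pd3 j g x := by
  unfold pd3
  rw [fderiv_fun_mul (hf.diff x) (hg.diff x)]
  simp; ring

lemma pd3_add {f g : E3 → ℝ} (hf : Sm f) (hg : Sm g) (j : Fin 3) (x : E3) :
    pd3 j (fun y => f y + g y) x = pd3 j f x + pd3 j g x := by
  unfold pd3
  rw [fderiv_fun_add (hf.diff x) (hg.diff x)]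
  simp

lemma pd3_sub {f g : E3 → ℝ} (hf : Sm f) (hg : Sm g) (j : Fin 3) (x : E3) :
    pd3 j (fun y => f y - g y) x = pd3 j f x - pd3 j g x := by
  unfold pd3
  rw [fderiv_fun_sub (hf.diff x) (hg.diff x)]
  simp

lemma pd3_sub_const (f : E3 → ℝ) (c : ℝ) (j : Fin 3) :
    pd3 j (fun y => f y - c) = pd3 j f := by
  funext x; unfold pd3
  rw [fderiv_sub_const]

lemma pd3_sum {ι : Type*} {s : Finset ι} {f : ι → E3 → ℝ} (hf : ∀ i ∈ s, Sm (f i))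
    (j : Fin 3) (x : E3) :
    pd3 j (fun y => ∑ i ∈ s, f i y) x = ∑ i ∈ s, pd3 j (f i) x := by
  unfold pd3
  rw [fderiv_fun_sum fun i hi => (hf i hi).diff x]
  simp

/-- Substituting `x - s z`, as a function of `z`. -/
lemma pd3_comp_z {f : E3 → ℝ} (hf : Sm f) (x : E3) (s : ℝ) (j : Fin 3) (z : E3) :
    pd3 j (fun z => f (x - s • z)) z = -s * pd3 j f (x - s • z) := by
  unfold pd3
  have h1 : HasFDerivAt (fun z : E3 => x - s • z) (-(s • ContinuousLinearMap.id ℝ E3)) z := by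
    have := ((hasFDerivAt_id (𝕜 := ℝ) z).const_smul s).const_sub x
    exact this
  have := ((hf.diff (x - s • z)).hasFDerivAt).comp z h1
  rw [show (fun z => f (x - s • z)) = f ∘ fun z => x - s • z from rfl, this.fderiv]
  simp

/-- Translation in `x`. -/
lemma pd3_comp_x {f : E3 → ℝ} (y : E3) (j : Fin 3) (x : E3) :
    pd3 j (fun x => f (x - y)) x = pd3 j f (x - y) := by
  unfold pd3
  simp only [sub_eq_add_neg, fderiv_comp_add_right]

lemma fderiv_eq_sum (f : E3 → ℝ) (x w : E3) :
    fderiv ℝ f x w = ∑ j, w j * pd3 j f x := by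
  unfold pd3
  have : w = ∑ j, w j • EuclideanSpace.single j (1:ℝ) := by
    ext i; fin_cases i <;> simp [Fin.sum_univ_three]
  conv_lhs => rw [this]
  rw [map_sum]
  simp

/-- The length of the gradient. -/
def gr (f : E3 → ℝ) (x : E3) : ℝ := ‖fderiv ℝ f x‖

lemma gr_nonneg (f : E3 → ℝ) (x : E3) : 0 ≤ gr f x := norm_nonneg _

lemma Sm.gr_cont {f : E3 → ℝ} (hf : Sm f) : Continuous (gr f) := hf.fderiv.continuous.norm

lemma norm_gradient (f : E3 → ℝ) (x : E3) : ‖gradient f x‖ = gr f x := by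
  simp [gradient, gr]

lemma gr_sq (f : E3 → ℝ) (x : E3) : gr f x ^ 2 = ∑ j, pd3 j f x ^ 2 := by
  rw [← norm_gradient, EuclideanSpace.real_norm_sq_eq]
  refine Finset.sum_congr rfl fun j _ => ?_
  congr 1
  have : pd3 j f x = inner ℝ (gradient f x) (EuclideanSpace.single j (1:ℝ)) := by
    unfold pd3 gradient; simp
  rw [this, EuclideanSpace.inner_single_right]; simp

lemma abs_pd3_le (f : E3 → ℝ) (x : E3) (j : Fin 3) : |pd3 j f x| ≤ gr f x := by
  refine abs_le_of_sq_le_sq ?_ (gr_nonneg f x)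
  rw [gr_sq]
  exact Finset.single_le_sum (f := fun j => pd3 j f x ^ 2) (fun i _ => sq_nonneg _) (Finset.mem_univ j)

lemma ibp {f g : E3 → ℝ} (hf : Sm f) (hg : Sm g) (hc : HasCompactSupport g) (j : Fin 3) :
    ∫ x, pd3 j f x * g x = -∫ x, f x * pd3 j g x := by
  have cg : HasCompactSupport (pd3 j g) := by
    have := hc.fderiv_apply (𝕜 := ℝ) (EuclideanSpace.single j 1)
    exact this
  have := integral_mul_fderiv_eq_neg_fderiv_mul_of_integrable (μ := volume) (𝕜 := ℝ)
    (f := f) (g := g) (v := EuclideanSpace.single j (1:ℝ))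
    (((hf.pd j).cont.mul hg.cont).integrable_of_hasCompactSupport hc.mul_left)
    ((hf.cont.mul (hg.pd j).cont).integrable_of_hasCompactSupport cg.mul_left)
    ((hf.cont.mul hg.cont).integrable_of_hasCompactSupport hc.mul_left)
    (fun x _ => hf.diff x) (fun x _ => hg.diff x)
  unfold pd3
  linarith

lemma int_pd_zero {g : E3 → ℝ} (hg : Sm g) (hc : HasCompactSupport g) (j : Fin 3) :
    ∫ x, pd3 j g x = 0 := by
  have := ibp (Sm.const 1) hg hc j
  simp only [one_mul] at this
  have h0 : ∀ x, pd3 j (fun _ : E3 => (1:ℝ)) x = 0 := fun x => by simp [pd3]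
  simp only [h0, zero_mul, integral_zero] at this
  linarith

lemma hcs_pd {g : E3 → ℝ} (hc : HasCompactSupport g) (j : Fin 3) : HasCompactSupport (pd3 j g) :=
  hc.fderiv_apply (𝕜 := ℝ) (EuclideanSpace.single j 1)

lemma comp_sm {u : E3 → E3} (hu : ContDiff ℝ (⊤ : ℕ∞) u) (i : Fin 3) : Sm fun y => u y i := by
  have := (contDiff_euclidean.1 hu) i
  exact this

end TCM

namespace TCM

/-! ### Annuli and cutoff functions -/

/-- The closed annulus `a ≤ |x| ≤ b`. -/
def An (a b : ℝ) : Set E3 := {x | a ≤ ‖x‖ ∧ ‖x‖ ≤ b}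

lemma An_compact (a b : ℝ) : IsCompact (An a b) := by
  refine (isCompact_closedBall (0 : E3) b).of_isClosed_subset ?_ ?_
  · exact (isClosed_le continuous_const continuous_norm).inter
      (isClosed_le continuous_norm continuous_const)
  · intro x hx; simpa using hx.2

lemma An_mono {a b a' b' : ℝ} (h : a' ≤ a) (h' : b ≤ b') : An a b ⊆ An a' b' :=
  fun _ hx => ⟨h.trans hx.1, hx.2.trans h'⟩

lemma An_shift {a b s t : ℝ} (hs : 0 ≤ s) (hst : s ≤ t) {x z : E3} (hx : x ∈ An a b) (hz : z ∈ B1) :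
    x - s • z ∈ An (a - t) (b + t) := by
  have h1 : ‖z‖ ≤ 1 := by simpa [B1] using hz
  have h2 : ‖s • z‖ ≤ t := by
    rw [norm_smul, Real.norm_of_nonneg hs]; nlinarith [norm_nonneg z]
  have h3 := norm_sub_norm_le x (s • z)
  have h4 := norm_sub_le x (s • z)
  exact ⟨by linarith [hx.1], by linarith [hx.2]⟩

lemma vol_ball_le {b : ℝ} (hb : 0 ≤ b) {A : Set E3} (h : ∀ x ∈ A, ‖x‖ ≤ b) :
    volume.real A ≤ volume.real B1 * b ^ 3 := by
  have h1 : A ⊆ closedBall 0 b := fun x hx => by simpa using h x hx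
  have h2 := measureReal_mono (μ := volume) h1 (isCompact_closedBall (0:E3) b).measure_ne_top
  have h3 : volume.real (closedBall (0:E3) b) = b ^ 3 * volume.real B1 := by
    rw [Measure.real, Measure.addHaar_closedBall' _ _ hb, finrank_E3, ENNReal.toReal_mul,
      ENNReal.toReal_ofReal (by positivity)]
    rfl
  linarith

lemma bdd_of_hcs {g : E3 → ℝ} (hg : Continuous g) (hc : HasCompactSupport g) :
    ∃ C, 0 ≤ C ∧ ∀ x, |g x| ≤ C := by
  obtain ⟨C, hC⟩ := hc.exists_bound_of_continuous hg
  exact ⟨C, (norm_nonneg _).trans (hC 0), hC⟩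

/-- The transition function and its first two derivatives are bounded, and the derivatives vanish
outside `[0,1]`. -/
lemma trans_bounds : ∃ C : ℝ, 0 ≤ C ∧ ∀ t, |deriv Real.smoothTransition t| ≤ C ∧
    |deriv (deriv Real.smoothTransition) t| ≤ C ∧
    (t < 0 ∨ 1 < t → deriv Real.smoothTransition t = 0) := by
  have sm : ContDiff ℝ (⊤ : ℕ∞) Real.smoothTransition := Real.smoothTransition.contDiff
  have sm1 : ContDiff ℝ (⊤ : ℕ∞) (deriv Real.smoothTransition) := by
    have := (contDiff_infty_iff_deriv (𝕜 := ℝ) (f := Real.smoothTransition)).1 sm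
    exact this.2
  have sm2 : ContDiff ℝ (⊤ : ℕ∞) (deriv (deriv Real.smoothTransition)) := by
    have := (contDiff_infty_iff_deriv (𝕜 := ℝ) (f := deriv Real.smoothTransition)).1 sm1
    exact this.2
  have z : ∀ t, t < 0 ∨ 1 < t → deriv Real.smoothTransition t = 0 := by
    rintro t (ht | ht)
    · have : Real.smoothTransition =ᶠ[nhds t] fun _ => 0 := by
        filter_upwards [gt_mem_nhds ht] with y hy
        exact Real.smoothTransition.zero_of_nonpos hy.le
      rw [this.deriv_eq]; simp
    · have : Real.smoothTransition =ᶠ[nhds t] fun _ => 1 := by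
        filter_upwards [lt_mem_nhds ht] with y hy
        exact Real.smoothTransition.one_of_one_le hy.le
      rw [this.deriv_eq]; simp
  have cs1 : HasCompactSupport (deriv Real.smoothTransition) := by
    refine HasCompactSupport.of_support_subset_isCompact (isCompact_Icc (a := (0:ℝ)) (b := 1)) ?_
    intro t ht
    by_contra hh
    refine ht (z t ?_)
    rw [Set.mem_Icc, not_and_or, not_le, not_le] at hh
    exact hh
  have cs2 : HasCompactSupport (deriv (deriv Real.smoothTransition)) := cs1.deriv
  obtain ⟨C1, h1⟩ := cs1.exists_bound_of_continuous sm1.continuous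
  obtain ⟨C2, h2⟩ := cs2.exists_bound_of_continuous sm2.continuous
  exact ⟨max C1 C2, (norm_nonneg _).trans ((h1 0).trans (le_max_left _ _)), fun t =>
    ⟨(h1 t).trans (le_max_left _ _), (h2 t).trans (le_max_right _ _), z t⟩⟩

/-- Radial cutoffs with the natural derivative bounds. -/
lemma exists_cutoff : ∃ C : ℝ, 0 ≤ C ∧ ∀ a b : ℝ, 0 < a → a < b → ∃ φ : E3 → ℝ, Sm φ ∧
    HasCompactSupport φ ∧ (∀ x, 0 ≤ φ x) ∧ (∀ x, φ x ≤ 1) ∧ (∀ x, ‖x‖ ≤ a → φ x = 1) ∧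
    (∀ x, b ≤ ‖x‖ → φ x = 0) ∧ (∀ j x, x ∉ An a b → pd3 j φ x = 0) ∧
    (∀ j x, |pd3 j φ x| ≤ C / (b - a)) ∧
    (∀ i j x, |pd3 i (pd3 j φ) x| ≤ C / (b - a) ^ 2) := by
  obtain ⟨C, C0, hC⟩ := trans_bounds
  refine ⟨6 * C, by positivity, fun a b ha hab => ?_⟩
  have hD : 0 < b ^ 2 - a ^ 2 := by nlinarith
  set D := b ^ 2 - a ^ 2 with hDdef
  set ψ := Real.smoothTransition with hψ
  have smψ : ContDiff ℝ (⊤ : ℕ∞) ψ := Real.smoothTransition.contDiff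
  have smψ1 : ContDiff ℝ (⊤ : ℕ∞) (deriv ψ) :=
    ((contDiff_infty_iff_deriv (𝕜 := ℝ) (f := ψ)).1 smψ).2
  set Q : E3 → ℝ := fun x => (b ^ 2 - ‖x‖ ^ 2) / D with hQ
  have smQ : Sm Q := (contDiff_const.sub (contDiff_norm_sq ℝ)).div_const D
  have chain : ∀ (w : ℝ → ℝ), ContDiff ℝ (⊤ : ℕ∞) w → ∀ j x,
      pd3 j (fun x => w (Q x)) x = deriv w (Q x) * (-2 * x j / D) := by
    intro w hw j x
    have h1 : HasFDerivAt Q (-(D⁻¹ • (2 • innerSL ℝ x))) x := by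
      have := ((hasStrictFDerivAt_norm_sq x).hasFDerivAt.const_sub (b ^ 2)).const_smul D⁻¹
      have eQ : Q = D⁻¹ • fun x => b ^ 2 - ‖x‖ ^ 2 := by
        funext y; simp [hQ, div_eq_inv_mul]
      rw [eQ, ← smul_neg]
      exact this
    have h2 : HasDerivAt w (deriv w (Q x)) (Q x) :=
      ((hw.differentiable (by simp)) (Q x)).hasDerivAt
    have := h2.comp_hasFDerivAt x h1
    unfold pd3
    rw [show (fun x => w (Q x)) = w ∘ Q from rfl, this.fderiv]
    simp [EuclideanSpace.inner_single_right]
    ring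
  have hx : ∀ x : E3, ∀ j, |x j| ≤ ‖x‖ := fun x j => by
    simpa using PiLp.norm_apply_le x j
  have p1 : ∀ j x, pd3 j (fun x => ψ (Q x)) x = deriv ψ (Q x) * (-2 * x j / D) := chain ψ smψ
  have coord : ∀ j : Fin 3, Sm fun x : E3 => -2 * x j / D := fun j => by
    have : Sm fun x : E3 => x j := comp_sm contDiff_id j
    exact (contDiff_const.mul this).div_const D
  have pdcoord : ∀ i j : Fin 3, ∀ x, |pd3 i (fun x : E3 => -2 * x j / D) x| ≤ 2 / D := by
    intro i j x
    have : HasFDerivAt (fun x : E3 => -2 * x j / D)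
        ((-2 / D) • (EuclideanSpace.proj j : E3 →L[ℝ] ℝ)) x := by
      have := ((EuclideanSpace.proj j : E3 →L[ℝ] ℝ).hasFDerivAt (x := x)).const_smul (-2 / D)
      have eQ : (fun x : E3 => -2 * x j / D) =
          (-2 / D) • ⇑(EuclideanSpace.proj j : E3 →L[ℝ] ℝ) := by
        funext y; simp; ring
      rw [eQ]
      exact this
    unfold pd3
    rw [this.fderiv]
    rcases eq_or_ne j i with h | h
    · subst h; simp [abs_div, abs_of_pos hD]
    · have : (0:ℝ) ≤ 2 / D := by positivity
      simpa [h] using this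
  have inA : ∀ x, x ∉ An a b → deriv ψ (Q x) = 0 := by
    intro x hx
    refine (hC (Q x)).2.2 ?_
    rw [An, Set.mem_ofPred_eq, not_and_or, not_le, not_le] at hx
    rcases hx with h | h
    · right; rw [hQ]; simp only; rw [lt_div_iff₀ hD]; nlinarith [norm_nonneg x]
    · left; rw [hQ]; simp only; exact div_neg_of_neg_of_pos (by nlinarith [norm_nonneg x]) hD
  have quot : b / D ≤ 1 / (b - a) := by
    rw [div_le_div_iff₀ hD (by linarith)]; nlinarith
  have quot2 : 1 / D ≤ 1 / (b - a) ^ 2 := by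
    have : 0 < b - a := by linarith
    apply one_div_le_one_div_of_le (by positivity); nlinarith
  have f1 : ∀ j x, x ∈ An a b → |(-2 * x j / D)| ≤ 2 / (b - a) := by
    intro j x hxA
    rw [abs_div, abs_of_pos hD, abs_mul]
    calc |(-2:ℝ)| * |x j| / D ≤ 2 * (b / D) := by
          rw [abs_neg, abs_two, ← mul_div_assoc]
          gcongr
          exact (hx x j).trans hxA.2
      _ ≤ 2 * (1 / (b - a)) := by gcongr
      _ = _ := by ring
  refine ⟨fun x => ψ (Q x), smψ.comp smQ, ?_, fun x => Real.smoothTransition.nonneg _,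
    fun x => Real.smoothTransition.le_one _, fun x h => ?_, fun x h => ?_, ?_, ?_, ?_⟩
  · refine HasCompactSupport.of_support_subset_isCompact (isCompact_closedBall (0:E3) b) ?_
    intro x hx
    by_contra h
    refine hx (Real.smoothTransition.zero_of_nonpos ?_)
    have h : b < ‖x‖ := by simpa using h
    exact div_nonpos_of_nonpos_of_nonneg (by nlinarith) hD.le
  · refine Real.smoothTransition.one_of_one_le ?_
    rw [hQ]; simp only
    rw [le_div_iff₀ hD]; nlinarith [norm_nonneg x]
  · refine Real.smoothTransition.zero_of_nonpos ?_
    exact div_nonpos_of_nonpos_of_nonneg (by nlinarith) hD.le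
  · intro j x h
    rw [p1, inA x h, zero_mul]
  · intro j x
    rw [p1]
    have hba : 0 < b - a := by linarith
    by_cases h : x ∈ An a b
    · rw [abs_mul]
      calc _ ≤ C * (2 / (b - a)) := by
            gcongr
            · exact (hC _).1
            · exact f1 j x h
        _ ≤ _ := by rw [mul_div_assoc']; exact div_le_div_of_nonneg_right (by linarith) hba.le
    · rw [inA x h]; simp; positivity
  · intro i j x
    have hba : 0 < b - a := by linarith
    have e : pd3 j (fun x => ψ (Q x)) = fun x => deriv ψ (Q x) * (-2 * x j / D) := by
      funext x; exact p1 j x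
    rw [e, pd3_mul (f := fun x => deriv ψ (Q x)) (smψ1.comp smQ) (coord j), chain _ smψ1]
    by_cases h : x ∈ An a b
    · have g1 := f1 i x h
      have g2 := f1 j x h
      have g3 := pdcoord i j x
      have c1 := (hC (Q x)).1
      have c2 := (hC (Q x)).2.1
      calc _ ≤ |deriv (deriv ψ) (Q x) * (-2 * x i / D) * (-2 * x j / D)| +
            |deriv ψ (Q x) * pd3 i (fun x : E3 => -2 * x j / D) x| := abs_add_le _ _
        _ ≤ C * (2 / (b - a)) * (2 / (b - a)) + C * (2 / D) := by
            rw [abs_mul, abs_mul, abs_mul]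
            gcongr
        _ = 4 * C * (1 / (b - a) ^ 2) + 2 * C * (1 / D) := by field_simp; ring
        _ ≤ 4 * C * (1 / (b - a) ^ 2) + 2 * C * (1 / (b - a) ^ 2) := by gcongr
        _ = _ := by ring
    · have : deriv (deriv ψ) (Q x) * (-2 * x i / D) = 0 := by
        rw [← chain _ smψ1]
        -- the complement of the annulus is open, so the derivative vanishes near `x`
        have hev : (fun x => deriv ψ (Q x)) =ᶠ[nhds x] fun _ => 0 := by
          filter_upwards [(An_compact a b).isClosed.isOpen_compl.mem_nhds h] with y hy
          exact inA y hy
        unfold pd3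
        rw [hev.fderiv_eq]; simp
      rw [this, inA x h]; simp; positivity

end TCM

namespace TCM

/-! ### Mollification -/

/-- A smooth bump function around the origin. -/
def bump : ContDiffBump (0 : E3) := ⟨1 / 2, 1, by norm_num, by norm_num⟩

/-- The mollifier profile: smooth, nonnegative, supported in the unit ball, of integral one. -/
def eta : E3 → ℝ := bump.normed volume

lemma eta_sm : Sm eta := bump.contDiff_normed

lemma eta_nonneg (z : E3) : 0 ≤ eta z := bump.nonneg_normed z

lemma eta_hcs : HasCompactSupport eta := bump.hasCompactSupport_normed

lemma eta_tsupport : tsupport eta = B1 := by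
  exact bump.tsupport_normed_eq (μ := (volume : Measure E3))

lemma eta_off {z : E3} (hz : z ∉ B1) : eta z = 0 := by
  rw [← eta_tsupport] at hz
  exact image_eq_zero_of_notMem_tsupport hz

lemma eta_int : ∫ z in B1, eta z = 1 := by
  rw [setIntegral_eq_integral_of_forall_compl_eq_zero fun z hz => eta_off hz]
  exact bump.integral_normed

/-- Mollification at scale `s`. -/
def mol (s : ℝ) (f : E3 → ℝ) (x : E3) : ℝ := ∫ z in B1, eta z * f (x - s • z)

lemma cont_shift {f : E3 → ℝ} (hf : Continuous f) (x : E3) (s : ℝ) :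
    Continuous fun z : E3 => f (x - s • z) := hf.comp (by fun_prop)

lemma mol_hasFDerivAt {f : E3 → ℝ} (hf : Sm f) (s : ℝ) (x : E3) :
    HasFDerivAt (mol s f) (∫ z in B1, eta z • fderiv ℝ f (x - s • z)) x := by
  have cf' : Continuous (fderiv ℝ f) := hf.fderiv.continuous
  have hb : ∃ C, ∀ y ∈ closedBall x 1, ∀ z ∈ B1, ‖eta z • fderiv ℝ f (y - s • z)‖ ≤ C := by
    have hk : IsCompact (closedBall x 1 ×ˢ B1) := (isCompact_closedBall x 1).prod B1_compact
    obtain ⟨C, hC⟩ := hk.exists_bound_of_continuousOn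
      (f := fun y : E3 × E3 => eta y.2 • fderiv ℝ f (y.1 - s • y.2))
      (((eta_sm.cont.comp continuous_snd).smul (cf'.comp (by fun_prop))).continuousOn)
    exact ⟨C, fun y hy z hz => hC (y, z) ⟨hy, hz⟩⟩
  obtain ⟨C, hC⟩ := hb
  refine hasFDerivAt_integral_of_dominated_of_fderiv_le (𝕜 := ℝ) (μ := volume.restrict B1)
    (F := fun x z => eta z * f (x - s • z))
    (F' := fun x z => eta z • fderiv ℝ f (x - s • z)) (bound := fun _ => C)
    (ball_mem_nhds x one_pos) ?_ ?_ ?_ ?_ ?_ ?_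
  · exact Eventually.of_forall fun y => (eta_sm.cont.mul (cont_shift hf.cont y s)).aestronglyMeasurable
  · exact intOn (eta_sm.cont.mul (cont_shift hf.cont x s)) B1_compact
  · exact (eta_sm.cont.smul (cf'.comp (by fun_prop : Continuous fun z : E3 => x - s • z))).aestronglyMeasurable
  · filter_upwards [ae_restrict_mem B1_compact.measurableSet] with z hz y hy
    exact hC y (ball_subset_closedBall hy) z hz
  · exact intOn continuous_const B1_compact
  · refine ae_of_all _ fun z y _ => ?_
    have h1 : HasFDerivAt (fun y : E3 => f (y - s • z)) (fderiv ℝ f (y - s • z)) y := by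
      have := ((hf.diff (y - s • z)).hasFDerivAt).comp y ((hasFDerivAt_id (𝕜 := ℝ) y).sub_const (s • z))
      rw [ContinuousLinearMap.comp_id] at this
      exact this
    exact h1.const_mul (eta z)

lemma mol_fderiv {f : E3 → ℝ} (hf : Sm f) (s : ℝ) (x w : E3) :
    fderiv ℝ (mol s f) x w = ∑ j, w j * mol s (pd3 j f) x := by
  rw [(mol_hasFDerivAt hf s x).fderiv]
  have ii : IntegrableOn (fun z => eta z • fderiv ℝ f (x - s • z)) B1 :=
    (eta_sm.cont.smul (hf.fderiv.continuous.comp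
      (by fun_prop : Continuous fun z : E3 => x - s • z))).continuousOn.integrableOn_compact B1_compact
  rw [ContinuousLinearMap.integral_apply ii]
  simp only [mol, ← integral_const_mul]
  rw [← integral_finsetSum]
  · refine integral_congr_ae (ae_of_all _ fun z => ?_)
    simp only [smul_apply, smul_eq_mul, fderiv_eq_sum, Finset.mul_sum]
    refine Finset.sum_congr rfl fun j _ => by ring
  · intro j _
    exact (intOn (eta_sm.cont.mul (cont_shift (hf.pd j).cont x s)) B1_compact).const_mul _

lemma abs_comp_le (w : E3) (j : Fin 3) : |w j| ≤ ‖w‖ := by simpa using PiLp.norm_apply_le w j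

lemma mol_fderiv_bound {f : E3 → ℝ} (hf : Sm f) (s : ℝ) (x : E3) {K : ℝ}
    (h : ∀ j, |mol s (pd3 j f) x| ≤ K) : ‖fderiv ℝ (mol s f) x‖ ≤ 3 * K := by
  have K0 : 0 ≤ K := (abs_nonneg _).trans (h 0)
  refine ContinuousLinearMap.opNorm_le_bound _ (by positivity) fun w => ?_
  rw [mol_fderiv hf, Real.norm_eq_abs]
  refine (Finset.abs_sum_le_sum_abs _ _).trans ?_
  have : ∀ j ∈ (Finset.univ : Finset (Fin 3)), |w j * mol s (pd3 j f) x| ≤ ‖w‖ * K := fun j _ => by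
    rw [abs_mul]; exact mul_le_mul (abs_comp_le w j) (h j) (abs_nonneg _) (norm_nonneg _)
  refine (Finset.sum_le_sum this).trans (le_of_eq ?_)
  simp; ring

/-- Pointwise bound of a kernel average in terms of an `L^s` norm. -/
lemma avg_bound {A' : Set E3} (hA' : IsCompact A') {f w : E3 → ℝ} (hf : Continuous f)
    (hw : Continuous w) {W : ℝ} (hW : ∀ z, |w z| ≤ W) {s l : ℝ} (hs : 1 ≤ s) (hl : 0 < l) (x : E3)
    (h : ∀ z ∈ B1, x - l • z ∈ A') :
    |∫ z in B1, w z * f (x - l • z)| ≤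
      W * (1 + volume.real B1) * l ^ (-(3 / s)) * nr s f A' := by
  have s0 : 0 < s := by linarith
  have W0 : 0 ≤ W := (abs_nonneg _).trans (hW 0)
  have s1 : 1 / s ≤ 1 := (div_le_one s0).2 hs
  have cf := cont_shift hf x l
  have a1 : |∫ z in B1, w z * f (x - l • z)| ≤ ∫ z in B1, W * |f (x - l • z)| := by
    refine (abs_integral_le_integral_abs).trans ?_
    refine integral_mono (intOn (hw.mul cf).abs B1_compact)
      (intOn (continuous_const.mul cf.abs) B1_compact) fun z => ?_
    simp only [abs_mul]
    exact mul_le_mul_of_nonneg_right (hW z) (abs_nonneg _)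
  have a2 := holder3 B1_compact (cont_abs_rpow cf s0.le) (continuous_const (y := (1:ℝ)))
    (continuous_const (y := (1:ℝ)))
    (fun _ => Real.rpow_nonneg (abs_nonneg _) _) (fun _ => zero_le_one) (fun _ => zero_le_one)
    (w1 := 1 / s) (w2 := 1 - 1 / s) (w3 := 0) (by positivity) (by linarith) le_rfl (by ring)
  have e : ∀ z, (|f (x - l • z)| ^ s) ^ (1 / s) = |f (x - l • z)| := fun z => by
    rw [← Real.rpow_mul (abs_nonneg _), mul_one_div_cancel s0.ne', Real.rpow_one]
  simp only [e, Real.one_rpow, mul_one, Real.rpow_zero, integral_const,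
    measureReal_restrict_apply_univ, smul_eq_mul] at a2
  have a3 := int_scale hA' (cont_abs_rpow hf s0.le) (fun _ => Real.rpow_nonneg (abs_nonneg _) _) x hl h
  rw [integral_const_mul] at a1
  have vB : 0 ≤ volume.real B1 := measureReal_nonneg
  have iN : 0 ≤ ∫ x in A', |f x| ^ s := integral_nonneg fun _ => Real.rpow_nonneg (abs_nonneg _) _
  calc _ ≤ W * ∫ z in B1, |f (x - l • z)| := a1
    _ ≤ W * ((l ^ (-3 : ℝ) * ∫ x in A', |f x| ^ s) ^ (1 / s) * (1 + volume.real B1) ^ (1:ℝ)) := by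
        refine mul_le_mul_of_nonneg_left (a2.trans ?_) W0
        gcongr
        · exact (Real.rpow_le_rpow vB (by linarith) (by linarith)).trans
            (Real.rpow_le_rpow_of_exponent_le (by linarith) (by
              have : 0 < 1 / s := by positivity
              linarith))
    _ = _ := by
        rw [Real.mul_rpow (by positivity) iN, ← Real.rpow_mul hl.le, Real.rpow_one, nr,
          show (-3 : ℝ) * (1 / s) = -(3 / s) by ring]
        ring

end TCM

namespace TCM

/-! ### Difference quotients and the mollification error -/

lemma prod_int {Ω : Type*} [NormedAddCommGroup Ω] [MeasureSpace Ω] [BorelSpace Ω]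
    [SecondCountableTopology Ω] [IsFiniteMeasureOnCompacts (volume : Measure Ω)]
    [SFinite (volume : Measure Ω)] {A : Set E3} {B : Set Ω} (hA : IsCompact A) (hB : IsCompact B) {f : E3 × Ω → ℝ}
    (hf : Continuous f) :
    Integrable f ((volume.restrict A).prod (volume.restrict B)) := by
  rw [Measure.prod_restrict]
  exact hf.continuousOn.integrableOn_compact (hA.prod hB)

/-- Fubini's theorem for continuous functions on compact sets. -/
lemma swap {Ω : Type*} [NormedAddCommGroup Ω] [MeasureSpace Ω] [BorelSpace Ω]
    [SecondCountableTopology Ω] [IsFiniteMeasureOnCompacts (volume : Measure Ω)]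
    [SFinite (volume : Measure Ω)] {A : Set E3} {B : Set Ω} (hA : IsCompact A) (hB : IsCompact B) {f : E3 × Ω → ℝ}
    (hf : Continuous f) :
    ∫ x in A, ∫ t in B, f (x, t) = ∫ t in B, ∫ x in A, f (x, t) :=
  integral_integral_swap (prod_int hA hB hf)

/-- Jensen's inequality for the `s`-th power with a weight of total mass one. -/
lemma jensen {Ω : Type*} [NormedAddCommGroup Ω] [MeasureSpace Ω] [BorelSpace Ω]
    [IsFiniteMeasureOnCompacts (volume : Measure Ω)] {B : Set Ω} (hB : IsCompact B) {w F : Ω → ℝ} (hw : Continuous w) (hF : Continuous F)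
    (w0 : ∀ z, 0 ≤ w z) (F0 : ∀ z, 0 ≤ F z) (w1 : ∫ z in B, w z = 1) {s : ℝ} (hs : 1 ≤ s) :
    (∫ z in B, w z * F z) ^ s ≤ ∫ z in B, w z * F z ^ s := by
  have s0 : 0 < s := by linarith
  have s1 : 1 / s ≤ 1 := (div_le_one s0).2 hs
  have h := holder3 hB (hw.mul (hF.rpow_const fun _ => Or.inr s0.le)) hw
    (continuous_const (y := (1:ℝ))) (fun z => mul_nonneg (w0 z) (Real.rpow_nonneg (F0 z) s)) w0
    (fun _ => zero_le_one) (w1 := 1 / s) (w2 := 1 - 1 / s) (w3 := 0) (by positivity)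
    (by linarith) le_rfl (by ring)
  have e : ∀ z, (w z * F z ^ s) ^ (1 / s) * w z ^ (1 - 1 / s) = w z * F z := fun z => by
    rw [Real.mul_rpow (w0 z) (Real.rpow_nonneg (F0 z) s), ← Real.rpow_mul (F0 z),
      mul_one_div_cancel s0.ne', Real.rpow_one, mul_right_comm,
      ← Real.rpow_add_of_nonneg (w0 z) (by positivity) (by linarith)]
    simp
  simp only [Pi.mul_apply, e, mul_one, Real.rpow_zero, w1, Real.one_rpow] at h
  have p1 : 0 ≤ ∫ z in B, w z * F z := integral_nonneg fun z => mul_nonneg (w0 z) (F0 z)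
  have p2 : 0 ≤ ∫ z in B, w z * F z ^ s :=
    integral_nonneg fun z => mul_nonneg (w0 z) (Real.rpow_nonneg (F0 z) s)
  calc _ ≤ ((∫ z in B, w z * F z ^ s) ^ (1 / s)) ^ s := Real.rpow_le_rpow p1 h s0.le
    _ = _ := by rw [← Real.rpow_mul p2, one_div_mul_cancel s0.ne', Real.rpow_one]

lemma hasDerivAt_line {f : E3 → ℝ} (hf : Sm f) (x w : E3) (t : ℝ) :
    HasDerivAt (fun t : ℝ => f (x - t • w)) (-(fderiv ℝ f (x - t • w) w)) t := by
  have h1 : HasDerivAt (fun t : ℝ => x - t • w) (-w) t := by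
    have := ((hasDerivAt_id t).smul_const w).const_sub x
    simpa using this
  have := ((hf.diff (x - t • w)).hasFDerivAt).comp_hasDerivAt t h1
  rw [map_neg] at this
  exact this

lemma line_int {f : E3 → ℝ} (hf : Sm f) (x w : E3) :
    f x - f (x - w) = ∫ t in Set.Icc (0:ℝ) 1, fderiv ℝ f (x - t • w) w := by
  have c : Continuous fun t : ℝ => -(fderiv ℝ f (x - t • w) w) :=
    ((hf.fderiv.continuous.comp (by fun_prop : Continuous fun t : ℝ => x - t • w)).clm_apply
      continuous_const).neg
  have := intervalIntegral.integral_eq_sub_of_hasDerivAt (a := 0) (b := 1)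
    (fun t _ => hasDerivAt_line hf x w t) (c.intervalIntegrable 0 1)
  rw [integral_Icc_eq_integral_Ioc, ← intervalIntegral.integral_of_le zero_le_one]
  rw [intervalIntegral.integral_neg] at this
  simp only [one_smul, zero_smul, sub_zero] at this
  linarith

lemma abs_diff_le {f : E3 → ℝ} (hf : Sm f) {l : ℝ} (hl : 0 ≤ l) {z : E3} (hz : z ∈ B1) (x : E3) :
    |f x - f (x - l • z)| ≤ ∫ t in Set.Icc (0:ℝ) 1, l * gr f (x - t • (l • z)) := by
  have nz : ‖z‖ ≤ 1 := by simpa [B1] using hz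
  have cl : Continuous fun t : ℝ => x - t • (l • z) := by fun_prop
  have c1 : Continuous fun t : ℝ => |fderiv ℝ f (x - t • (l • z)) (l • z)| :=
    ((hf.fderiv.continuous.comp cl).clm_apply continuous_const).abs
  have c2 : Continuous fun t : ℝ => l * gr f (x - t • (l • z)) :=
    continuous_const.mul (hf.gr_cont.comp cl)
  have hb : ∀ t : ℝ, |fderiv ℝ f (x - t • (l • z)) (l • z)| ≤ l * gr f (x - t • (l • z)) := by
    intro t
    have h1 := (fderiv ℝ f (x - t • (l • z))).le_opNorm (l • z)
    have h2 : ‖l • z‖ ≤ l := by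
      rw [norm_smul, Real.norm_of_nonneg hl]
      nlinarith
    rw [Real.norm_eq_abs] at h1
    rw [mul_comm]
    exact h1.trans (mul_le_mul_of_nonneg_left h2 (norm_nonneg _))
  rw [line_int hf x (l • z)]
  exact abs_integral_le_integral_abs.trans
    (integral_mono c1.integrableOn_Icc c2.integrableOn_Icc hb)

/-- Difference quotients are controlled by the gradient in every `L^s`. -/
lemma diff_quot {A A' : Set E3} (hA : IsCompact A) (hA' : IsCompact A') {f : E3 → ℝ} (hf : Sm f)
    {s l : ℝ} (hs : 1 ≤ s) (hl : 0 ≤ l) {z : E3} (hz : z ∈ B1)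
    (h : ∀ x ∈ A, ∀ t, 0 ≤ t → t ≤ l → x - t • z ∈ A') :
    ∫ x in A, |f x - f (x - l • z)| ^ s ≤ l ^ s * ∫ x in A', |gr f x| ^ s := by
  have s0 : 0 < s := by linarith
  have nz : ‖z‖ ≤ 1 := by simpa [B1] using hz
  have cg : Continuous fun y : E3 × ℝ => l * gr f (y.1 - y.2 • (l • z)) :=
    continuous_const.mul (hf.gr_cont.comp
      (by fun_prop : Continuous fun y : E3 × ℝ => y.1 - y.2 • (l • z)))
  have cgs : Continuous fun y : E3 × ℝ => (l * gr f (y.1 - y.2 • (l • z))) ^ s :=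
    cg.rpow_const fun _ => Or.inr s0.le
  have pos : ∀ y, 0 ≤ l * gr f y := fun y => mul_nonneg hl (gr_nonneg f y)
  have b1 : ∀ x, |f x - f (x - l • z)| ^ s ≤
      ∫ t in Set.Icc (0:ℝ) 1, (l * gr f (x - t • (l • z))) ^ s := by
    intro x
    have cx : Continuous fun t : ℝ => l * gr f (x - t • (l • z)) :=
      continuous_const.mul (hf.gr_cont.comp
        (by fun_prop : Continuous fun t : ℝ => x - t • (l • z)))
    have a1 : |f x - f (x - l • z)| ≤ ∫ t in Set.Icc (0:ℝ) 1, 1 * (l * gr f (x - t • (l • z))) := by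
      simp only [one_mul]
      exact abs_diff_le hf hl hz x
    refine (Real.rpow_le_rpow (abs_nonneg _) a1 s0.le).trans ?_
    have := jensen (B := Set.Icc (0:ℝ) 1) isCompact_Icc (continuous_const (y := (1:ℝ))) cx
      (fun _ => zero_le_one) (fun _ => pos _) (by simp) hs
    simpa only [one_mul] using this
  have b2 : ∫ x in A, |f x - f (x - l • z)| ^ s ≤
      ∫ x in A, ∫ t in Set.Icc (0:ℝ) 1, (l * gr f (x - t • (l • z))) ^ s := by
    refine integral_mono ?_ ?_ b1
    · have c1 : Continuous fun x => f x - f (x - l • z) :=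
        hf.cont.sub (hf.cont.comp (by fun_prop : Continuous fun x : E3 => x - l • z))
      exact intOn (cont_abs_rpow c1 s0.le) hA
    · exact (prod_int hA (isCompact_Icc (a := (0:ℝ)) (b := 1)) cgs).integral_prod_left
  refine b2.trans ?_
  rw [swap hA (isCompact_Icc (a := (0:ℝ)) (b := 1)) cgs]
  have b3 : ∀ t ∈ Set.Icc (0:ℝ) 1, ∫ x in A, (l * gr f (x - t • (l • z))) ^ s ≤
      l ^ s * ∫ x in A', |gr f x| ^ s := by
    intro t ht
    have := int_translate (A := A) hA' (n := fun y => (l * gr f y) ^ s)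
      ((continuous_const.mul hf.gr_cont).rpow_const fun _ => Or.inr s0.le)
      (fun y => Real.rpow_nonneg (pos y) s) (t • (l • z)) (fun x hx => by
        rw [smul_smul]
        exact h x hx _ (mul_nonneg ht.1 hl) (by nlinarith [ht.2]))
    refine this.trans (le_of_eq ?_)
    rw [← integral_const_mul]
    refine integral_congr_ae (ae_of_all _ fun y => ?_)
    simp only
    rw [Real.mul_rpow hl (gr_nonneg f y), abs_of_nonneg (gr_nonneg f y)]
  refine (setIntegral_mono_on ?_ ?_ measurableSet_Icc b3).trans ?_
  · exact (prod_int hA (isCompact_Icc (a := (0:ℝ)) (b := 1)) cgs).integral_prod_right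
  · exact (continuous_const).integrableOn_Icc
  · simp

lemma mol_cont {f : E3 → ℝ} (hf : Sm f) (s : ℝ) : Continuous (mol s f) :=
  continuous_iff_continuousAt.2 fun x => (mol_hasFDerivAt hf s x).continuousAt

/-- The error of mollification at scale `l` is at most `l` times the gradient. -/
lemma mol_err {A A' : Set E3} (hA : IsCompact A) (hA' : IsCompact A') {f : E3 → ℝ} (hf : Sm f)
    {s l : ℝ} (hs : 1 ≤ s) (hl : 0 ≤ l)
    (h : ∀ x ∈ A, ∀ z ∈ B1, ∀ t, 0 ≤ t → t ≤ l → x - t • z ∈ A') :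
    nr s (fun x => f x - mol l f x) A ≤ l * nr s (gr f) A' := by
  have s0 : 0 < s := by linarith
  have cd : Continuous fun y : E3 × E3 => eta y.2 * |f y.1 - f (y.1 - l • y.2)| ^ s :=
    (eta_sm.cont.comp continuous_snd).mul
      (((hf.cont.comp continuous_fst).sub (hf.cont.comp (by fun_prop))).abs.rpow_const
        fun _ => Or.inr s0.le)
  have b1 : ∀ x, |f x - mol l f x| ^ s ≤ ∫ z in B1, eta z * |f x - f (x - l • z)| ^ s := by
    intro x
    have cx : Continuous fun z => |f x - f (x - l • z)| :=
      (continuous_const.sub (cont_shift hf.cont x l)).abs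
    have a1 : |f x - mol l f x| ≤ ∫ z in B1, eta z * |f x - f (x - l • z)| := by
      have : f x - mol l f x = ∫ z in B1, eta z * (f x - f (x - l • z)) := by
        have c1 : Continuous fun z => eta z * f x := eta_sm.cont.mul continuous_const
        have c2 : Continuous fun z => eta z * f (x - l • z) :=
          eta_sm.cont.mul (cont_shift hf.cont x l)
        simp only [mul_sub]
        rw [integral_sub (intOn c1 B1_compact) (intOn c2 B1_compact), integral_mul_const, eta_int,
          one_mul]
        rfl
      rw [this]
      refine abs_integral_le_integral_abs.trans (le_of_eq ?_)
      refine integral_congr_ae (ae_of_all _ fun z => ?_)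
      simp only [abs_mul, abs_of_nonneg (eta_nonneg z)]
    exact (Real.rpow_le_rpow (abs_nonneg _) a1 s0.le).trans
      (jensen B1_compact eta_sm.cont cx eta_nonneg (fun _ => abs_nonneg _) eta_int hs)
  have b2 : ∫ x in A, |f x - mol l f x| ^ s ≤ l ^ s * ∫ x in A', |gr f x| ^ s := by
    refine (integral_mono (intOn (cont_abs_rpow (hf.cont.sub (mol_cont hf l)) s0.le) hA)
      (prod_int hA B1_compact cd).integral_prod_left b1).trans ?_
    rw [swap hA B1_compact cd]
    have b3 : ∀ z ∈ B1, ∫ x in A, eta z * |f x - f (x - l • z)| ^ s ≤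
        eta z * (l ^ s * ∫ x in A', |gr f x| ^ s) := by
      intro z hz
      rw [integral_const_mul]
      exact mul_le_mul_of_nonneg_left (diff_quot hA hA' hf hs hl hz fun x hx => h x hx z hz)
        (eta_nonneg z)
    have c3 : Continuous fun z => eta z * (l ^ s * ∫ x in A', |gr f x| ^ s) :=
      eta_sm.cont.mul continuous_const
    refine (setIntegral_mono_on (prod_int hA B1_compact cd).integral_prod_right
      (intOn c3 B1_compact) B1_compact.measurableSet b3).trans ?_
    rw [integral_mul_const, eta_int, one_mul]
  have iN : 0 ≤ ∫ x in A', |gr f x| ^ s := integral_nonneg fun _ => Real.rpow_nonneg (abs_nonneg _) _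
  calc nr s (fun x => f x - mol l f x) A ≤ (l ^ s * ∫ x in A', |gr f x| ^ s) ^ (1 / s) :=
        Real.rpow_le_rpow (integral_nonneg fun _ => Real.rpow_nonneg (abs_nonneg _) _) b2
          (by positivity)
    _ = _ := by
        rw [Real.mul_rpow (by positivity) iN, ← Real.rpow_mul hl, mul_one_div_cancel s0.ne',
          Real.rpow_one]
        rfl

end TCM

namespace TCM

/-! ### Oscillation on annuli -/

/-- The mean value inequality along a curve parametrised by `[0, 1]` inside `A`. -/
lemma path_bound {A : Set E3} {F : E3 → ℝ} (hF : Differentiable ℝ F) {K L : ℝ}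
    (hK : ∀ x ∈ A, ‖fderiv ℝ F x‖ ≤ K) (c c' : ℝ → E3) (hc : ∀ t, HasDerivAt c (c' t) t)
    (cA : ∀ t, 0 ≤ t → t ≤ 1 → c t ∈ A) (hL : ∀ t, 0 ≤ t → t ≤ 1 → ‖c' t‖ ≤ L) :
    |F (c 1) - F (c 0)| ≤ K * L := by
  have hd : ∀ t, HasDerivAt (fun t => F (c t)) (fderiv ℝ F (c t) (c' t)) t := fun t =>
    ((hF (c t)).hasFDerivAt).comp_hasDerivAt t (hc t)
  have := norm_image_sub_le_of_norm_deriv_le_segment_01' (f := fun t => F (c t))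
    (f' := fun t => fderiv ℝ F (c t) (c' t)) (C := K * L)
    (fun t _ => (hd t).hasDerivWithinAt) (fun t ht => by
      have h1 := hK _ (cA t ht.1 ht.2.le)
      exact ((fderiv ℝ F (c t)).le_opNorm (c' t)).trans
        (mul_le_mul h1 (hL t ht.1 ht.2.le) (norm_nonneg _) ((norm_nonneg _).trans h1)))
  exact this

lemma norm_arc {P Q : E3} {r : ℝ} (hr : 0 ≤ r) (hP : ‖P‖ = r) (hQ : ‖Q‖ = r) (h : inner ℝ P Q = 0)
    (a b : ℝ) (hab : a ^ 2 + b ^ 2 = 1) : ‖a • P + b • Q‖ = r := by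
  have h1 := norm_add_sq_eq_norm_sq_add_norm_sq_real
    (x := a • P) (y := b • Q) (by rw [inner_smul_left, inner_smul_right, h]; simp)
  rw [norm_smul, norm_smul, hP, hQ, Real.norm_eq_abs, Real.norm_eq_abs] at h1
  have h2 : ‖a • P + b • Q‖ ^ 2 = r ^ 2 := by
    nlinarith [sq_abs a, sq_abs b]
  exact (sq_eq_sq₀ (norm_nonneg _) hr).1 h2

/-- Variation of `F` along a quarter of a great circle. -/
lemma arc_bound {a b r K : ℝ} {F : E3 → ℝ} (hF : Differentiable ℝ F) (ha : 0 < a)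
    (hK : ∀ x ∈ An a b, ‖fderiv ℝ F x‖ ≤ K) {P Q : E3} (hP : ‖P‖ = r) (hQ : ‖Q‖ = r)
    (har : a ≤ r) (hrb : r ≤ b) (h : inner ℝ P Q = 0) : |F Q - F P| ≤ K * (2 * b) := by
  have r0 : 0 ≤ r := by linarith
  have hc : ∀ t : ℝ, HasDerivAt (fun t : ℝ => Real.cos (Real.pi / 2 * t) • P +
      Real.sin (Real.pi / 2 * t) • Q)
      ((-Real.sin (Real.pi / 2 * t) * (Real.pi / 2)) • P +
      (Real.cos (Real.pi / 2 * t) * (Real.pi / 2)) • Q) t := by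
    intro t
    have h0 : HasDerivAt (fun t : ℝ => Real.pi / 2 * t) (Real.pi / 2) t := by
      simpa using (hasDerivAt_id t).const_mul (Real.pi / 2)
    exact (h0.cos.smul_const P).add (h0.sin.smul_const Q)
  have := path_bound hF hK _ _ hc (L := 2 * b) (fun t _ _ => ?_) (fun t _ _ => ?_)
  · simpa using this
  · have := norm_arc r0 hP hQ h (Real.cos (Real.pi / 2 * t)) (Real.sin (Real.pi / 2 * t))
      (by rw [add_comm]; exact Real.sin_sq_add_cos_sq _)
    exact ⟨by rw [this]; exact har, by rw [this]; exact hrb⟩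
  · have := norm_arc r0 hP hQ h (-Real.sin (Real.pi / 2 * t)) (Real.cos (Real.pi / 2 * t))
      (by rw [neg_sq]; exact Real.sin_sq_add_cos_sq _)
    have e : (-Real.sin (Real.pi / 2 * t) * (Real.pi / 2)) • P +
      (Real.cos (Real.pi / 2 * t) * (Real.pi / 2)) • Q = (Real.pi / 2) •
      (-Real.sin (Real.pi / 2 * t) • P + Real.cos (Real.pi / 2 * t) • Q) := by
      rw [smul_add, smul_smul, smul_smul, mul_comm, mul_comm (Real.cos _)]
    rw [e, norm_smul, this, Real.norm_of_nonneg (by positivity)]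
    nlinarith [Real.pi_le_four]

lemma exists_perp (P Q : E3) {r : ℝ} (hr : 0 ≤ r) :
    ∃ S : E3, ‖S‖ = r ∧ inner ℝ P S = 0 ∧ inner ℝ S Q = 0 := by
  set W : Submodule ℝ E3 := Submodule.span ℝ {P, Q} with hW
  have h1 : Module.finrank ℝ W ≤ 2 := by
    classical
    have := finrank_span_le_card (R := ℝ) ({P, Q} : Set E3)
    refine this.trans ?_
    rw [Set.toFinset_card]
    have := Finset.card_le_two (a := P) (b := Q)
    simpa [Set.toFinset_insert, ← Set.toFinset_card] using this
  have h2 := Submodule.finrank_add_finrank_orthogonal W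
  rw [finrank_E3] at h2
  have h3 : Wᗮ ≠ ⊥ := by
    intro h
    rw [h, finrank_bot] at h2
    omega
  obtain ⟨S, hS, S0⟩ := Submodule.exists_mem_ne_zero_of_ne_bot h3
  have n0 : ‖S‖ ≠ 0 := norm_ne_zero_iff.2 S0
  have p1 : inner ℝ P S = 0 := hS P (Submodule.subset_span (by simp))
  have p2 : inner ℝ Q S = 0 := hS Q (Submodule.subset_span (by simp))
  refine ⟨(r / ‖S‖) • S, ?_, ?_, ?_⟩
  · rw [norm_smul, Real.norm_of_nonneg (by positivity), div_mul_cancel₀ _ n0]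
  · rw [inner_smul_right, p1, mul_zero]
  · rw [real_inner_comm, inner_smul_right, p2, mul_zero]

/-- Oscillation of a function with bounded gradient on an annulus: any two points are joined by a
radial segment followed by two quarter circles through a common perpendicular direction. -/
lemma osc {a b K : ℝ} {F : E3 → ℝ} (hF : Differentiable ℝ F) (ha : 0 < a)
    (hK : ∀ x ∈ An a b, ‖fderiv ℝ F x‖ ≤ K) {x y : E3} (hx : x ∈ An a b) (hy : y ∈ An a b) :
    |F x - F y| ≤ 10 * b * K := by
  have x0 : 0 < ‖x‖ := ha.trans_le hx.1
  have y0 : 0 < ‖y‖ := ha.trans_le hy.1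
  have K0 : 0 ≤ K := (norm_nonneg _).trans (hK x hx)
  have b0 : 0 ≤ b := x0.le.trans hx.2
  set y' : E3 := (‖x‖ / ‖y‖) • y with hy'
  have ny : ‖y'‖ = ‖x‖ := by
    rw [hy', norm_smul, Real.norm_of_nonneg (by positivity), div_mul_cancel₀ _ y0.ne']
  obtain ⟨S, nS, s1, s2⟩ := exists_perp x y' x0.le
  have e1 := arc_bound hF ha hK rfl nS hx.1 hx.2 s1
  have e2 := arc_bound hF ha hK nS ny hx.1 hx.2 s2
  have e3 : |F y' - F y| ≤ K * b := by
    have hc : ∀ t : ℝ, HasDerivAt (fun t : ℝ => (1 + t * (‖x‖ / ‖y‖ - 1)) • y)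
        ((‖x‖ / ‖y‖ - 1) • y) t := by
      intro t
      have h0 : HasDerivAt (fun t : ℝ => 1 + t * (‖x‖ / ‖y‖ - 1)) (‖x‖ / ‖y‖ - 1) t := by
        simpa using ((hasDerivAt_id t).mul_const (‖x‖ / ‖y‖ - 1)).const_add 1
      exact h0.smul_const y
    have := path_bound hF hK _ _ hc (L := b) (fun t t0 t1 => ?_) (fun t _ _ => ?_)
    · simpa [hy'] using this
    · have e : (1 + t * (‖x‖ / ‖y‖ - 1)) * ‖y‖ = (1 - t) * ‖y‖ + t * ‖x‖ := by
        field_simp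
        ring
      have n : ‖(1 + t * (‖x‖ / ‖y‖ - 1)) • y‖ = (1 - t) * ‖y‖ + t * ‖x‖ := by
        rw [norm_smul, ← e, Real.norm_of_nonneg]
        have : 0 < ‖x‖ / ‖y‖ := by positivity
        nlinarith
      have h1 : 0 ≤ 1 - t := by linarith
      constructor
      · rw [n]; nlinarith [hx.1, hy.1]
      · rw [n]; nlinarith [hx.2, hy.2]
    · have e : (‖x‖ / ‖y‖ - 1) * ‖y‖ = ‖x‖ - ‖y‖ := by
        field_simp
      have : ‖(‖x‖ / ‖y‖ - 1) • y‖ = |‖x‖ - ‖y‖| := by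
        rw [norm_smul, Real.norm_eq_abs, ← e, abs_mul, abs_of_pos y0]
      rw [this, abs_le]
      constructor <;> linarith [hx.2, hy.2]
  have : |F x - F y| ≤ |F S - F x| + |F y' - F S| + |F y' - F y| := by
    rw [abs_sub_comm (F S), abs_sub_comm (F y') (F S)]
    calc |F x - F y| = |(F x - F S) + (F S - F y') + (F y' - F y)| := by ring_nf
      _ ≤ _ := abs_add_three _ _ _
  nlinarith [mul_nonneg K0 b0]

end TCM

namespace TCM

/-! ### The Sobolev inequality -/

lemma nr_add {s : ℝ} (hs : 1 ≤ s) {f g k : E3 → ℝ} (hf : Continuous f) (hg : Continuous g)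
    (hk : Continuous k) {A : Set E3} (hA : IsCompact A) (h : ∀ x ∈ A, |k x| ≤ |f x| + |g x|) :
    nr s k A ≤ 2 * (nr s f A + nr s g A) := by
  have s0 : 0 < s := by linarith
  have If : 0 ≤ ∫ x in A, |f x| ^ s := integral_nonneg fun _ => Real.rpow_nonneg (abs_nonneg _) _
  have Ig : 0 ≤ ∫ x in A, |g x| ^ s := integral_nonneg fun _ => Real.rpow_nonneg (abs_nonneg _) _
  have pw : ∀ x ∈ A, |k x| ^ s ≤ 2 ^ s * (|f x| ^ s + |g x| ^ s) := by
    intro x hx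
    have fp := Real.rpow_nonneg (abs_nonneg (f x)) s
    have gp := Real.rpow_nonneg (abs_nonneg (g x)) s
    have t0 : (0:ℝ) ≤ 2 ^ s := by positivity
    rcases le_total (|f x|) (|g x|) with c | c
    · calc |k x| ^ s ≤ (2 * |g x|) ^ s :=
            Real.rpow_le_rpow (abs_nonneg _) (by linarith [h x hx]) s0.le
        _ = 2 ^ s * |g x| ^ s := Real.mul_rpow (by norm_num) (abs_nonneg _)
        _ ≤ _ := mul_le_mul_of_nonneg_left (by linarith) t0
    · calc |k x| ^ s ≤ (2 * |f x|) ^ s :=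
            Real.rpow_le_rpow (abs_nonneg _) (by linarith [h x hx]) s0.le
        _ = 2 ^ s * |f x| ^ s := Real.mul_rpow (by norm_num) (abs_nonneg _)
        _ ≤ _ := mul_le_mul_of_nonneg_left (by linarith) t0
  have c2 : Continuous fun x => 2 ^ s * (|f x| ^ s + |g x| ^ s) :=
    continuous_const.mul ((cont_abs_rpow hf s0.le).add (cont_abs_rpow hg s0.le))
  have i1 := setIntegral_mono_on (intOn (cont_abs_rpow hk s0.le) hA) (intOn c2 hA)
    hA.measurableSet pw
  rw [integral_const_mul, integral_add (intOn (cont_abs_rpow hf s0.le) hA)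
    (intOn (cont_abs_rpow hg s0.le) hA)] at i1
  have i2 := Real.rpow_le_rpow (z := 1 / s)
    (integral_nonneg fun _ => Real.rpow_nonneg (abs_nonneg _) _) i1 (by positivity)
  rw [Real.mul_rpow (by positivity) (by positivity), ← Real.rpow_mul (by norm_num),
    mul_one_div_cancel s0.ne', Real.rpow_one] at i2
  refine i2.trans (mul_le_mul_of_nonneg_left ?_ (by norm_num))
  exact Real.rpow_add_le_add_rpow If Ig (by positivity) ((div_le_one s0).2 hs)

lemma nr_off {s : ℝ} (hs : 0 < s) {f : E3 → ℝ} {S K : Set E3} (hK : IsCompact K)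
    (h : S ⊆ K) (h0 : ∀ x, x ∉ S → f x = 0) : nr s f K = nr s f S := by
  unfold nr
  congr 1
  refine (setIntegral_eq_of_subset_of_forall_sdiff_eq_zero hK.measurableSet h fun x hx => ?_)
  rw [h0 x hx.2, abs_zero, Real.zero_rpow hs.ne']

lemma nr_const_le {s : ℝ} (hs : 1 ≤ s) {f : E3 → ℝ} (hf : Continuous f) {A : Set E3}
    (hA : IsCompact A) {c : ℝ} (h : ∀ x ∈ A, |f x| ≤ c) (c0 : 0 ≤ c) :
    nr s f A ≤ c * volume.real A ^ (1 / s) := by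
  have s0 : 0 < s := by linarith
  have := nr_mono s0 hf (continuous_const (y := c)) hA (fun x hx => by
    rw [abs_of_nonneg c0]; exact h x hx)
  refine this.trans (le_of_eq ?_)
  unfold nr
  rw [setIntegral_const, smul_eq_mul, Real.mul_rpow measureReal_nonneg (by positivity),
    ← Real.rpow_mul (abs_nonneg _), mul_one_div_cancel s0.ne', Real.rpow_one, abs_of_nonneg c0,
    mul_comm]

lemma vol_pow_le {b s : ℝ} (hb : 0 < b) (hs : 1 ≤ s) {A : Set E3} (h : ∀ x ∈ A, ‖x‖ ≤ b) :
    volume.real A ^ (1 / s) ≤ (1 + volume.real B1) * b ^ (3 / s) := by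
  have s0 : 0 < s := by linarith
  have v0 : 0 ≤ volume.real B1 := measureReal_nonneg
  calc volume.real A ^ (1 / s) ≤ ((1 + volume.real B1) * b ^ (3:ℝ)) ^ (1 / s) := by
        refine Real.rpow_le_rpow measureReal_nonneg ((vol_ball_le hb.le h).trans ?_) (by positivity)
        rw [show (3:ℝ) = ((3:ℕ):ℝ) by norm_num, Real.rpow_natCast]
        exact mul_le_mul_of_nonneg_right (by linarith) (by positivity)
    _ = (1 + volume.real B1) ^ (1 / s) * b ^ (3 / s) := by
        rw [Real.mul_rpow (by positivity) (by positivity), ← Real.rpow_mul hb.le]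
        congr 2; ring
    _ ≤ _ := by
        refine mul_le_mul_of_nonneg_right ?_ (by positivity)
        calc (1 + volume.real B1) ^ (1 / s) ≤ (1 + volume.real B1) ^ (1:ℝ) :=
              Real.rpow_le_rpow_of_exponent_le (by linarith) ((div_le_one s0).2 hs)
          _ = _ := Real.rpow_one _

lemma gns_enorm {lam r : ℝ} (hl : 1 ≤ lam) (hr : 0 < r) (h : 1 / r = 1 / lam - 1 / 3)
    {f : E3 → ℝ} (hf : Sm f) (hc : HasCompactSupport f) :
    eLpNorm f (ENNReal.ofReal r) volume ≤
      SNormLESNormFDerivOfEqConst ℝ (volume : Measure E3) lam.toNNReal *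
        eLpNorm (gr f) (ENNReal.ofReal lam) volume := by
  have l0 : 0 < lam := by linarith
  have key := eLpNorm_le_eLpNorm_fderiv_of_eq (μ := (volume : Measure E3)) (u := f)
    (p := lam.toNNReal) (p' := r.toNNReal) (hf.of_le (by simp)) hc
    (by rw [← NNReal.coe_le_coe, Real.coe_toNNReal _ l0.le]; exact_mod_cast hl)
    (by rw [finrank_E3]; norm_num)
    (by rw [finrank_E3, Real.coe_toNNReal _ hr.le, NNReal.coe_inv, Real.coe_toNNReal _ l0.le]
        rw [one_div, one_div] at h; rw [h]; norm_num)
  rw [← eLpNorm_norm (fderiv ℝ f)] at key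
  exact key

lemma nr_eLpNorm_whole {s : ℝ} (hs : 0 < s) {f : E3 → ℝ} (hf : Continuous f) {K : Set E3}
    (hK : IsCompact K) (h0 : ∀ x, x ∉ K → f x = 0) :
    eLpNorm f (ENNReal.ofReal s) volume = ENNReal.ofReal (nr s f K) := by
  have fs : Function.support f ⊆ K := fun x hx => by
    by_contra hxK; exact hx (h0 x hxK)
  rw [← eLpNorm_restrict_eq_of_support_subset fs, nr_eLpNorm hs hf hK]
  simp [nr]

lemma gr_off {f : E3 → ℝ} {K : Set E3} (hK : IsClosed K) (h0 : ∀ x, x ∉ K → f x = 0) (x : E3)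
    (hx : x ∉ K) : gr f x = 0 := by
  have : f =ᶠ[nhds x] fun _ => 0 := by
    filter_upwards [hK.isOpen_compl.mem_nhds hx] with y hy using h0 y hy
  unfold gr
  rw [this.fderiv_eq]; simp

/-- The Gagliardo–Nirenberg–Sobolev inequality for functions vanishing off a compact set. -/
lemma gns {lam r : ℝ} (hl : 1 ≤ lam) (hr : 0 < r) (h : 1 / r = 1 / lam - 1 / 3) :
    ∃ C : ℝ, 0 ≤ C ∧ ∀ (f : E3 → ℝ) (K : Set E3), Sm f → IsCompact K → (∀ x, x ∉ K → f x = 0) →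
      nr r f K ≤ C * nr lam (gr f) K := by
  have l0 : 0 < lam := by linarith
  refine ⟨SNormLESNormFDerivOfEqConst ℝ (volume : Measure E3) lam.toNNReal, NNReal.coe_nonneg _,
    fun f K hf hK h0 => ?_⟩
  have key := gns_enorm hl hr h hf (HasCompactSupport.intro hK h0)
  rw [nr_eLpNorm_whole hr hf.cont hK h0,
    nr_eLpNorm_whole l0 hf.gr_cont hK (gr_off hK.isClosed h0),
    ← ENNReal.ofReal_coe_nnreal, ← ENNReal.ofReal_mul (NNReal.coe_nonneg _)] at key
  exact (ENNReal.ofReal_le_ofReal_iff (mul_nonneg (NNReal.coe_nonneg _) (nr_nonneg _ _ _))).1 key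

lemma gr_le_of_pd {f : E3 → ℝ} {x : E3} {B : ℝ} (h : ∀ j, |pd3 j f x| ≤ B) : gr f x ≤ 3 * B := by
  have B0 : 0 ≤ B := (abs_nonneg _).trans (h 0)
  refine abs_le_of_sq_le_sq' ?_ (by positivity) |>.2
  rw [gr_sq, Fin.sum_univ_three]
  have : ∀ j, pd3 j f x ^ 2 ≤ B ^ 2 := fun j => sq_le_sq' (by linarith [(abs_le.1 (h j)).1])
    (abs_le.1 (h j)).2
  nlinarith [this 0, this 1, this 2]

lemma gr_mul_le {f g : E3 → ℝ} (hf : Sm f) (hg : Sm g) (x : E3) :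
    gr (fun y => f y * g y) x ≤ |f x| * gr g x + |g x| * gr f x := by
  unfold gr
  rw [fderiv_fun_mul (hf.diff x) (hg.diff x)]
  refine (norm_add_le _ _).trans ?_
  rw [norm_smul, norm_smul, Real.norm_eq_abs, Real.norm_eq_abs]

/-- Localised Sobolev inequality: the cutoff `χ` is `1` on `A`, vanishes off `K`, and its gradient
lives on `S`. -/
lemma gns_cut {lam r : ℝ} (hl : 1 ≤ lam) (hr : 0 < r) (h : 1 / r = 1 / lam - 1 / 3) :
    ∃ C : ℝ, 0 ≤ C ∧ ∀ (f χ : E3 → ℝ) (A S K : Set E3) (B : ℝ), Sm f → Sm χ → IsCompact A →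
      IsCompact S → IsCompact K → A ⊆ K → S ⊆ K → (∀ x, x ∉ K → χ x = 0) → (∀ x ∈ A, χ x = 1) →
      (∀ x, |χ x| ≤ 1) → 0 ≤ B → (∀ j x, |pd3 j χ x| ≤ B) → (∀ j x, x ∉ S → pd3 j χ x = 0) →
      nr r f A ≤ C * (nr lam (gr f) K + B * nr lam f S) := by
  have l0 : 0 < lam := by linarith
  obtain ⟨C, C0, hC⟩ := gns hl hr h
  refine ⟨C * 6, by positivity, fun f χ A S K B hf hχ hA hS hK hAK hSK χK χA χ1 B0 hB hBS => ?_⟩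
  have hp : Sm fun y => χ y * f y := hχ.mul hf
  have c2 : Continuous fun x => f x * gr χ x := hf.cont.mul hχ.gr_cont
  have h1 := hC _ K hp hK (fun x hx => by rw [χK x hx, zero_mul])
  have h2 : nr r f A ≤ nr r (fun y => χ y * f y) A :=
    nr_mono hr hf.cont hp.cont hA fun x hx => by rw [χA x hx, one_mul]
  have h3 := nr_mono_set hr hp.cont hK hAK
  have h4 : nr lam (gr fun y => χ y * f y) K ≤ 2 * (nr lam (gr f) K + nr lam (fun x => f x * gr χ x) K) :=
    nr_add hl hf.gr_cont c2 hp.gr_cont hK fun x _ => by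
      have := gr_mul_le hχ hf x
      rw [abs_of_nonneg (gr_nonneg _ _), abs_of_nonneg (gr_nonneg _ _), abs_mul,
        abs_of_nonneg (gr_nonneg _ _)]
      nlinarith [χ1 x, gr_nonneg f x]
  have g0 : ∀ x, x ∉ S → gr χ x = 0 := fun x hx =>
    le_antisymm (by simpa using gr_le_of_pd (B := 0) fun j => by rw [hBS j x hx]; simp)
      (gr_nonneg _ _)
  have h5 : nr lam (fun x => f x * gr χ x) K = nr lam (fun x => f x * gr χ x) S :=
    nr_off l0 hK hSK fun x hx => by rw [g0 x hx, mul_zero]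
  have c3 : Continuous fun x => 3 * B * f x := continuous_const.mul hf.cont
  have h6 : nr lam (fun x => f x * gr χ x) S ≤ nr lam (fun x => 3 * B * f x) S :=
    nr_mono l0 c2 c3 hS fun x _ => by
      rw [abs_mul, abs_mul, abs_of_nonneg (gr_nonneg _ _), abs_of_nonneg (by positivity : 0 ≤ 3 * B),
        mul_comm]
      exact mul_le_mul_of_nonneg_right (gr_le_of_pd fun j => hB j x) (abs_nonneg _)
  rw [nr_const_mul l0 (by positivity)] at h6
  have n1 := nr_nonneg lam (gr f) K
  calc nr r f A ≤ C * nr lam (gr fun y => χ y * f y) K := h2.trans (h3.trans h1)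
    _ ≤ C * (2 * (nr lam (gr f) K + 3 * B * nr lam f S)) :=
        mul_le_mul_of_nonneg_left (by linarith) C0
    _ ≤ _ := by
        have := mul_nonneg B0 (nr_nonneg lam f S)
        have := mul_nonneg C0 n1
        nlinarith

end TCM

namespace TCM

/-! ### Poincaré–Sobolev inequalities on shells -/

/-- Admissible radii: the shell `ρ ≤ |x| ≤ ρ + 8h` lies in the annulus `R ≤ |x| ≤ 3R/2`. -/
structure Geo (R ρ h : ℝ) : Prop where
  R1 : 1 ≤ R
  h0 : 0 < h
  Rρ : R ≤ ρ
  top : ρ + 8 * h ≤ 3 / 2 * R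

lemma Geo.R0 {R ρ h : ℝ} (g : Geo R ρ h) : 0 < R := by linarith [g.R1]
lemma Geo.ρ0 {R ρ h : ℝ} (g : Geo R ρ h) : 0 < ρ := by linarith [g.R1, g.Rρ]
lemma Geo.k1 {R ρ h : ℝ} (g : Geo R ρ h) : 1 ≤ R / h := by
  rw [le_div_iff₀ g.h0]; linarith [g.top, g.Rρ, g.h0]
lemma Geo.hR {R ρ h : ℝ} (g : Geo R ρ h) : h ≤ R := by linarith [g.top, g.Rρ, g.h0]

lemma eta_bdd : ∃ W : ℝ, 0 ≤ W ∧ ∀ z, |eta z| ≤ W := bdd_of_hcs eta_sm.cont eta_hcs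

lemma two_pow_le {κ t : ℝ} (hκ : 1 ≤ κ) (ht : t ≤ 3) : (2 * κ) ^ t ≤ 8 * κ ^ 3 := by
  calc (2 * κ) ^ t ≤ (2 * κ) ^ (3:ℝ) := Real.rpow_le_rpow_of_exponent_le (by linarith) ht
    _ = _ := by
      rw [show (3:ℝ) = ((3:ℕ):ℝ) by norm_num, Real.rpow_natCast]; ring

lemma scale_pow {R h s : ℝ} (hR : 0 < R) (hh : 0 < h) (hs : 1 ≤ s) (hk : 1 ≤ R / h) :
    h ^ (-(3 / s)) * (2 * R) ^ (3 / s) ≤ 8 * (R / h) ^ 3 := by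
  have s0 : 0 < s := by linarith
  rw [Real.rpow_neg hh.le, mul_comm, ← div_eq_mul_inv, ← Real.div_rpow (by positivity) hh.le,
    mul_div_assoc]
  exact two_pow_le hk (by rw [div_le_iff₀ s0]; linarith)

/-- Poincaré inequality on the shell, for a mean given by the mollification at a point. -/
lemma poincare : ∃ C : ℝ, 0 ≤ C ∧ ∀ R ρ h : ℝ, Geo R ρ h → ∀ f : E3 → ℝ, Sm f → ∀ s : ℝ, 1 ≤ s →
    ∀ x0 ∈ An (ρ + 2 * h) (ρ + 6 * h),
      nr s (fun x => f x - mol h f x0) (An (ρ + 2 * h) (ρ + 6 * h)) ≤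
        C * (h * (R / h) ^ 4) * nr s (gr f) (An ρ (ρ + 8 * h)) := by
  obtain ⟨W, W0, hW⟩ := eta_bdd
  set v := volume.real B1 with hv
  have v0 : 0 ≤ v := measureReal_nonneg
  refine ⟨2 + 1000 * (W * (1 + v) ^ 2), by positivity, fun R ρ h g f hf s hs x0 hx0 => ?_⟩
  have h0 := g.h0
  have R0 := g.R0
  have k1 := g.k1
  have s0 : 0 < s := by linarith
  set A := An (ρ + 2 * h) (ρ + 6 * h) with hA
  set A' := An ρ (ρ + 8 * h) with hA'
  set N := nr s (gr f) A' with hN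
  have N0 : 0 ≤ N := nr_nonneg _ _ _
  have sh : ∀ x ∈ A, ∀ z ∈ B1, ∀ t, 0 ≤ t → t ≤ h → x - t • z ∈ A' := fun x hx z hz t t0 t1 =>
    An_mono (by linarith) (by linarith) (An_shift t0 t1 hx hz)
  have e1 : nr s (fun x => f x - mol h f x) A ≤ h * N :=
    mol_err (An_compact _ _) (An_compact _ _) hf hs h0.le sh
  set K := W * (1 + v) * h ^ (-(3 / s)) * N with hK
  have hg : ∀ x ∈ A, ‖fderiv ℝ (mol h f) x‖ ≤ 3 * K := by
    intro x hx
    refine mol_fderiv_bound hf h x fun j => ?_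
    have a1 := avg_bound (An_compact ρ (ρ + 8 * h)) (hf.pd j).cont eta_sm.cont hW hs h0 x
      (fun z hz => sh x hx z hz h h0.le le_rfl)
    refine a1.trans (mul_le_mul_of_nonneg_left ?_ (by positivity))
    exact nr_mono s0 (hf.pd j).cont hf.gr_cont (An_compact _ _) fun y _ => by
      rw [abs_of_nonneg (gr_nonneg f y)]; exact abs_pd3_le f y j
  have dm : Differentiable ℝ (mol h f) := fun x => (mol_hasFDerivAt hf h x).differentiableAt
  have K0 : 0 ≤ K := by positivity
  have e2 : ∀ x ∈ A, |mol h f x - mol h f x0| ≤ 60 * R * K := fun x hx => by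
    have := osc dm (by linarith [g.ρ0] : 0 < ρ + 2 * h) hg hx hx0
    refine this.trans ?_
    have : ρ + 6 * h ≤ 2 * R := by linarith [g.top]
    nlinarith
  have c2 : Continuous fun x => mol h f x - mol h f x0 := (mol_cont hf h).sub continuous_const
  have e3 := nr_const_le hs c2 (An_compact (ρ + 2 * h) (ρ + 6 * h)) e2 (by positivity)
  have e4 : volume.real A ^ (1 / s) ≤ (1 + v) * (2 * R) ^ (3 / s) :=
    vol_pow_le (by linarith) hs fun x hx => hx.2.trans (by linarith [g.top])
  have e5 := scale_pow R0 h0 hs k1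
  have e6 : nr s (fun x => mol h f x - mol h f x0) A ≤
      480 * (W * (1 + v) ^ 2) * (h * (R / h) ^ 4) * N := by
    calc _ ≤ 60 * R * K * ((1 + v) * (2 * R) ^ (3 / s)) :=
          e3.trans (mul_le_mul_of_nonneg_left e4 (by positivity))
      _ = 60 * (W * (1 + v) ^ 2) * R * N * (h ^ (-(3 / s)) * (2 * R) ^ (3 / s)) := by
          rw [hK]; ring
      _ ≤ 60 * (W * (1 + v) ^ 2) * R * N * (8 * (R / h) ^ 3) :=
          mul_le_mul_of_nonneg_left e5 (by positivity)
      _ = _ := by field_simp; ring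
  have c1 : Continuous fun x => f x - mol h f x := hf.cont.sub (mol_cont hf h)
  have c3 : Continuous fun x => f x - mol h f x0 := hf.cont.sub continuous_const
  have e7 := nr_add hs c1 c2 c3 (An_compact (ρ + 2 * h) (ρ + 6 * h)) (fun x _ => by
    have := abs_add_le (f x - mol h f x) (mol h f x - mol h f x0)
    simpa using this)
  have k4 : 1 ≤ (R / h) ^ 4 := one_le_pow₀ k1
  have e8 : h * N ≤ h * (R / h) ^ 4 * N := by
    nlinarith [mul_nonneg h0.le N0]
  have p : 0 ≤ W * (1 + v) ^ 2 * (h * (R / h) ^ 4) * N := by positivity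
  calc _ ≤ 2 * (h * (R / h) ^ 4 * N + 480 * (W * (1 + v) ^ 2) * (h * (R / h) ^ 4) * N) := by
        linarith
    _ ≤ _ := by nlinarith

/-- Poincaré–Sobolev inequality on the shell. -/
lemma poincare_sobolev {lam r : ℝ} (hl : 1 ≤ lam) (hr : 0 < r) (h : 1 / r = 1 / lam - 1 / 3) :
    ∃ C : ℝ, 0 ≤ C ∧ ∀ R ρ h : ℝ, Geo R ρ h → ∀ f : E3 → ℝ, Sm f →
    ∀ x0 ∈ An (ρ + 2 * h) (ρ + 6 * h),
      nr r (fun x => f x - mol h f x0) (An (ρ + 3 * h) (ρ + 5 * h)) ≤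
        C * (R / h) ^ 4 * nr lam (gr f) (An ρ (ρ + 8 * h)) := by
  obtain ⟨C1, C10, H1⟩ := poincare
  obtain ⟨C2, C20, H2⟩ := gns_cut hl hr h
  obtain ⟨C3, C30, H3⟩ := exists_cutoff
  refine ⟨C2 * (1 + 2 * C3 * C1), by positivity, fun R ρ h g f hf x0 hx0 => ?_⟩
  have h0 := g.h0
  have l0 : 0 < lam := by linarith
  obtain ⟨φ, φs, -, φ0, φ1, φa, φb, φz, φd, -⟩ := H3 (ρ + 5 * h) (ρ + 6 * h) (by linarith [g.ρ0])
    (by linarith)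
  obtain ⟨ψ, ψs, -, ψ0, ψ1, ψa, ψb, ψz, ψd, -⟩ := H3 (ρ + 2 * h) (ρ + 3 * h) (by linarith [g.ρ0])
    (by linarith)
  have fs : Sm fun x => f x - mol h f x0 := hf.sub (Sm.const _)
  have gf : gr (fun x => f x - mol h f x0) = gr f := by
    funext x; unfold gr; rw [fderiv_sub_const]
  have key := H2 (fun x => f x - mol h f x0) (fun x => φ x - ψ x) (An (ρ + 3 * h) (ρ + 5 * h))
    (An (ρ + 2 * h) (ρ + 6 * h)) (An (ρ + 2 * h) (ρ + 6 * h)) (2 * C3 / h) fs (φs.sub ψs)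
    (An_compact _ _) (An_compact _ _) (An_compact _ _) (An_mono (by linarith) (by linarith))
    subset_rfl ?_ ?_ ?_ (by positivity) ?_ ?_
  · rw [gf] at key
    refine key.trans ?_
    rw [mul_assoc C2, mul_assoc C2]
    refine mul_le_mul_of_nonneg_left ?_ C20
    have m1 := nr_mono_set l0 hf.gr_cont (An_compact ρ (ρ + 8 * h))
      (An_mono (by linarith : ρ ≤ ρ + 2 * h) (by linarith : ρ + 6 * h ≤ ρ + 8 * h))
    have m2 := H1 R ρ h g f hf lam hl x0 hx0
    set N := nr lam (gr f) (An ρ (ρ + 8 * h))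
    have N0 : 0 ≤ N := nr_nonneg _ _ _
    have k4 : 1 ≤ (R / h) ^ 4 := one_le_pow₀ g.k1
    have m3 : 2 * C3 / h * nr lam (fun x => f x - mol h f x0) (An (ρ + 2 * h) (ρ + 6 * h)) ≤
        2 * C3 / h * (C1 * (h * (R / h) ^ 4) * N) := mul_le_mul_of_nonneg_left m2 (by positivity)
    have e : 2 * C3 / h * (C1 * (h * (R / h) ^ 4) * N) = 2 * C3 * C1 * (R / h) ^ 4 * N := by
      field_simp
    nlinarith
  · intro x hx
    by_cases hx2 : ‖x‖ ≤ ρ + 2 * h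
    · rw [ψa x hx2, φa x (by linarith), sub_self]
    · have : ρ + 6 * h ≤ ‖x‖ := by
        by_contra hc
        exact hx ⟨by linarith, by linarith⟩
      rw [φb x this, ψb x (by linarith), sub_self]
  · intro x hx
    rw [φa x hx.2, ψb x hx.1, sub_zero]
  · intro x
    rw [abs_le]; constructor <;> linarith [φ0 x, φ1 x, ψ0 x, ψ1 x]
  · intro j x
    rw [pd3_sub φs ψs]
    have a := φd j x
    have b := ψd j x
    rw [show ρ + 6 * h - (ρ + 5 * h) = h by ring] at a
    rw [show ρ + 3 * h - (ρ + 2 * h) = h by ring] at b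
    refine (abs_sub _ _).trans ?_
    rw [mul_div_assoc]; linarith
  · intro j x hx
    rw [pd3_sub φs ψs, φz j x, ψz j x, sub_zero]
    · exact fun hc => hx (An_mono (by linarith) (by linarith) hc)
    · exact fun hc => hx (An_mono (by linarith) (by linarith) hc)

/-- The `L²` norm on a shell divided by its width. -/
lemma l2_shell : ∃ C : ℝ, 0 ≤ C ∧ ∀ R ρ h : ℝ, Geo R ρ h → ∀ f : E3 → ℝ, Sm f → ∀ s a M : ℝ, 1 ≤ s →
    a ≤ 3 / s - 1 / 2 → 0 ≤ M → nr s f (An ρ (ρ + 8 * h)) ≤ M * R ^ a →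
      nr 2 f (An (ρ + 3 * h) (ρ + 5 * h)) ≤
        C * h * (nr 2 (gr f) (An ρ (ρ + 8 * h)) + (R / h) ^ 4 * M) := by
  obtain ⟨W, W0, hW⟩ := eta_bdd
  set v := volume.real B1 with hv
  have v0 : 0 ≤ v := measureReal_nonneg
  refine ⟨2 + 16 * (W * (1 + v) ^ 2), by positivity, fun R ρ h g f hf s a M hs ha M0 hM => ?_⟩
  have h0 := g.h0
  have R0 := g.R0
  have k1 := g.k1
  have s0 : 0 < s := by linarith
  set A := An (ρ + 3 * h) (ρ + 5 * h) with hA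
  set A' := An ρ (ρ + 8 * h) with hA'
  have sh : ∀ x ∈ A, ∀ z ∈ B1, ∀ t, 0 ≤ t → t ≤ h → x - t • z ∈ A' := fun x hx z hz t t0 t1 =>
    An_mono (by linarith) (by linarith) (An_shift t0 t1 hx hz)
  have e1 : nr 2 (fun x => f x - mol h f x) A ≤ h * nr 2 (gr f) A' :=
    mol_err (An_compact _ _) (An_compact _ _) hf (by norm_num) h0.le sh
  have e2 : ∀ x ∈ A, |mol h f x| ≤ W * (1 + v) * h ^ (-(3 / s)) * (M * R ^ a) := fun x hx =>
    (avg_bound (An_compact ρ (ρ + 8 * h)) hf.cont eta_sm.cont hW hs h0 x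
      (fun z hz => sh x hx z hz h h0.le le_rfl)).trans
      (mul_le_mul_of_nonneg_left hM (by positivity))
  have e3 := nr_const_le (s := 2) (by norm_num) (mol_cont hf h)
    (An_compact (ρ + 3 * h) (ρ + 5 * h)) e2 (by positivity)
  have e4 : volume.real A ^ (1 / (2:ℝ)) ≤ (1 + v) * (2 * R) ^ (3 / (2:ℝ)) :=
    vol_pow_le (by linarith) (by norm_num) fun x hx => hx.2.trans (by linarith [g.top])
  have t1 : R ^ a ≤ R ^ (3 / s - 1 / 2) := Real.rpow_le_rpow_of_exponent_le g.R1 ha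
  have t2 : (2 * R) ^ (3 / (2:ℝ)) ≤ 4 * (R * R ^ (1 / (2:ℝ))) := by
    rw [Real.mul_rpow (by norm_num) R0.le]
    have : (2:ℝ) ^ (3 / (2:ℝ)) ≤ 2 ^ (2:ℝ) :=
      Real.rpow_le_rpow_of_exponent_le (by norm_num) (by norm_num)
    have e : R ^ (3 / (2:ℝ)) = R * R ^ (1 / (2:ℝ)) := by
      rw [← Real.rpow_one_add' R0.le (by norm_num)]; norm_num
    rw [e]
    refine mul_le_mul_of_nonneg_right (this.trans (by norm_num)) (by positivity)
  have t3 : h ^ (-(3 / s)) * R ^ (3 / s) ≤ (R / h) ^ 3 := by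
    rw [Real.rpow_neg h0.le, mul_comm, ← div_eq_mul_inv, ← Real.div_rpow R0.le h0.le]
    calc (R / h) ^ (3 / s) ≤ (R / h) ^ (3:ℝ) :=
          Real.rpow_le_rpow_of_exponent_le k1 (by rw [div_le_iff₀ s0]; linarith)
      _ = _ := by rw [show (3:ℝ) = ((3:ℕ):ℝ) by norm_num, Real.rpow_natCast]
  have t4 : R ^ (3 / s - 1 / 2) * R ^ (1 / (2:ℝ)) = R ^ (3 / s) := by
    rw [← Real.rpow_add R0]; congr 1; ring
  have e6 : nr 2 (mol h f) A ≤ 4 * (W * (1 + v) ^ 2) * h * ((R / h) ^ 4 * M) := by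
    calc _ ≤ W * (1 + v) * h ^ (-(3 / s)) * (M * R ^ (3 / s - 1 / 2)) *
          ((1 + v) * (4 * (R * R ^ (1 / (2:ℝ))))) := by
          refine e3.trans (mul_le_mul ?_ (e4.trans ?_) (by positivity) (by positivity))
          · gcongr
          · gcongr
      _ = 4 * (W * (1 + v) ^ 2) * M * R * (h ^ (-(3 / s)) * R ^ (3 / s)) := by
          rw [← t4]; ring
      _ ≤ 4 * (W * (1 + v) ^ 2) * M * R * (R / h) ^ 3 :=
          mul_le_mul_of_nonneg_left t3 (by positivity)
      _ = _ := by field_simp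
  have c1 : Continuous fun x => f x - mol h f x := hf.cont.sub (mol_cont hf h)
  have e7 := nr_add (s := 2) (by norm_num) c1 (mol_cont hf h) hf.cont
    (An_compact (ρ + 3 * h) (ρ + 5 * h)) (fun x _ => by
      have := abs_add_le (f x - mol h f x) (mol h f x)
      simpa using this)
  have N0 := nr_nonneg 2 (gr f) A'
  have p1 : 0 ≤ h * ((R / h) ^ 4 * M) := by positivity
  have p2 : 0 ≤ (W * (1 + v) ^ 2) * (h * nr 2 (gr f) A') := by positivity
  have p3 : 0 ≤ (W * (1 + v) ^ 2) * (h * ((R / h) ^ 4 * M)) := by positivity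
  nlinarith

/-- `L⁶` bound on a ball by the Dirichlet integral on a larger ball and a lower-order norm on the
shell between them. -/
lemma l6_ball : ∃ C : ℝ, 0 ≤ C ∧ ∀ R ρ h : ℝ, Geo R ρ h → ∀ f : E3 → ℝ, Sm f → ∀ s a M : ℝ, 1 ≤ s →
    a ≤ 3 / s - 1 / 2 → 0 ≤ M → nr s f (An ρ (ρ + 8 * h)) ≤ M * R ^ a →
      nr 6 f (closedBall 0 ρ) ≤ C * (nr 2 (gr f) (closedBall 0 (ρ + 8 * h)) + (R / h) ^ 4 * M) := by
  obtain ⟨C1, C10, H1⟩ := l2_shell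
  obtain ⟨C2, C20, H2⟩ := gns_cut (lam := 2) (r := 6) (by norm_num) (by norm_num) (by norm_num)
  obtain ⟨C3, C30, H3⟩ := exists_cutoff
  refine ⟨C2 * (1 + C3 * C1), by positivity, fun R ρ h g f hf s a M hs ha M0 hM => ?_⟩
  have h0 := g.h0
  obtain ⟨φ, φs, -, φ0, φ1, φa, φb, φz, φd, -⟩ := H3 (ρ + 3 * h) (ρ + 5 * h) (by linarith [g.ρ0])
    (by linarith)
  have key := H2 f φ (closedBall 0 ρ) (An (ρ + 3 * h) (ρ + 5 * h)) (closedBall 0 (ρ + 8 * h))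
    (C3 / h) hf φs (isCompact_closedBall _ _) (An_compact _ _) (isCompact_closedBall _ _)
    (closedBall_subset_closedBall (by linarith))
    (fun x hx => by simpa using hx.2.trans (by linarith))
    (fun x hx => φb x (by
      have : ρ + 8 * h < ‖x‖ := by simpa using hx
      linarith))
    (fun x hx => φa x (by
      have : ‖x‖ ≤ ρ := by simpa using hx
      linarith))
    (fun x => by rw [abs_of_nonneg (φ0 x)]; exact φ1 x) (by positivity)
    (fun j x => (φd j x).trans (div_le_div_of_nonneg_left C30 h0 (by linarith)))
    φz
  refine key.trans ?_
  rw [mul_assoc C2]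
  refine mul_le_mul_of_nonneg_left ?_ C20
  have m1 := H1 R ρ h g f hf s a M hs ha M0 hM
  have m2 := nr_mono_set (s := 2) (by norm_num) hf.gr_cont (isCompact_closedBall (0:E3) (ρ + 8 * h))
    (A := An ρ (ρ + 8 * h)) (fun x hx => by simpa using hx.2)
  set N := nr 2 (gr f) (closedBall 0 (ρ + 8 * h))
  have N0 : 0 ≤ N := nr_nonneg _ _ _
  have p : 0 ≤ (R / h) ^ 4 * M := by have := g.R0; positivity
  have m3 : C3 / h * nr 2 f (An (ρ + 3 * h) (ρ + 5 * h)) ≤ C3 / h *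
      (C1 * h * (N + (R / h) ^ 4 * M)) :=
    mul_le_mul_of_nonneg_left (m1.trans (mul_le_mul_of_nonneg_left (by linarith) (by positivity)))
      (by positivity)
  have e : C3 / h * (C1 * h * (N + (R / h) ^ 4 * M)) = C3 * C1 * (N + (R / h) ^ 4 * M) := by
    field_simp
  nlinarith

end TCM

namespace TCM

/-! ### The system and its energy identity -/

/-- The tropical climate system written for the scalar components of `u` and `v`. -/
structure Sys (u v : Fin 3 → E3 → ℝ) (pr θ : E3 → ℝ) : Prop where
  su : ∀ i, Sm (u i)
  sv : ∀ i, Sm (v i)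
  sp : Sm pr
  st : Sm θ
  eu : ∀ x i, lap3 (u i) x = (∑ j, u j x * pd3 j (u i) x) + pd3 i pr x +
    ∑ j, (pd3 j (v j) x * v i x + v j x * pd3 j (v i) x)
  ev : ∀ x i, lap3 (v i) x = (∑ j, u j x * pd3 j (v i) x) + pd3 i θ x + ∑ j, v j x * pd3 j (u i) x
  et : ∀ x, lap3 θ x = (∑ j, u j x * pd3 j θ x) + ∑ j, pd3 j (v j) x
  du : ∀ x, ∑ j, pd3 j (u j) x = 0

/-- The components of a smooth solution; the divergence `∂_j (v_j v_i)` is expanded by the product rule. -/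
lemma Sys.of_sol {u v : E3 → E3} {pr θ : E3 → ℝ} (h : IsTCMSolution u pr v θ) :
    Sys (fun i y => u y i) (fun i y => v y i) pr θ where
  su := comp_sm h.smooth_u
  sv := comp_sm h.smooth_v
  sp := h.smooth_pr
  st := h.smooth_θ
  eu := fun x i => by
    have := h.eq_u x i
    simp only [pd3_mul (comp_sm h.smooth_v _) (comp_sm h.smooth_v _)] at this
    linarith
  ev := fun x i => by have := h.eq_v x i; linarith
  et := fun x => by have := h.eq_θ x; linarith
  du := h.div_u

/-- The system only involves derivatives of the temperature, so constants may be subtracted from it. -/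
lemma Sys.shift {u v : Fin 3 → E3 → ℝ} {pr θ : E3 → ℝ} (h : Sys u v pr θ) (c : ℝ) :
    Sys u v pr (fun x => θ x - c) where
  su := h.su
  sv := h.sv
  sp := h.sp
  st := h.st.sub (Sm.const c)
  eu := h.eu
  ev := fun x i => by rw [pd3_sub_const]; exact h.ev x i
  et := fun x => by
    have := h.et x
    simp only [lap3, pd3_sub_const] at this ⊢
    exact this
  du := h.du

/-- The dissipation density `|∇u|² + |∇v|² + |∇θ|²`. -/
def en (u v : Fin 3 → E3 → ℝ) (θ : E3 → ℝ) (x : E3) : ℝ :=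
  (∑ i, gr (u i) x ^ 2) + (∑ i, gr (v i) x ^ 2) + gr θ x ^ 2

/-- The energy density. -/
def Qd (u v : Fin 3 → E3 → ℝ) (θ : E3 → ℝ) (x : E3) : ℝ :=
  (∑ i, (u i x * u i x + v i x * v i x)) + θ x * θ x

/-- The `j`-th component of the energy flux, without viscous and pressure parts. -/
def Wd (u v : Fin 3 → E3 → ℝ) (θ : E3 → ℝ) (j : Fin 3) (x : E3) : ℝ :=
  1 / 2 * (u j x * Qd u v θ x) + v j x * (∑ i, v i x * u i x) + θ x * v j x

variable {u v : Fin 3 → E3 → ℝ} {pr θ : E3 → ℝ}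

lemma Sys.sQ (h : Sys u v pr θ) : Sm (Qd u v θ) :=
  (Sm.sum fun i _ => ((h.su i).mul (h.su i)).add ((h.sv i).mul (h.sv i))).add (h.st.mul h.st)

lemma Sys.sS (h : Sys u v pr θ) : Sm fun x => ∑ i, v i x * u i x :=
  Sm.sum fun i _ => (h.sv i).mul (h.su i)

lemma Sys.sW (h : Sys u v pr θ) (j : Fin 3) : Sm (Wd u v θ j) :=
  (((Sm.const (1 / 2)).mul ((h.su j).mul h.sQ)).add ((h.sv j).mul h.sS)).add (h.st.mul (h.sv j))

lemma Sys.pdQ (h : Sys u v pr θ) (j : Fin 3) (x : E3) : pd3 j (Qd u v θ) x =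
    2 * ((∑ i, (u i x * pd3 j (u i) x + v i x * pd3 j (v i) x)) + θ x * pd3 j θ x) := by
  have s1 : ∀ i ∈ (Finset.univ : Finset (Fin 3)), Sm fun x => u i x * u i x + v i x * v i x :=
    fun i _ => ((h.su i).mul (h.su i)).add ((h.sv i).mul (h.sv i))
  change pd3 j (fun x => (∑ i, (u i x * u i x + v i x * v i x)) + θ x * θ x) x = _
  rw [pd3_add (Sm.sum s1) (h.st.mul h.st), pd3_sum s1, pd3_mul h.st h.st]
  have : ∀ i, pd3 j (fun x => u i x * u i x + v i x * v i x) x =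
      2 * (u i x * pd3 j (u i) x + v i x * pd3 j (v i) x) := fun i => by
    rw [pd3_add ((h.su i).mul (h.su i)) ((h.sv i).mul (h.sv i)), pd3_mul (h.su i) (h.su i),
      pd3_mul (h.sv i) (h.sv i)]
    ring
  simp only [this, ← Finset.mul_sum]
  ring

lemma Sys.pdpdQ (h : Sys u v pr θ) (j : Fin 3) (x : E3) : pd3 j (pd3 j (Qd u v θ)) x =
    2 * ((∑ i, (pd3 j (u i) x ^ 2 + u i x * pd3 j (pd3 j (u i)) x +
      (pd3 j (v i) x ^ 2 + v i x * pd3 j (pd3 j (v i)) x))) +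
      (pd3 j θ x ^ 2 + θ x * pd3 j (pd3 j θ) x)) := by
  have s1 : ∀ i ∈ (Finset.univ : Finset (Fin 3)),
      Sm fun x => u i x * pd3 j (u i) x + v i x * pd3 j (v i) x :=
    fun i _ => ((h.su i).mul ((h.su i).pd j)).add ((h.sv i).mul ((h.sv i).pd j))
  rw [show pd3 j (Qd u v θ) = _ from funext (h.pdQ j)]
  have s2 := (Sm.sum s1).add (h.st.mul (h.st.pd j))
  have z : pd3 j (fun _ : E3 => (2:ℝ)) x = 0 := by simp [pd3]
  rw [pd3_mul (Sm.const 2) s2, z, zero_mul, zero_add, pd3_add (Sm.sum s1) (h.st.mul (h.st.pd j)),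
    pd3_sum s1, pd3_mul h.st (h.st.pd j)]
  have : ∀ i, pd3 j (fun x => u i x * pd3 j (u i) x + v i x * pd3 j (v i) x) x =
      pd3 j (u i) x ^ 2 + u i x * pd3 j (pd3 j (u i)) x +
      (pd3 j (v i) x ^ 2 + v i x * pd3 j (pd3 j (v i)) x) := fun i => by
    rw [pd3_add ((h.su i).mul ((h.su i).pd j)) ((h.sv i).mul ((h.sv i).pd j)),
      pd3_mul (h.su i) ((h.su i).pd j), pd3_mul (h.sv i) ((h.sv i).pd j)]
    ring
  simp only [this]
  ring

lemma Sys.pdS (h : Sys u v pr θ) (j : Fin 3) (x : E3) : pd3 j (fun x => ∑ i, v i x * u i x) x =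
    ∑ i, (pd3 j (v i) x * u i x + v i x * pd3 j (u i) x) := by
  rw [pd3_sum fun i _ => (h.sv i).mul (h.su i)]
  exact Finset.sum_congr rfl fun i _ => pd3_mul (h.sv i) (h.su i) j x

lemma Sys.pdW (h : Sys u v pr θ) (j : Fin 3) (x : E3) : pd3 j (Wd u v θ j) x =
    1 / 2 * (pd3 j (u j) x * Qd u v θ x + u j x * pd3 j (Qd u v θ) x) +
    (pd3 j (v j) x * (∑ i, v i x * u i x) +
      v j x * ∑ i, (pd3 j (v i) x * u i x + v i x * pd3 j (u i) x)) +
    (pd3 j θ x * v j x + θ x * pd3 j (v j) x) := by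
  have z : pd3 j (fun _ : E3 => (1 / 2:ℝ)) x = 0 := by simp [pd3]
  have s1 := (Sm.const (1 / 2)).mul ((h.su j).mul h.sQ)
  have s2 := (h.sv j).mul h.sS
  have s3 := h.st.mul (h.sv j)
  change pd3 j (fun x => 1 / 2 * (u j x * Qd u v θ x) + v j x * (∑ i, v i x * u i x) + θ x * v j x) x
    = _
  rw [pd3_add (s1.add s2) s3, pd3_add s1 s2, pd3_mul (Sm.const (1 / 2)) ((h.su j).mul h.sQ), z,
    zero_mul, zero_add, pd3_mul (h.su j) h.sQ, pd3_mul (h.sv j) h.sS, h.pdS, pd3_mul h.st (h.sv j)]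

/-- The local energy balance. -/
lemma Sys.balance (h : Sys u v pr θ) (x : E3) : en u v θ x =
    ∑ j, (1 / 2 * pd3 j (pd3 j (Qd u v θ)) x - (pd3 j (Wd u v θ j) x +
      pd3 j (fun y => pr y * u j y) x)) := by
  simp only [en, gr_sq, h.pdpdQ, h.pdW, h.pdQ, pd3_mul h.sp (h.su _), Fin.sum_univ_three]
  have e0 := h.eu x 0
  have e1 := h.eu x 1
  have e2 := h.eu x 2
  have f0 := h.ev x 0
  have f1 := h.ev x 1
  have f2 := h.ev x 2
  have t := h.et x
  have d := h.du x
  simp only [lap3, Fin.sum_univ_three] at e0 e1 e2 f0 f1 f2 t d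
  linear_combination (-u 0 x) * e0 - u 1 x * e1 - u 2 x * e2 - v 0 x * f0 - v 1 x * f1 - v 2 x * f2
    - θ x * t + (1 / 2 * Qd u v θ x + pr x) * d

lemma sm_int {f g : E3 → ℝ} (hf : Continuous f) (hg : Continuous g) (hc : HasCompactSupport g) :
    Integrable fun x => f x * g x :=
  (hf.mul hg).integrable_of_hasCompactSupport hc.mul_left

/-- The local energy identity tested with `φ`. -/
lemma Sys.energy (h : Sys u v pr θ) {φ : E3 → ℝ} (hφ : Sm φ) (hc : HasCompactSupport φ) :
    ∫ x, en u v θ x * φ x = (∑ j, (1 / 2 * ∫ x, Qd u v θ x * pd3 j (pd3 j φ) x)) +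
      (∑ j, ∫ x, Wd u v θ j x * pd3 j φ x) + ∑ j, ∫ x, pr x * (u j x * pd3 j φ x) := by
  have I1 : ∀ j, Integrable fun x => pd3 j (pd3 j (Qd u v θ)) x * φ x := fun j =>
    sm_int ((h.sQ.pd j).pd j).cont hφ.cont hc
  have I2 : ∀ j, Integrable fun x => pd3 j (Wd u v θ j) x * φ x := fun j =>
    sm_int ((h.sW j).pd j).cont hφ.cont hc
  have sπ : ∀ j, Sm fun y => pr y * u j y := fun j => h.sp.mul (h.su j)
  have I3 : ∀ j, Integrable fun x => pd3 j (fun y => pr y * u j y) x * φ x := fun j =>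
    sm_int ((sπ j).pd j).cont hφ.cont hc
  have I1' : ∀ j, Integrable fun x => 1 / 2 * (pd3 j (pd3 j (Qd u v θ)) x * φ x) := fun j =>
    (I1 j).const_mul _
  have I4 : ∀ j, Integrable fun x =>
      pd3 j (Wd u v θ j) x * φ x + pd3 j (fun y => pr y * u j y) x * φ x := fun j =>
    (I2 j).add (I3 j)
  have I5 : ∀ j, Integrable fun x => 1 / 2 * (pd3 j (pd3 j (Qd u v θ)) x * φ x) -
      (pd3 j (Wd u v θ j) x * φ x + pd3 j (fun y => pr y * u j y) x * φ x) := fun j =>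
    (I1' j).sub (I4 j)
  have e : ∀ x, en u v θ x * φ x = ∑ j, (1 / 2 * (pd3 j (pd3 j (Qd u v θ)) x * φ x) -
      (pd3 j (Wd u v θ j) x * φ x + pd3 j (fun y => pr y * u j y) x * φ x)) := fun x => by
    rw [h.balance x, Finset.sum_mul]
    exact Finset.sum_congr rfl fun j _ => by ring
  simp_rw [e]
  rw [integral_finsetSum _ fun j _ => I5 j,
    ← Finset.sum_add_distrib, ← Finset.sum_add_distrib]
  refine Finset.sum_congr rfl fun j _ => ?_
  rw [integral_sub (I1' j) (I4 j), integral_const_mul,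
    integral_add (I2 j) (I3 j), ibp (h.sQ.pd j) hφ hc, ibp h.sQ (hφ.pd j) (hcs_pd hc j),
    ibp (h.sW j) hφ hc, ibp (sπ j) hφ hc]
  simp only [mul_assoc]
  ring

end TCM

namespace TCM

/-! ### Functionals with a scaled kernel -/

lemma pd3_off {K : Set E3} (hK : IsClosed K) {w : E3 → ℝ} (h : ∀ x, x ∉ K → w x = 0) (j : Fin 3)
    {x : E3} (hx : x ∉ K) : pd3 j w x = 0 := by
  have e : w =ᶠ[nhds x] fun _ => 0 := by
    filter_upwards [hK.isOpen_compl.mem_nhds hx] with y hy using h y hy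
  rw [pd3, e.fderiv_eq]
  simp

lemma hcs_of_off {K : Set E3} (hK : IsCompact K) {w : E3 → ℝ} (h : ∀ x, x ∉ K → w x = 0) :
    HasCompactSupport w := HasCompactSupport.intro hK h

/-- Integration by parts over the unit ball, trading a derivative for a factor `s⁻¹`. -/
lemma ibp_z {f w : E3 → ℝ} (hf : Sm f) (hw : Sm w) (h : ∀ z, z ∉ B1 → w z = 0) {s : ℝ} (hs : 0 < s)
    (x : E3) (j : Fin 3) :
    ∫ z in B1, w z * pd3 j f (x - s • z) = s⁻¹ * ∫ z in B1, pd3 j w z * f (x - s • z) := by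
  have cB : IsClosed B1 := B1_compact.isClosed
  rw [setIntegral_eq_integral_of_forall_compl_eq_zero (fun z hz => by rw [h z hz, zero_mul]),
    setIntegral_eq_integral_of_forall_compl_eq_zero
      (fun z hz => by rw [pd3_off cB h j hz, zero_mul])]
  have sf : Sm fun z => f (x - s • z) := hf.comp (by fun_prop)
  have e := ibp sf hw (hcs_of_off B1_compact h) j
  simp only [pd3_comp_z hf] at e
  have e1 : ∫ z, -s * pd3 j f (x - s • z) * w z = -s * ∫ z, w z * pd3 j f (x - s • z) := by
    rw [← integral_const_mul]
    exact integral_congr_ae (ae_of_all _ fun z => by simp only; ring)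
  have e2 : ∫ z, f (x - s • z) * pd3 j w z = ∫ z, pd3 j w z * f (x - s • z) :=
    integral_congr_ae (ae_of_all _ fun z => by simp only; ring)
  rw [e1, e2] at e
  rw [← neg_eq_iff_eq_neg] at e
  rw [← e]
  field_simp

/-- The kernel functional `∫_A ∫_{B₁} g(x) w(z) f(x - s z)`. -/
def Kf (A : Set E3) (g w f : E3 → ℝ) (s : ℝ) : ℝ :=
  ∫ y in A ×ˢ B1, g y.1 * (w y.2 * f (y.1 - s • y.2))

lemma Kf_cont {g w f : E3 → ℝ} (hg : Continuous g) (hw : Continuous w) (hf : Continuous f) (s : ℝ) :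
    Continuous fun y : E3 × E3 => g y.1 * (w y.2 * f (y.1 - s • y.2)) :=
  (hg.comp continuous_fst).mul ((hw.comp continuous_snd).mul
    (hf.comp (by fun_prop : Continuous fun y : E3 × E3 => y.1 - s • y.2)))

lemma Kf_bound {A A' : Set E3} (hA : IsCompact A) (hA' : IsCompact A') {g w f : E3 → ℝ}
    (hg : Continuous g) (hw : Continuous w) (hf : Continuous f) {W : ℝ} (hW : ∀ z, |w z| ≤ W)
    {a b : ℝ} (ha : 1 ≤ a) (hb : 1 ≤ b) (hab : 1 ≤ 1 / a + 1 / b) {s : ℝ} (hs : 0 < s)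
    (h : ∀ x ∈ A, ∀ z ∈ B1, x - s • z ∈ A') :
    |Kf A g w f s| ≤ W * ((1 + volume.real B1) ^ (2:ℝ) * s ^ (-3 * (1 / a + 1 / b - 1)) *
      (nr a g A * nr b f A')) := by
  have W0 : 0 ≤ W := (abs_nonneg _).trans (hW 0)
  have c2 : Continuous fun y : E3 × E3 => W * (|g y.1| * |f (y.1 - s • y.2)|) :=
    continuous_const.mul ((hg.comp continuous_fst).abs.mul
      (hf.comp (by fun_prop : Continuous fun y : E3 × E3 => y.1 - s • y.2)).abs)
  have k := hA.prod B1_compact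
  refine abs_integral_le_integral_abs.trans ?_
  refine (integral_mono ((Kf_cont hg hw hf s).abs.continuousOn.integrableOn_compact k)
    (c2.continuousOn.integrableOn_compact k) fun y => ?_).trans ?_
  · simp only [abs_mul]
    rw [mul_left_comm]
    gcongr
    exact hW _
  · rw [integral_const_mul]
    exact mul_le_mul_of_nonneg_left (young hA hA' hg hf ha hb hab hs h) W0

/-- Moving a derivative from `f` to `g`. -/
lemma Kf_ibp_x {A : Set E3} (hA : IsCompact A) {g w f : E3 → ℝ} (hg : Sm g) (hw : Continuous w)
    (hf : Sm f) (h : ∀ x, x ∉ A → g x = 0) (j : Fin 3) (s : ℝ) :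
    Kf A g w (pd3 j f) s = -Kf A (pd3 j g) w f s := by
  have k1 := Kf_cont hg.cont hw (hf.pd j).cont s
  have k2 := Kf_cont (hg.pd j).cont hw hf.cont s
  rw [Kf, Kf, fubini_symm hA B1_compact k1, fubini_symm hA B1_compact k2, ← integral_neg]
  refine integral_congr_ae (ae_of_all _ fun z => ?_)
  simp only
  rw [setIntegral_eq_integral_of_forall_compl_eq_zero (fun x hx => by rw [h x hx, zero_mul]),
    setIntegral_eq_integral_of_forall_compl_eq_zero
      (fun x hx => by rw [pd3_off hA.isClosed h j hx, zero_mul])]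
  have sf : Sm fun x => f (x - s • z) := hf.comp (by fun_prop)
  have e := ibp sf hg (hcs_of_off hA h) j
  simp only [pd3_comp_x] at e
  have e1 : ∫ x, g x * (w z * pd3 j f (x - s • z)) = w z * ∫ x, pd3 j f (x - s • z) * g x := by
    rw [← integral_const_mul]
    exact integral_congr_ae (ae_of_all _ fun x => by simp only; ring)
  have e2 : ∫ x, pd3 j g x * (w z * f (x - s • z)) = w z * ∫ x, f (x - s • z) * pd3 j g x := by
    rw [← integral_const_mul]
    exact integral_congr_ae (ae_of_all _ fun x => by simp only; ring)
  rw [e1, e2, e]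
  ring

/-- Moving a derivative from `f` to the kernel. -/
lemma Kf_ibp_z {A : Set E3} (hA : IsCompact A) {g w f : E3 → ℝ} (hg : Continuous g) (hw : Sm w)
    (hf : Sm f) (h : ∀ z, z ∉ B1 → w z = 0) (j : Fin 3) {s : ℝ} (hs : 0 < s) :
    Kf A g w (pd3 j f) s = s⁻¹ * Kf A g (pd3 j w) f s := by
  have k1 := Kf_cont hg hw.cont (hf.pd j).cont s
  have k2 := Kf_cont hg (hw.pd j).cont hf.cont s
  rw [Kf, Kf, fubini hA B1_compact k1, fubini hA B1_compact k2, ← integral_const_mul]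
  refine integral_congr_ae (ae_of_all _ fun x => ?_)
  simp only
  rw [integral_const_mul, integral_const_mul, ibp_z hf hw h hs]
  ring

lemma mol_zero (f : E3 → ℝ) (x : E3) : mol 0 f x = f x := by
  simp only [mol, zero_smul, sub_zero]
  rw [integral_mul_const, eta_int, one_mul]

/-- The first-moment kernels `z_i η(z)`. -/
def wk (i : Fin 3) (z : E3) : ℝ := eta z * z i

lemma wk_sm (i : Fin 3) : Sm (wk i) := eta_sm.mul (by
  show ContDiff ℝ _ fun z : E3 => z i
  fun_prop)

lemma wk_off (i : Fin 3) (z : E3) (hz : z ∉ B1) : wk i z = 0 := by rw [wk, eta_off hz, zero_mul]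

lemma bdd_off {w : E3 → ℝ} (hw : Continuous w) (h : ∀ z, z ∉ B1 → w z = 0) :
    ∃ W, 0 ≤ W ∧ ∀ z, |w z| ≤ W := by
  obtain ⟨C, hC⟩ := B1_compact.exists_bound_of_continuousOn hw.continuousOn
  refine ⟨max C 0, le_max_right _ _, fun z => ?_⟩
  by_cases hz : z ∈ B1
  · exact (hC z hz).trans (le_max_left _ _)
  · rw [h z hz, abs_zero]; exact le_max_right _ _

/-- A common bound for all kernels in use. -/
lemma kernels_bdd : ∃ W, 0 ≤ W ∧ (∀ i z, |wk i z| ≤ W) ∧ (∀ i j z, |pd3 j (wk i) z| ≤ W) ∧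
    (∀ j z, |pd3 j eta z| ≤ W) ∧ (∀ j z, |pd3 j (pd3 j eta) z| ≤ W) := by
  have cB : IsClosed B1 := B1_compact.isClosed
  have o1 : ∀ j z, z ∉ B1 → pd3 j eta z = 0 := fun j z hz => pd3_off cB (fun y hy => eta_off hy) j hz
  choose W1 p1 h1 using fun i => bdd_off (wk_sm i).cont (wk_off i)
  choose W2 p2 h2 using fun i j => bdd_off ((wk_sm i).pd j).cont
    (fun z hz => pd3_off cB (wk_off i) j hz)
  choose W3 p3 h3 using fun j => bdd_off (eta_sm.pd j).cont (o1 j)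
  choose W4 p4 h4 using fun j => bdd_off ((eta_sm.pd j).pd j).cont
    (fun z hz => pd3_off cB (o1 j) j hz)
  have n1 : 0 ≤ ∑ i, W1 i := Finset.sum_nonneg fun i _ => p1 i
  have n2 : 0 ≤ ∑ i, ∑ j, W2 i j := Finset.sum_nonneg fun i _ => Finset.sum_nonneg fun j _ => p2 i j
  have n3 : 0 ≤ ∑ i, W3 i := Finset.sum_nonneg fun i _ => p3 i
  have n4 : 0 ≤ ∑ i, W4 i := Finset.sum_nonneg fun i _ => p4 i
  refine ⟨∑ i, W1 i + ∑ i, ∑ j, W2 i j + ∑ i, W3 i + ∑ i, W4 i, by positivity, ?_, ?_, ?_, ?_⟩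
  · intro i z
    have := Finset.single_le_sum (fun i _ => p1 i) (Finset.mem_univ i)
    have := h1 i z
    linarith
  · intro i j z
    have a := Finset.single_le_sum (fun j _ => p2 i j) (Finset.mem_univ j)
    have b := Finset.single_le_sum (f := fun i => ∑ j, W2 i j)
      (fun i _ => Finset.sum_nonneg fun j _ => p2 i j) (Finset.mem_univ i)
    have := h2 i j z
    linarith
  · intro i z
    have := Finset.single_le_sum (fun i _ => p3 i) (Finset.mem_univ i)
    have := h3 i z
    linarith
  · intro i z
    have := Finset.single_le_sum (fun i _ => p4 i) (Finset.mem_univ i)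
    have := h4 i z
    linarith

/-- Differentiating a mollification with respect to the scale. -/
lemma mol_repr {A : Set E3} (hA : IsCompact A) {g f : E3 → ℝ} (hg : Continuous g) (hf : Sm f)
    {a b : ℝ} (hab : a ≤ b) :
    ∫ x in A, g x * (mol a f x - mol b f x) =
      ∫ s in a..b, ∑ i, Kf A g (wk i) (pd3 i f) s := by
  have cJ : Continuous fun y : (E3 × E3) × ℝ =>
      ∑ i, g y.1.1 * (wk i y.1.2 * pd3 i f (y.1.1 - y.2 • y.1.2)) := by
    refine continuous_finsetSum _ fun i _ => ?_
    have q1 : Continuous fun y : (E3 × E3) × ℝ => g y.1.1 :=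
      hg.comp (by fun_prop : Continuous fun y : (E3 × E3) × ℝ => y.1.1)
    have q2 : Continuous fun y : (E3 × E3) × ℝ => wk i y.1.2 :=
      (wk_sm i).cont.comp (by fun_prop : Continuous fun y : (E3 × E3) × ℝ => y.1.2)
    have q3 : Continuous fun y : (E3 × E3) × ℝ => pd3 i f (y.1.1 - y.2 • y.1.2) :=
      (hf.pd i).cont.comp (by fun_prop : Continuous fun y : (E3 × E3) × ℝ => y.1.1 - y.2 • y.1.2)
    exact q1.mul (q2.mul q3)
  have k := hA.prod B1_compact
  have l1 : ∀ s, ∑ i, Kf A g (wk i) (pd3 i f) s =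
      ∫ y in A ×ˢ B1, ∑ i, g y.1 * (wk i y.2 * pd3 i f (y.1 - s • y.2)) := by
    intro s
    rw [integral_finsetSum]
    · rfl
    · intro i _
      exact (Kf_cont hg (wk_sm i).cont (hf.pd i).cont s).continuousOn.integrableOn_compact k
  have l2 : ∫ s in a..b, ∑ i, Kf A g (wk i) (pd3 i f) s =
      ∫ y in A ×ˢ B1, ∫ s in a..b, ∑ i, g y.1 * (wk i y.2 * pd3 i f (y.1 - s • y.2)) := by
    simp only [l1, intervalIntegral.integral_of_le hab]
    rw [← integral_Icc_eq_integral_Ioc]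
    simp only [← integral_Icc_eq_integral_Ioc]
    refine (integral_integral_swap ?_).symm
    rw [Measure.prod_restrict]
    exact cJ.continuousOn.integrableOn_compact (k.prod isCompact_Icc)
  have l3 : ∀ y : E3 × E3, ∫ s in a..b, ∑ i, g y.1 * (wk i y.2 * pd3 i f (y.1 - s • y.2)) =
      g y.1 * (eta y.2 * (f (y.1 - a • y.2) - f (y.1 - b • y.2))) := by
    intro y
    have c : Continuous fun t : ℝ => -(fderiv ℝ f (y.1 - t • y.2) y.2) :=
      ((hf.fderiv.continuous.comp (by fun_prop : Continuous fun t : ℝ => y.1 - t • y.2)).clm_apply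
        continuous_const).neg
    have := intervalIntegral.integral_eq_sub_of_hasDerivAt (a := a) (b := b)
      (fun t _ => hasDerivAt_line hf y.1 y.2 t) (c.intervalIntegrable a b)
    rw [intervalIntegral.integral_neg] at this
    have e : ∀ s : ℝ, ∑ i, g y.1 * (wk i y.2 * pd3 i f (y.1 - s • y.2)) =
        g y.1 * eta y.2 * fderiv ℝ f (y.1 - s • y.2) y.2 := by
      intro s
      rw [fderiv_eq_sum, Finset.mul_sum]
      refine Finset.sum_congr rfl fun i _ => ?_
      rw [wk]; ring
    simp only [e]
    rw [intervalIntegral.integral_const_mul]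
    rw [show f (y.1 - a • y.2) - f (y.1 - b • y.2) =
      ∫ s in a..b, fderiv ℝ f (y.1 - s • y.2) y.2 by linarith]
    ring
  rw [l2]
  simp only [l3]
  have c4 : Continuous fun y : E3 × E3 =>
      g y.1 * (eta y.2 * (f (y.1 - a • y.2) - f (y.1 - b • y.2))) :=
    (hg.comp continuous_fst).mul ((eta_sm.cont.comp continuous_snd).mul
      ((hf.cont.comp (by fun_prop : Continuous fun y : E3 × E3 => y.1 - a • y.2)).sub
        (hf.cont.comp (by fun_prop : Continuous fun y : E3 × E3 => y.1 - b • y.2))))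
  rw [fubini hA B1_compact c4]
  refine integral_congr_ae (ae_of_all _ fun x => ?_)
  simp only [mul_sub]
  have i1 : ∀ s : ℝ, IntegrableOn (fun z => g x * (eta z * f (x - s • z))) B1 := fun s =>
    intOn (continuous_const.mul (eta_sm.cont.mul (cont_shift hf.cont x s))) B1_compact
  rw [integral_sub (i1 a) (i1 b), integral_const_mul, integral_const_mul]
  rfl

end TCM

namespace TCM

/-! ### The abstract pressure estimate -/

/-- The setting of the pressure estimate: `∇pr = div (∇U - F)`, tested against a function `g` supported in
the shell `An a b`, with all translations by at most `l` staying in `A'`. -/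
structure Pres (a b l : ℝ) (A' : Set E3) (U : Fin 3 → E3 → ℝ) (F : Fin 3 → Fin 3 → E3 → ℝ)
    (pr g : E3 → ℝ) : Prop where
  a0 : 0 < a
  ab : a ≤ b
  kA : IsCompact A'
  sU : ∀ i, Sm (U i)
  sF : ∀ i j, Sm (F i j)
  sp : Sm pr
  sg : Sm g
  eq : ∀ i x, pd3 i pr x = (∑ j, pd3 j (pd3 j (U i)) x) - ∑ j, pd3 j (F i j) x
  off : ∀ x, x ∉ An a b → g x = 0
  sh : ∀ x ∈ An a b, ∀ z ∈ B1, ∀ s, 0 ≤ s → s ≤ l → x - s • z ∈ A'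

variable {a b l : ℝ} {A' : Set E3} {U : Fin 3 → E3 → ℝ} {F : Fin 3 → Fin 3 → E3 → ℝ}
    {pr g : E3 → ℝ}

/-- The divergence `∑_j ∂_j F_ij` of the stress tensor. -/
def dv (F : Fin 3 → Fin 3 → E3 → ℝ) (i : Fin 3) (x : E3) : ℝ := ∑ j, pd3 j (F i j) x

lemma Pres.sdv (h : Pres a b l A' U F pr g) (i : Fin 3) : Sm (dv F i) :=
  Sm.sum fun j _ => (h.sF i j).pd j

lemma Kf_sum {A : Set E3} (hA : IsCompact A) {g w : E3 → ℝ} {f : Fin 3 → E3 → ℝ}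
    (hg : Continuous g) (hw : Continuous w) (hf : ∀ j, Continuous (f j)) (s : ℝ) :
    Kf A g w (fun x => ∑ j, f j x) s = ∑ j, Kf A g w (f j) s := by
  simp only [Kf]
  rw [← integral_finsetSum]
  · refine integral_congr_ae (ae_of_all _ fun y => ?_)
    simp only [Finset.mul_sum]
  · intro j _
    exact (Kf_cont hg hw (hf j) s).continuousOn.integrableOn_compact (hA.prod B1_compact)

lemma Kf_sub {A : Set E3} (hA : IsCompact A) {g w f f' : E3 → ℝ}
    (hg : Continuous g) (hw : Continuous w) (hf : Continuous f) (hf' : Continuous f') (s : ℝ) :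
    Kf A g w (fun x => f x - f' x) s = Kf A g w f s - Kf A g w f' s := by
  simp only [Kf]
  rw [← integral_sub]
  · refine integral_congr_ae (ae_of_all _ fun y => ?_)
    simp only
    ring
  · exact (Kf_cont hg hw hf s).continuousOn.integrableOn_compact (hA.prod B1_compact)
  · exact (Kf_cont hg hw hf' s).continuousOn.integrableOn_compact (hA.prod B1_compact)

/-- The pressure equation inserted in the kernel functional, with one derivative moved from `∇U` to
the test function. -/
lemma Pres.split (h : Pres a b l A' U F pr g) (i : Fin 3) (s : ℝ) :
    Kf (An a b) g (wk i) (pd3 i pr) s =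
      (∑ j, -Kf (An a b) (pd3 j g) (wk i) (pd3 j (U i)) s) - Kf (An a b) g (wk i) (dv F i) s := by
  have e : pd3 i pr = fun x => (∑ j, pd3 j (pd3 j (U i)) x) - dv F i x := funext fun x => h.eq i x
  have c : Continuous fun x => ∑ j, pd3 j (pd3 j (U i)) x :=
    continuous_finsetSum _ fun j _ => (((h.sU i).pd j).pd j).cont
  rw [e, Kf_sub (An_compact a b) h.sg.cont (wk_sm i).cont c (h.sdv i).cont,
    Kf_sum (An_compact a b) h.sg.cont (wk_sm i).cont fun j => (((h.sU i).pd j).pd j).cont]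
  congr 1
  exact Finset.sum_congr rfl fun j _ =>
    Kf_ibp_x (An_compact a b) h.sg (wk_sm i).cont ((h.sU i).pd j) h.off j s

lemma abs_sum3 {f : Fin 3 → ℝ} {B : ℝ} (h : ∀ i, |f i| ≤ B) : |∑ i, f i| ≤ 3 * B := by
  refine (Finset.abs_sum_le_sum_abs _ _).trans ((Finset.sum_le_sum fun i _ => h i).trans ?_)
  simp

/-- Scale-by-scale bounds for the derivative of the mollified pressure. -/
lemma Pres.scale : ∃ C, 0 ≤ C ∧ ∀ {a b l : ℝ} {A' : Set E3} {U : Fin 3 → E3 → ℝ}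
    {F : Fin 3 → Fin 3 → E3 → ℝ} {pr g : E3 → ℝ}, Pres a b l A' U F pr g →
    ∀ {D Γ N P Fh p t2 : ℝ}, 1 ≤ p → p ≤ 3 → 1 ≤ t2 → 1 ≤ 1 / p + 1 / t2 →
    (∀ i j, nr 2 (pd3 j (U i)) A' ≤ D) → (∀ j, nr 2 (pd3 j g) (An a b) ≤ Γ) →
    (∀ i, nr (3/2) (dv F i) A' ≤ N) → (∀ i j, nr t2 (F i j) A' ≤ Fh) → nr p g (An a b) ≤ P →
    ∀ s, 0 < s → s ≤ l →
      |∑ i, Kf (An a b) g (wk i) (pd3 i pr) s| ≤ C * (D * Γ) + C * (P * N) * s ^ (1 - 3 / p) ∧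
      |∑ i, Kf (An a b) g (wk i) (pd3 i pr) s| ≤
        C * (D * Γ) + C * (P * Fh) * s ^ (-1 - 3 * (1 / p + 1 / t2 - 1)) := by
  obtain ⟨W, W0, w1, w2, -, -⟩ := kernels_bdd
  set V : ℝ := W * (1 + volume.real B1) ^ (2:ℝ) with hV
  have V0 : 0 ≤ V := by positivity
  refine ⟨9 * V, by positivity, ?_⟩
  intro a b l A' U F pr g h D Γ N P Fh p t2 p1 p3 ht2 hpt hD hΓ hN hF hP s s0 sl
  have kA := An_compact a b
  have hs : ∀ x ∈ An a b, ∀ z ∈ B1, x - s • z ∈ A' := fun x hx z hz => h.sh x hx z hz s s0.le sl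
  have D0 : 0 ≤ D := (nr_nonneg _ _ _).trans (hD 0 0)
  have Γ0 : 0 ≤ Γ := (nr_nonneg _ _ _).trans (hΓ 0)
  have N0 : 0 ≤ N := (nr_nonneg _ _ _).trans (hN 0)
  have F0 : 0 ≤ Fh := (nr_nonneg _ _ _).trans (hF 0 0)
  have P0 : 0 ≤ P := (nr_nonneg _ _ _).trans hP
  have vis : ∀ i, |∑ j, -Kf (An a b) (pd3 j g) (wk i) (pd3 j (U i)) s| ≤ 3 * (V * (D * Γ)) := by
    intro i
    refine abs_sum3 fun j => ?_
    rw [abs_neg]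
    refine (Kf_bound kA h.kA (h.sg.pd j).cont (wk_sm i).cont ((h.sU i).pd j).cont (w1 i)
      one_le_two one_le_two (by norm_num) s0 hs).trans ?_
    rw [show -3 * ((1:ℝ) / 2 + 1 / 2 - 1) = 0 by norm_num, Real.rpow_zero, mul_one, ← mul_assoc, ← hV,
      mul_comm D]
    exact mul_le_mul_of_nonneg_left (mul_le_mul (hΓ j) (hD i j) (nr_nonneg _ _ _) Γ0) V0
  have near : ∀ i, |Kf (An a b) g (wk i) (dv F i) s| ≤ V * (P * N) * s ^ (1 - 3 / p) := by
    intro i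
    have hp : 1 / 3 ≤ 1 / p := one_div_le_one_div_of_le (by linarith) p3
    refine (Kf_bound kA h.kA h.sg.cont (wk_sm i).cont (h.sdv i).cont (w1 i)
      p1 (by norm_num : (1:ℝ) ≤ 3 / 2) (by norm_num at hp ⊢; linarith) s0 hs).trans ?_
    rw [show -3 * ((1:ℝ) / p + 1 / (3 / 2) - 1) = 1 - 3 / p by ring]
    have : nr p g (An a b) * nr (3/2) (dv F i) A' ≤ P * N :=
      mul_le_mul hP (hN i) (nr_nonneg _ _ _) P0
    calc _ = V * s ^ (1 - 3 / p) * (nr p g (An a b) * nr (3/2) (dv F i) A') := by rw [hV]; ring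
      _ ≤ V * s ^ (1 - 3 / p) * (P * N) := mul_le_mul_of_nonneg_left this (by positivity)
      _ = _ := by ring
  have far : ∀ i, |Kf (An a b) g (wk i) (dv F i) s| ≤
      3 * (V * (P * Fh) * s ^ (-1 - 3 * (1 / p + 1 / t2 - 1))) := by
    intro i
    have e : Kf (An a b) g (wk i) (dv F i) s =
        ∑ j, Kf (An a b) g (wk i) (pd3 j (F i j)) s :=
      Kf_sum kA h.sg.cont (wk_sm i).cont (fun j => ((h.sF i j).pd j).cont) s
    rw [e]
    refine abs_sum3 fun j => ?_
    rw [Kf_ibp_z kA h.sg.cont (wk_sm i) (h.sF i j) (wk_off i) j s0, abs_mul,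
      abs_of_pos (inv_pos.2 s0)]
    have k := Kf_bound kA h.kA h.sg.cont ((wk_sm i).pd j).cont (h.sF i j).cont (w2 i j)
      p1 ht2 hpt s0 hs
    have : nr p g (An a b) * nr t2 (F i j) A' ≤ P * Fh :=
      mul_le_mul hP (hF i j) (nr_nonneg _ _ _) P0
    have e2 : s ^ (-1 - 3 * (1 / p + 1 / t2 - 1)) = s⁻¹ * s ^ (-3 * (1 / p + 1 / t2 - 1)) := by
      rw [← Real.rpow_neg_one, ← Real.rpow_add s0]
      congr 1; ring
    calc _ ≤ s⁻¹ * (W * ((1 + volume.real B1) ^ (2:ℝ) * s ^ (-3 * (1 / p + 1 / t2 - 1)) * (P * Fh))) := by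
          refine mul_le_mul_of_nonneg_left (k.trans ?_) (inv_pos.2 s0).le
          gcongr
      _ = _ := by rw [e2, hV]; ring
  have comb : ∀ B, (∀ i, |Kf (An a b) g (wk i) (dv F i) s| ≤ B) →
      |∑ i, Kf (An a b) g (wk i) (pd3 i pr) s| ≤ 3 * (3 * (V * (D * Γ)) + B) := by
    intro B hB
    refine abs_sum3 fun i => ?_
    rw [h.split i s]
    exact (abs_sub _ _).trans (add_le_add (vis i) (hB i))
  constructor
  · refine (comb _ near).trans ?_
    have : 0 ≤ V * (P * N) * s ^ (1 - 3 / p) := by positivity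
    linarith
  · refine (comb _ far).trans (le_of_eq ?_)
    ring

/-- The gradient of the mollified pressure at scale `l`. -/
lemma Pres.molgrad : ∃ C, 0 ≤ C ∧ ∀ {a b l : ℝ} {A' : Set E3} {U : Fin 3 → E3 → ℝ}
    {F : Fin 3 → Fin 3 → E3 → ℝ} {pr g : E3 → ℝ}, Pres a b l A' U F pr g → 0 < l →
    ∀ {U2 Fh t2 : ℝ}, 1 ≤ t2 → (∀ i, nr 2 (U i) A' ≤ U2) → (∀ i j, nr t2 (F i j) A' ≤ Fh) →
    ∀ x ∈ An a b, ∀ i, |mol l (pd3 i pr) x| ≤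
      C * (l ^ (-(7/2) : ℝ) * U2 + l ^ (-1 - 3 / t2) * Fh) := by
  obtain ⟨W, W0, -, -, w3, w4⟩ := kernels_bdd
  set V : ℝ := W * (1 + volume.real B1) with hV
  have V0 : 0 ≤ V := by positivity
  refine ⟨3 * V, by positivity, ?_⟩
  intro a b l A' U F pr g h l0 U2 Fh t2 ht2 hU hF x hx i
  have cB : IsClosed B1 := B1_compact.isClosed
  have o1 : ∀ j z, z ∉ B1 → pd3 j eta z = 0 := fun j z hz => pd3_off cB (fun y hy => eta_off hy) j hz
  have hs : ∀ z ∈ B1, x - l • z ∈ A' := fun z hz => h.sh x hx z hz l l0.le le_rfl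
  have e : mol l (pd3 i pr) x = (∑ j, ∫ z in B1, eta z * pd3 j (pd3 j (U i)) (x - l • z)) -
      ∑ j, ∫ z in B1, eta z * pd3 j (F i j) (x - l • z) := by
    have i1 : ∀ j, IntegrableOn (fun z => eta z * pd3 j (pd3 j (U i)) (x - l • z)) B1 := fun j =>
      intOn (eta_sm.cont.mul (cont_shift (((h.sU i).pd j).pd j).cont x l)) B1_compact
    have i2 : ∀ j, IntegrableOn (fun z => eta z * pd3 j (F i j) (x - l • z)) B1 := fun j =>
      intOn (eta_sm.cont.mul (cont_shift ((h.sF i j).pd j).cont x l)) B1_compact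
    rw [← integral_finsetSum _ fun j _ => i1 j, ← integral_finsetSum _ fun j _ => i2 j,
      ← integral_sub (integrable_finsetSum _ fun j _ => i1 j)
        (integrable_finsetSum _ fun j _ => i2 j)]
    refine integral_congr_ae (ae_of_all _ fun z => ?_)
    simp only
    rw [h.eq, mul_sub, Finset.mul_sum, Finset.mul_sum]
  have b1 : ∀ j, |∫ z in B1, eta z * pd3 j (pd3 j (U i)) (x - l • z)| ≤
      V * (l ^ (-(7/2) : ℝ) * U2) := by
    intro j
    rw [ibp_z ((h.sU i).pd j) eta_sm (fun z hz => eta_off hz) l0,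
      ibp_z (h.sU i) (eta_sm.pd j) (o1 j) l0, ← mul_assoc, abs_mul,
      abs_of_pos (by positivity : 0 < l⁻¹ * l⁻¹)]
    have k := avg_bound h.kA (h.sU i).cont ((eta_sm.pd j).pd j).cont (w4 j) one_le_two l0 x hs
    have e2 : l ^ (-(7/2) : ℝ) = l⁻¹ * l⁻¹ * l ^ (-(3/2) : ℝ) := by
      rw [← Real.rpow_neg_one, ← Real.rpow_add l0, ← Real.rpow_add l0]
      norm_num
    calc _ ≤ l⁻¹ * l⁻¹ * (V * l ^ (-(3/2) : ℝ) * U2) := by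
          refine mul_le_mul_of_nonneg_left (k.trans ?_) (by positivity)
          exact mul_le_mul_of_nonneg_left (hU i) (by positivity)
      _ = _ := by rw [e2]; ring
  have b2 : ∀ j, |∫ z in B1, eta z * pd3 j (F i j) (x - l • z)| ≤
      V * (l ^ (-1 - 3 / t2) * Fh) := by
    intro j
    rw [ibp_z (h.sF i j) eta_sm (fun z hz => eta_off hz) l0, abs_mul,
      abs_of_pos (by positivity : 0 < l⁻¹)]
    have k := avg_bound h.kA (h.sF i j).cont (eta_sm.pd j).cont (w3 j) ht2 l0 x hs
    have e2 : l ^ (-1 - 3 / t2) = l⁻¹ * l ^ (-(3 / t2)) := by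
      rw [← Real.rpow_neg_one, ← Real.rpow_add l0, sub_eq_add_neg]
    calc _ ≤ l⁻¹ * (V * l ^ (-(3/t2)) * Fh) := by
          refine mul_le_mul_of_nonneg_left (k.trans ?_) (by positivity)
          exact mul_le_mul_of_nonneg_left (hF i j) (by positivity)
      _ = _ := by rw [e2]; ring
  rw [e]
  refine (abs_sub _ _).trans ((add_le_add (abs_sum3 b1) (abs_sum3 b2)).trans (le_of_eq ?_))
  ring

lemma int_pow_bound {H : ℝ → ℝ} {x y c d e : ℝ} (xy : x ≤ y)
    (he : -1 < e ∨ 0 < x)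
    (h : ∀ s, x < s → s ≤ y → |H s| ≤ c + d * s ^ e) :
    |∫ s in x..y, H s| ≤ c * (y - x) + d * ∫ s in x..y, s ^ e := by
  have ii : IntervalIntegrable (fun s : ℝ => s ^ e) volume x y := by
    rcases he with he | he
    · exact intervalIntegral.intervalIntegrable_rpow' he
    · refine intervalIntegral.intervalIntegrable_rpow (Or.inr ?_)
      rw [Set.uIcc_of_le xy]
      exact fun hh => by linarith [hh.1]
  have i2 : IntervalIntegrable (fun s : ℝ => c + d * s ^ e) volume x y :=
    intervalIntegrable_const.add (ii.const_mul d)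
  have := intervalIntegral.norm_integral_le_of_norm_le xy (f := H) (μ := volume)
    (ae_of_all _ fun s hs => h s hs.1 hs.2) i2
  rw [Real.norm_eq_abs] at this
  refine this.trans (le_of_eq ?_)
  rw [intervalIntegral.integral_add intervalIntegrable_const (ii.const_mul d),
    intervalIntegral.integral_const, intervalIntegral.integral_const_mul, smul_eq_mul]
  ring

/-- The pressure estimate: `pr` is written as its mollification at scale `l`, whose oscillation is
small, plus the integral over the scales `s ≤ l` of the derivative of the mollification in `s`.
Below `δ` the bound by `div F` is used, above `δ` the one by `F`. -/
lemma Pres.main {p t2 m : ℝ} (p1 : 3/2 < p) (p3 : p ≤ 3) (ht2 : 1 ≤ t2) (m0 : 0 < m)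
    (hm : 3 * (1 / p + 1 / t2 - 1) = m) : ∃ C, 0 ≤ C ∧ ∀ {a b l : ℝ} {A' : Set E3}
    {U : Fin 3 → E3 → ℝ} {F : Fin 3 → Fin 3 → E3 → ℝ} {pr g : E3 → ℝ}, Pres a b l A' U F pr g →
    ∫ x in An a b, g x = 0 → (An a b).Nonempty →
    ∀ {δ D Γ N P Fh U2 : ℝ}, 0 < δ → δ ≤ l →
    (∀ i j, nr 2 (pd3 j (U i)) A' ≤ D) → (∀ j, nr 2 (pd3 j g) (An a b) ≤ Γ) →
    (∀ i, nr (3/2) (dv F i) A' ≤ N) → (∀ i j, nr t2 (F i j) A' ≤ Fh) → nr p g (An a b) ≤ P →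
    (∀ i, nr 2 (U i) A' ≤ U2) →
    |∫ x in An a b, g x * pr x| ≤ C * (l * (D * Γ) + δ ^ (2 - 3 / p) * (P * N) +
      δ ^ (-m) * (P * Fh) +
      b * (∫ x in An a b, |g x|) * (l ^ (-(7/2) : ℝ) * U2 + l ^ (-1 - 3 / t2) * Fh)) := by
  obtain ⟨C1, c1, h1⟩ := Pres.scale
  obtain ⟨C2, c2, h2⟩ := Pres.molgrad
  have w0 : 0 < 2 - 3 / p := by
    have : 3 / p < 2 := by rw [div_lt_iff₀ (by linarith)]; linarith
    linarith
  refine ⟨C1 + C1 * (1 / (2 - 3 / p)) + C1 * (1 / m) + 30 * C2, by positivity, ?_⟩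
  intro a b l A' U F pr g h hg0 hne δ D Γ N P Fh U2 δ0 δl hD hΓ hN hF hP hU
  have l0 : 0 < l := δ0.trans_le δl
  have D0 : 0 ≤ D := (nr_nonneg _ _ _).trans (hD 0 0)
  have Γ0 : 0 ≤ Γ := (nr_nonneg _ _ _).trans (hΓ 0)
  have N0 : 0 ≤ N := (nr_nonneg _ _ _).trans (hN 0)
  have F0 : 0 ≤ Fh := (nr_nonneg _ _ _).trans (hF 0 0)
  have P0 : 0 ≤ P := (nr_nonneg _ _ _).trans hP
  have U0 : 0 ≤ U2 := (nr_nonneg _ _ _).trans (hU 0)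
  have b0 : 0 ≤ b := h.a0.le.trans h.ab
  have kA := An_compact a b
  have sc := h1 h (by linarith) p3 ht2 (by linarith) hD hΓ hN hF hP
  obtain ⟨x0, hx0⟩ := hne
  have cg := h.sg.cont
  have cm := fun s => mol_cont h.sp s
  -- subtracting the constant `mol l pr x0` is harmless because `g` has mean zero
  have spl : ∫ x in An a b, g x * pr x =
      (∫ x in An a b, g x * (mol 0 pr x - mol δ pr x)) +
      (∫ x in An a b, g x * (mol δ pr x - mol l pr x)) +
      ∫ x in An a b, g x * (mol l pr x - mol l pr x0) := by
    have j1 : ∀ s, IntegrableOn (fun x => g x * mol s pr x) (An a b) := fun s =>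
      intOn (cg.mul (cm s)) kA
    have j4 : IntegrableOn (fun x => g x * mol l pr x0) (An a b) :=
      intOn (cg.mul continuous_const) kA
    have e4 : ∫ x in An a b, g x * mol l pr x0 = 0 := by rw [integral_mul_const, hg0, zero_mul]
    simp only [mul_sub]
    rw [integral_sub (j1 0) (j1 δ), integral_sub (j1 δ) (j1 l), integral_sub (j1 l) j4, e4]
    simp only [mol_zero]
    ring
  have t1 : |∫ x in An a b, g x * (mol 0 pr x - mol δ pr x)| ≤
      C1 * (D * Γ) * (δ - 0) + C1 * (P * N) * (δ ^ (2 - 3 / p) * (1 / (2 - 3 / p))) := by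
    rw [mol_repr kA cg h.sp δ0.le]
    have := int_pow_bound (H := fun s => ∑ i, Kf (An a b) g (wk i) (pd3 i pr) s)
      (c := C1 * (D * Γ)) (d := C1 * (P * N)) (e := 1 - 3 / p) δ0.le
      (Or.inl (by linarith)) (fun s s0 sd => (sc s s0 (sd.trans δl)).1)
    rw [integral_rpow (Or.inl (by linarith)), show 1 - 3 / p + 1 = 2 - 3 / p by ring,
      Real.zero_rpow w0.ne', sub_zero (δ ^ _), div_eq_mul_one_div] at this
    exact this
  have t2' : |∫ x in An a b, g x * (mol δ pr x - mol l pr x)| ≤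
      C1 * (D * Γ) * (l - δ) + C1 * (P * Fh) * (δ ^ (-m) * (1 / m)) := by
    rw [mol_repr kA cg h.sp δl]
    have := int_pow_bound (H := fun s => ∑ i, Kf (An a b) g (wk i) (pd3 i pr) s)
      (c := C1 * (D * Γ)) (d := C1 * (P * Fh)) (e := -1 - m) δl
      (Or.inr δ0) (fun s s0 sd => by
        have := (sc s (δ0.trans s0) sd).2
        rwa [hm] at this)
    refine this.trans ?_
    have e : ∫ s in δ..l, s ^ (-1 - m) ≤ δ ^ (-m) * (1 / m) := by
      rw [integral_rpow (Or.inr ⟨by linarith, by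
        rw [Set.uIcc_of_le δl]; exact fun hh => by linarith [hh.1]⟩),
        show -1 - m + 1 = -m by ring, div_neg, ← neg_div, neg_sub, mul_one_div]
      have : 0 ≤ l ^ (-m) := by positivity
      gcongr
      linarith
    have := mul_le_mul_of_nonneg_left e (by positivity : 0 ≤ C1 * (P * Fh))
    linarith
  set Y := l ^ (-(7/2) : ℝ) * U2 + l ^ (-1 - 3 / t2) * Fh with hY
  have Y0 : 0 ≤ Y := by positivity
  have I0 : 0 ≤ ∫ x in An a b, |g x| := integral_nonneg fun _ => abs_nonneg _
  have t3 : |∫ x in An a b, g x * (mol l pr x - mol l pr x0)| ≤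
      30 * C2 * (b * (∫ x in An a b, |g x|) * Y) := by
    refine abs_integral_le_integral_abs.trans ?_
    have k : ∀ x ∈ An a b, |mol l pr x - mol l pr x0| ≤ 10 * b * (3 * (C2 * Y)) := fun x hx =>
      osc (fun y => (mol_hasFDerivAt h.sp l y).differentiableAt) h.a0
        (fun y hy => mol_fderiv_bound h.sp l y (h2 h l0 ht2 hU hF y hy)) hx hx0
    have i1 : IntegrableOn (fun x => |g x * (mol l pr x - mol l pr x0)|) (An a b) :=
      intOn (cg.mul ((cm l).sub continuous_const)).abs kA
    have i2 : IntegrableOn (fun x => |g x| * (10 * b * (3 * (C2 * Y)))) (An a b) :=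
      intOn (cg.abs.mul continuous_const) kA
    refine (setIntegral_mono_on i1 i2 kA.measurableSet fun x hx => ?_).trans ?_
    · rw [abs_mul]
      exact mul_le_mul_of_nonneg_left (k x hx) (abs_nonneg _)
    · rw [integral_mul_const]
      refine le_of_eq ?_
      ring
  rw [spl]
  refine (abs_add_le _ _).trans ((add_le_add ((abs_add_le _ _).trans (add_le_add t1 t2')) t3).trans ?_)
  have q1 : 0 ≤ l * (D * Γ) := by positivity
  have q2 : 0 ≤ δ ^ (2 - 3 / p) * (P * N) := by positivity
  have q3 : 0 ≤ δ ^ (-m) * (P * Fh) := by positivity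
  have q4 : 0 ≤ b * (∫ x in An a b, |g x|) * Y := by positivity
  set Q1 := l * (D * Γ)
  set Q2 := δ ^ (2 - 3 / p) * (P * N)
  set Q3 := δ ^ (-m) * (P * Fh)
  set Q4 := b * (∫ x in An a b, |g x|) * Y
  set k1 := C1 * (1 / (2 - 3 / p)) with hk1
  set k2 := C1 * (1 / m) with hk2
  have k10 : 0 ≤ k1 := by positivity
  have k20 : 0 ≤ k2 := by positivity
  have : C1 * (D * Γ) * (δ - 0) + C1 * (P * N) * (δ ^ (2 - 3 / p) * (1 / (2 - 3 / p))) +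
      (C1 * (D * Γ) * (l - δ) + C1 * (P * Fh) * (δ ^ (-m) * (1 / m))) + 30 * C2 * Q4 =
      C1 * Q1 + k1 * Q2 + k2 * Q3 + 30 * C2 * Q4 := by
    simp only [Q1, Q2, Q3, hk1, hk2]; ring
  rw [this]
  have S0 : 0 ≤ Q1 + Q2 + Q3 + Q4 := by positivity
  have e1 : C1 * Q1 ≤ C1 * (Q1 + Q2 + Q3 + Q4) := mul_le_mul_of_nonneg_left (by linarith) c1
  have e2 : k1 * Q2 ≤ k1 * (Q1 + Q2 + Q3 + Q4) := mul_le_mul_of_nonneg_left (by linarith) k10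
  have e3 : k2 * Q3 ≤ k2 * (Q1 + Q2 + Q3 + Q4) := mul_le_mul_of_nonneg_left (by linarith) k20
  have e4 : 30 * C2 * Q4 ≤ 30 * C2 * (Q1 + Q2 + Q3 + Q4) :=
    mul_le_mul_of_nonneg_left (by linarith) (by positivity)
  linarith

end TCM

namespace TCM

/-! ### The pressure flux of the system -/

/-- A cutoff that equals one on the ball of radius `ρ + 3h` and whose derivatives live on the shell
`An (ρ+3h) (ρ+5h)`. -/
structure Cut (ρ h C : ℝ) (φ : E3 → ℝ) : Prop where
  sm : Sm φ
  hc : HasCompactSupport φ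
  nn : ∀ x, 0 ≤ φ x
  one : ∀ x, ‖x‖ ≤ ρ + 3 * h → φ x = 1
  off : ∀ j x, x ∉ An (ρ + 3 * h) (ρ + 5 * h) → pd3 j φ x = 0
  d1 : ∀ j x, |pd3 j φ x| ≤ C / h
  d2 : ∀ i j x, |pd3 i (pd3 j φ) x| ≤ C / h ^ 2

lemma exists_cut : ∃ C : ℝ, 0 ≤ C ∧ ∀ ρ h : ℝ, 0 < ρ → 0 < h → ∃ φ, Cut ρ h C φ := by
  obtain ⟨C, C0, H⟩ := exists_cutoff
  refine ⟨C, C0, fun ρ h ρ0 h0 => ?_⟩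
  obtain ⟨φ, a1, a2, a3, -, a5, -, a7, a8, a9⟩ := H (ρ + 3 * h) (ρ + 5 * h) (by linarith) (by linarith)
  refine ⟨φ, a1, a2, a3, a5, a7, fun j x => (a8 j x).trans ?_, fun i j x => (a9 i j x).trans ?_⟩
  · exact div_le_div_of_nonneg_left C0 h0 (by linarith)
  · refine div_le_div_of_nonneg_left C0 (by positivity) ?_
    have : ρ + 5 * h - (ρ + 3 * h) = 2 * h := by ring
    rw [this]
    nlinarith

lemma nr_abs (s : ℝ) (f : E3 → ℝ) (A : Set E3) : nr s (fun x => |f x|) A = nr s f A := by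
  simp only [nr, abs_abs]

lemma nr_sum3 {s : ℝ} (hs : 1 ≤ s) {f : Fin 3 → E3 → ℝ} {k : E3 → ℝ} (hf : ∀ i, Continuous (f i))
    (hk : Continuous k) {A : Set E3} (hA : IsCompact A) {B : ℝ} (hB : ∀ i, nr s (f i) A ≤ B)
    (h : ∀ x ∈ A, |k x| ≤ ∑ i, |f i x|) : nr s k A ≤ 10 * B := by
  have c1 : Continuous fun x => |f 1 x| + |f 2 x| := (hf 1).abs.add (hf 2).abs
  have e1 : nr s k A ≤ 2 * (nr s (f 0) A + nr s (fun x => |f 1 x| + |f 2 x|) A) :=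
    nr_add hs (hf 0) c1 hk hA fun x hx => by
      have := h x hx
      rw [Fin.sum_univ_three] at this
      rw [abs_of_nonneg (by positivity : 0 ≤ |f 1 x| + |f 2 x|)]
      linarith
  have e2 : nr s (fun x => |f 1 x| + |f 2 x|) A ≤ 2 * (nr s (f 1) A + nr s (f 2) A) :=
    nr_add hs (hf 1) (hf 2) c1 hA fun x _ => by
      rw [abs_of_nonneg (by positivity : 0 ≤ |f 1 x| + |f 2 x|)]
  have := hB 0
  have := hB 1
  have := hB 2
  linarith

/-- `L^s` norm of a function dominated by `c₁|f| + c₂|g|`. -/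
lemma nr_lin {s : ℝ} (hs : 1 ≤ s) {f g k : E3 → ℝ} (hf : Continuous f) (hg : Continuous g)
    (hk : Continuous k) {A : Set E3} (hA : IsCompact A) {c1 c2 : ℝ} (h1 : 0 ≤ c1) (h2 : 0 ≤ c2)
    (h : ∀ x ∈ A, |k x| ≤ c1 * |f x| + c2 * |g x|) :
    nr s k A ≤ 2 * (c1 * nr s f A + c2 * nr s g A) := by
  have s0 : 0 < s := by linarith
  rw [← nr_const_mul s0 h1, ← nr_const_mul s0 h2]
  have k1 : Continuous fun x => c1 * f x := continuous_const.mul hf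
  have k2 : Continuous fun x => c2 * g x := continuous_const.mul hg
  refine nr_add hs k1 k2 hk hA fun x hx => ?_
  rw [abs_mul, abs_mul, abs_of_nonneg h1, abs_of_nonneg h2]
  exact h x hx

lemma nr_le_const_mul {s : ℝ} (hs : 0 < s) {f k : E3 → ℝ} (hf : Continuous f)
    (hk : Continuous k) {A : Set E3} (hA : IsCompact A) {c : ℝ} (hc : 0 ≤ c)
    (h : ∀ x ∈ A, |k x| ≤ c * |f x|) : nr s k A ≤ c * nr s f A := by
  rw [← nr_const_mul hs hc]
  have k1 : Continuous fun x => c * f x := continuous_const.mul hf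
  refine nr_mono hs hk k1 hA fun x hx => ?_
  rw [abs_mul, abs_of_nonneg hc]
  exact h x hx

lemma int_abs_le {s : ℝ} (hs : 1 ≤ s) {f : E3 → ℝ} (hf : Continuous f) {A : Set E3}
    (hA : IsCompact A) {b : ℝ} (hb : 0 < b) (h : ∀ x ∈ A, ‖x‖ ≤ b) :
    ∫ x in A, |f x| ≤ (1 + volume.real B1) * (nr s f A * b ^ (3 - 3 / s)) := by
  have s0 : 0 < s := by linarith
  have s1 : 1 / s ≤ 1 := (div_le_one s0).2 hs
  have s2 : 0 < 1 / s := by positivity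
  have v0 : 0 ≤ volume.real B1 := measureReal_nonneg
  have i := interp hA hf s0 one_pos (t := 0) le_rfl zero_le_one (by simpa using s1)
  have e : nr 1 f A = ∫ x in A, |f x| := by simp [nr]
  rw [e] at i
  simp only [sub_zero, Real.rpow_one, Real.rpow_zero, mul_one, zero_div, div_one] at i
  have v : volume.real A ^ (1 - 1 / s) ≤ (1 + volume.real B1) * b ^ (3 - 3 / s) := by
    calc volume.real A ^ (1 - 1 / s) ≤ ((1 + volume.real B1) * b ^ 3) ^ (1 - 1 / s) := by
          refine Real.rpow_le_rpow measureReal_nonneg ((vol_ball_le hb.le h).trans ?_) (by linarith)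
          exact mul_le_mul_of_nonneg_right (by linarith) (by positivity)
      _ = (1 + volume.real B1) ^ (1 - 1 / s) * b ^ (3 - 3 / s) := by
          rw [Real.mul_rpow (by positivity) (by positivity), ← Real.rpow_natCast b 3,
            ← Real.rpow_mul hb.le]
          congr 2
          push_cast
          ring
      _ ≤ _ := by
          refine mul_le_mul_of_nonneg_right ?_ (by positivity)
          calc _ ≤ (1 + volume.real B1) ^ (1:ℝ) :=
                Real.rpow_le_rpow_of_exponent_le (by linarith) (by linarith)
            _ = _ := Real.rpow_one _
  calc _ ≤ nr s f A * ((1 + volume.real B1) * b ^ (3 - 3 / s)) :=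
        i.trans (mul_le_mul_of_nonneg_left v (nr_nonneg _ _ _))
    _ = _ := by ring

/-- The symmetric stress tensor `u ⊗ u + v ⊗ v`. -/
def Fs (u v : Fin 3 → E3 → ℝ) (i j : Fin 3) (x : E3) : ℝ := u i x * u j x + v i x * v j x

/-- The test function `u · ∇φ` of the pressure. -/
def gt (u : Fin 3 → E3 → ℝ) (φ : E3 → ℝ) (x : E3) : ℝ := ∑ j, u j x * pd3 j φ x

variable {u v : Fin 3 → E3 → ℝ} {pr θ φ : E3 → ℝ}

lemma Sys.sF (h : Sys u v pr θ) (i j : Fin 3) : Sm (Fs u v i j) :=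
  ((h.su i).mul (h.su j)).add ((h.sv i).mul (h.sv j))

lemma Sys.pdF (h : Sys u v pr θ) (i j k : Fin 3) (x : E3) : pd3 k (Fs u v i j) x =
    pd3 k (u i) x * u j x + u i x * pd3 k (u j) x +
      (pd3 k (v i) x * v j x + v i x * pd3 k (v j) x) := by
  have := pd3_add ((h.su i).mul (h.su j)) ((h.sv i).mul (h.sv j)) k x
  rw [pd3_mul (h.su i) (h.su j), pd3_mul (h.sv i) (h.sv j)] at this
  exact this

lemma Sys.sgt (h : Sys u v pr θ) (hφ : Sm φ) : Sm (gt u φ) := Sm.sum fun j _ => (h.su j).mul (hφ.pd j)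

lemma Sys.pdgt (h : Sys u v pr θ) (hφ : Sm φ) (j : Fin 3) (x : E3) : pd3 j (gt u φ) x =
    ∑ i, (pd3 j (u i) x * pd3 i φ x + u i x * pd3 j (pd3 i φ) x) := by
  have := pd3_sum (s := Finset.univ) (fun i _ => (h.su i).mul (hφ.pd i)) j x
  simp only [pd3_mul (h.su _) (hφ.pd _)] at this
  exact this

/-- The momentum equation, with the transport terms in divergence form, fits the abstract setting
`Pres` with test function `u · ∇φ`. -/
lemma Sys.pres (h : Sys u v pr θ) {ρ s C l : ℝ} (ρ0 : 0 < ρ) (s0 : 0 < s) (hφ : Cut ρ s C φ)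
    (ls : l ≤ s) :
    Pres (ρ + 3 * s) (ρ + 5 * s) l (An ρ (ρ + 8 * s)) u (Fs u v) pr (gt u φ) where
  a0 := by linarith
  ab := by linarith
  kA := An_compact _ _
  sU := h.su
  sF := h.sF
  sp := h.sp
  sg := h.sgt hφ.sm
  eq := fun i x => by
    have e := h.eu x i
    have d := h.du x
    simp only [h.pdF, lap3, Fin.sum_univ_three] at e d ⊢
    have : u i x * (pd3 0 (u 0) x + pd3 1 (u 1) x + pd3 2 (u 2) x) = 0 := by rw [d, mul_zero]
    linarith
  off := fun x hx => Finset.sum_eq_zero fun j _ => by rw [hφ.off j x hx, mul_zero]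
  sh := fun x hx z hz t t0 tl => by
    have := An_shift t0 (tl.trans ls) hx hz
    exact ⟨by linarith [this.1], by linarith [this.2]⟩

/-- As `u` is divergence free, `u · ∇φ` has integral zero, so the pressure may be shifted by a
constant in the flux term. -/
lemma Sys.int_gt (h : Sys u v pr θ) {ρ s C : ℝ} (hφ : Cut ρ s C φ) :
    ∫ x in An (ρ + 3 * s) (ρ + 5 * s), gt u φ x = 0 := by
  rw [setIntegral_eq_integral_of_forall_compl_eq_zero fun x hx =>
    Finset.sum_eq_zero fun j _ => by rw [hφ.off j x hx, mul_zero]]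
  have i1 : ∀ j, Integrable fun x => u j x * pd3 j φ x := fun j =>
    sm_int (h.su j).cont (hφ.sm.pd j).cont (hcs_pd hφ.hc j)
  have i2 : ∀ j, Integrable fun x => pd3 j (u j) x * φ x := fun j =>
    sm_int ((h.su j).pd j).cont hφ.sm.cont hφ.hc
  have e : ∀ j, ∫ x, u j x * pd3 j φ x = -∫ x, pd3 j (u j) x * φ x := fun j => by
    rw [ibp (h.su j) hφ.sm hφ.hc j, neg_neg]
  show ∫ x, ∑ j, u j x * pd3 j φ x = 0
  rw [integral_finsetSum _ fun j _ => i1 j]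
  simp only [e]
  rw [Finset.sum_neg_distrib, ← integral_finsetSum _ fun j _ => i2 j]
  simp only [← Finset.sum_mul, h.du, zero_mul, integral_zero, neg_zero]

/-- The pressure flux with the two mollification scales `δ ≤ l` still free. -/
lemma Sys.press_raw {p t2 m C0 : ℝ} (p1 : 3/2 < p) (p3 : p ≤ 3) (ht2 : 1 ≤ t2) (m0 : 0 < m)
    (hm : 3 * (1 / p + 1 / t2 - 1) = m) (hC0 : 0 ≤ C0) : ∃ C, 0 ≤ C ∧
    ∀ {u v : Fin 3 → E3 → ℝ} {pr θ φ : E3 → ℝ} {ρ s l δ G Pu U2 Fh : ℝ}, Sys u v pr θ →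
    0 < ρ → 0 < s → Cut ρ s C0 φ → 0 < δ → δ ≤ l → l ≤ s →
    (∀ i, nr 2 (gr (u i)) (An ρ (ρ + 8 * s)) ≤ G) → (∀ i, nr 2 (gr (v i)) (An ρ (ρ + 8 * s)) ≤ G) →
    (∀ i, nr 6 (u i) (An ρ (ρ + 8 * s)) ≤ G) → (∀ i, nr 6 (v i) (An ρ (ρ + 8 * s)) ≤ G) →
    (∀ i, nr p (u i) (An ρ (ρ + 8 * s)) ≤ Pu) → (∀ i, nr 2 (u i) (An ρ (ρ + 8 * s)) ≤ U2) →
    (∀ i j, nr t2 (Fs u v i j) (An ρ (ρ + 8 * s)) ≤ Fh) →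
    |∑ j, ∫ x, pr x * (u j x * pd3 j φ x)| ≤ C * (l * (G * (G / s + U2 / s ^ 2)) +
      δ ^ (2 - 3 / p) * (Pu / s * G ^ 2) + δ ^ (-m) * (Pu / s * Fh) +
      (ρ + 8 * s) * (U2 / s * (ρ + 8 * s) ^ (3 - 3 / 2 : ℝ) * (l ^ (-(7/2) : ℝ) * U2) +
        Pu / s * (ρ + 8 * s) ^ (3 - 3 / p) * (l ^ (-1 - 3 / t2) * Fh))) := by
  obtain ⟨C1, c1, H⟩ := Pres.main p1 p3 ht2 m0 hm
  set V := 1 + volume.real B1 with hV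
  have V1 : 1 ≤ V := by
    have : 0 ≤ volume.real B1 := measureReal_nonneg
    linarith
  set K := 10 * C0 + 20 * C0 + 1600 * C0 + 10 * C0 * V with hK
  have K0 : 0 ≤ K := by positivity
  refine ⟨C1 * K, by positivity, ?_⟩
  intro u v pr θ φ ρ s l δ G Pu U2 Fh h ρ0 s0 hφ δ0 δl ls gu gv u6 v6 hp h2 hF
  set A' := An ρ (ρ + 8 * s) with hA'
  set A := An (ρ + 3 * s) (ρ + 5 * s) with hA
  have kA' : IsCompact A' := An_compact _ _
  have kA : IsCompact A := An_compact _ _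
  have AA : A ⊆ A' := An_mono (by linarith) (by linarith)
  have l0 : 0 < l := δ0.trans_le δl
  have G0 : 0 ≤ G := (nr_nonneg _ _ _).trans (gu 0)
  have P0 : 0 ≤ Pu := (nr_nonneg _ _ _).trans (hp 0)
  have U0 : 0 ≤ U2 := (nr_nonneg _ _ _).trans (h2 0)
  have F0 : 0 ≤ Fh := (nr_nonneg _ _ _).trans (hF 0 0)
  have cu := fun i => (h.su i).cont
  have cv := fun i => (h.sv i).cont
  have cgu := fun i => (h.su i).gr_cont
  have cgv := fun i => (h.sv i).gr_cont
  have hpr := h.pres ρ0 s0 hφ ls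
  have sgt := h.sgt hφ.sm
  have pos : 0 < ρ + 8 * s := by positivity
  have hg : ∀ t, 1 ≤ t → ∀ B, (∀ i, nr t (u i) A' ≤ B) → nr t (gt u φ) A ≤ 10 * (C0 / s * B) := by
    intro t ht B hB
    have t0 : 0 < t := by linarith
    refine nr_sum3 (f := fun i x => C0 / s * u i x) ht (fun i => continuous_const.mul (cu i))
      sgt.cont kA (fun i => ?_) (fun x _ => ?_)
    · rw [nr_const_mul t0 (by positivity)]
      exact mul_le_mul_of_nonneg_left ((nr_mono_set t0 (cu i) kA' AA).trans (hB i)) (by positivity)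
    · refine (Finset.abs_sum_le_sum_abs _ _).trans (Finset.sum_le_sum fun i _ => ?_)
      rw [abs_mul, abs_mul, abs_of_nonneg (by positivity : 0 ≤ C0 / s), mul_comm]
      exact mul_le_mul_of_nonneg_right (hφ.d1 i x) (abs_nonneg _)
  have hΓ : ∀ j, nr 2 (pd3 j (gt u φ)) A ≤ 20 * C0 * (G / s + U2 / s ^ 2) := by
    intro j
    have ck : ∀ i, Continuous fun x => pd3 j (u i) x * pd3 i φ x + u i x * pd3 j (pd3 i φ) x := fun i =>
      ((((h.su i).pd j).mul (hφ.sm.pd i)).add ((h.su i).mul ((hφ.sm.pd i).pd j))).cont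
    have b : ∀ i, nr 2 (fun x => pd3 j (u i) x * pd3 i φ x + u i x * pd3 j (pd3 i φ) x) A ≤
        2 * (C0 / s * G + C0 / s ^ 2 * U2) := by
      intro i
      refine (nr_lin one_le_two (cgu i) (cu i) (ck i) kA (c1 := C0 / s) (c2 := C0 / s ^ 2)
        (by positivity) (by positivity) fun x _ => ?_).trans ?_
      · refine (abs_add_le _ _).trans (add_le_add ?_ ?_)
        · rw [abs_mul, mul_comm, abs_of_nonneg (gr_nonneg (u i) x)]
          exact mul_le_mul (hφ.d1 i x) (abs_pd3_le _ _ _) (abs_nonneg _) (by positivity)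
        · rw [abs_mul, mul_comm]
          exact mul_le_mul_of_nonneg_right (hφ.d2 j i x) (abs_nonneg _)
      · have e1 := (nr_mono_set two_pos (cgu i) kA' AA).trans (gu i)
        have e2 := (nr_mono_set two_pos (cu i) kA' AA).trans (h2 i)
        gcongr
    refine (nr_sum3 one_le_two ck (sgt.pd j).cont kA b fun x _ => ?_).trans (le_of_eq ?_)
    · rw [h.pdgt hφ.sm]
      exact Finset.abs_sum_le_sum_abs _ _
    · ring
  have hN : ∀ i, nr (3/2) (dv (Fs u v) i) A' ≤ 160 * G ^ 2 := by
    intro i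
    have m1 : ∀ {f g : E3 → ℝ}, Continuous f → Continuous g → nr 2 f A' ≤ G → nr 6 g A' ≤ G →
        nr (3/2) (fun x => f x * g x) A' ≤ G ^ 2 := by
      intro f g cf cg hf hg
      refine (nr_mul kA' cf cg two_pos (by norm_num : (0:ℝ) < 6) (by norm_num : (0:ℝ) < 3/2)
        (by norm_num)).trans ?_
      rw [pow_two]
      exact mul_le_mul hf hg (nr_nonneg _ _ _) G0
    have half : ∀ {f : Fin 3 → E3 → ℝ}, (∀ i, Sm (f i)) → (∀ i, nr 2 (gr (f i)) A' ≤ G) →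
        (∀ i, nr 6 (f i) A' ≤ G) → ∀ j,
        nr (3/2) (fun x => gr (f i) x * |f j x| + gr (f j) x * |f i x|) A' ≤ 4 * G ^ 2 := by
      intro f sf h1 h6 j
      have q1 : Continuous fun x => gr (f i) x * |f j x| := (sf i).gr_cont.mul (sf j).cont.abs
      have q2 : Continuous fun x => gr (f j) x * |f i x| := (sf j).gr_cont.mul (sf i).cont.abs
      refine (nr_add (by norm_num) q1 q2 (q1.add q2) kA' fun x _ => abs_add_le _ _).trans ?_
      have := m1 (sf i).gr_cont (sf j).cont.abs (h1 i) ((nr_abs _ _ _).trans_le (h6 j))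
      have := m1 (sf j).gr_cont (sf i).cont.abs (h1 j) ((nr_abs _ _ _).trans_le (h6 i))
      linarith
    have b : ∀ j, nr (3/2) (pd3 j (Fs u v i j)) A' ≤ 16 * G ^ 2 := by
      intro j
      have q1 : Continuous fun x => gr (u i) x * |u j x| + gr (u j) x * |u i x| :=
        ((cgu i).mul (cu j).abs).add ((cgu j).mul (cu i).abs)
      have q2 : Continuous fun x => gr (v i) x * |v j x| + gr (v j) x * |v i x| :=
        ((cgv i).mul (cv j).abs).add ((cgv j).mul (cv i).abs)
      refine (nr_add (by norm_num) q1 q2 ((h.sF i j).pd j).cont kA' fun x _ => ?_).trans ?_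
      · rw [h.pdF]
        have k : ∀ f g : E3 → ℝ, |pd3 j f x * g x + f x * pd3 j g x| ≤
            abs (gr f x * |g x| + gr g x * |f x|) := by
          intro f g
          rw [abs_of_nonneg (a := gr f x * |g x| + gr g x * |f x|)
            (add_nonneg (mul_nonneg (gr_nonneg _ _) (abs_nonneg _))
            (mul_nonneg (gr_nonneg _ _) (abs_nonneg _)))]
          refine (abs_add_le _ _).trans (add_le_add ?_ ?_)
          · rw [abs_mul]
            exact mul_le_mul_of_nonneg_right (abs_pd3_le _ _ _) (abs_nonneg _)
          · rw [abs_mul, mul_comm]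
            exact mul_le_mul_of_nonneg_right (abs_pd3_le _ _ _) (abs_nonneg _)
        exact (abs_add_le _ _).trans (add_le_add (k _ _) (k _ _))
      · have := half h.su gu u6 j
        have := half h.sv gv v6 j
        linarith
    refine (nr_sum3 (by norm_num) (fun j => ((h.sF i j).pd j).cont) (hpr.sdv i).cont kA' b
      fun x _ => ?_).trans (le_of_eq ?_)
    · exact Finset.abs_sum_le_sum_abs _ _
    · ring
  have hD : ∀ i j, nr 2 (pd3 j (u i)) A' ≤ G := fun i j =>
    (nr_mono two_pos ((h.su i).pd j).cont (cgu i) kA' fun x _ => by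
      rw [abs_of_nonneg (gr_nonneg (u i) x)]; exact abs_pd3_le _ _ _).trans (gu i)
  have ne : A.Nonempty := by
    refine ⟨EuclideanSpace.single 0 (ρ + 4 * s), ?_⟩
    have : ‖(EuclideanSpace.single 0 (ρ + 4 * s) : E3)‖ = ρ + 4 * s := by
      rw [EuclideanSpace.norm_single, Real.norm_of_nonneg (by positivity)]
    exact ⟨by rw [this]; linarith, by rw [this]; linarith⟩
  have main := H hpr (h.int_gt hφ) ne δ0 δl hD hΓ hN hF (hg p (by linarith) Pu hp) h2
  have Afar : ∀ x ∈ A, ‖x‖ ≤ ρ + 8 * s := fun x hx => by linarith [hx.2]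
  have I2 : ∫ x in A, |gt u φ x| ≤ 10 * C0 * V * (U2 / s * (ρ + 8 * s) ^ (3 - 3 / 2 : ℝ)) := by
    refine (int_abs_le one_le_two sgt.cont kA pos Afar).trans ?_
    have := hg 2 one_le_two U2 h2
    calc _ ≤ V * (10 * (C0 / s * U2) * (ρ + 8 * s) ^ (3 - 3 / 2 : ℝ)) := by gcongr
      _ = _ := by ring
  have Ip : ∫ x in A, |gt u φ x| ≤ 10 * C0 * V * (Pu / s * (ρ + 8 * s) ^ (3 - 3 / p)) := by
    refine (int_abs_le (by linarith : 1 ≤ p) sgt.cont kA pos Afar).trans ?_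
    have := hg p (by linarith) Pu hp
    calc _ ≤ V * (10 * (C0 / s * Pu) * (ρ + 8 * s) ^ (3 - 3 / p)) := by gcongr
      _ = _ := by ring
  have lhs : ∑ j, ∫ x, pr x * (u j x * pd3 j φ x) = ∫ x in A, gt u φ x * pr x := by
    rw [setIntegral_eq_integral_of_forall_compl_eq_zero fun x hx => by
      rw [hpr.off x hx, zero_mul]]
    have i1 : ∀ j, Integrable fun x => pr x * (u j x * pd3 j φ x) := fun j => by
      have := sm_int (h.sp.mul (h.su j)).cont (hφ.sm.pd j).cont (hcs_pd hφ.hc j)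
      simpa only [mul_assoc] using this
    rw [← integral_finsetSum _ fun j _ => i1 j]
    refine integral_congr_ae (ae_of_all _ fun x => ?_)
    simp only [gt, Finset.sum_mul]
    exact Finset.sum_congr rfl fun j _ => by ring
  rw [lhs]
  refine main.trans ?_
  rw [mul_assoc C1 K]
  refine mul_le_mul_of_nonneg_left ?_ c1
  set J := ∫ x in A, |gt u φ x|
  have Q1 : 0 ≤ l * (G * (G / s + U2 / s ^ 2)) := by positivity
  have Q2 : 0 ≤ δ ^ (2 - 3 / p) * (Pu / s * G ^ 2) := by positivity
  have Q3 : 0 ≤ δ ^ (-m) * (Pu / s * Fh) := by positivity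
  have Q4 : 0 ≤ (ρ + 8 * s) * (U2 / s * (ρ + 8 * s) ^ (3 - 3 / 2 : ℝ) * (l ^ (-(7/2) : ℝ) * U2)) := by
    positivity
  have Q5 : 0 ≤ (ρ + 8 * s) * (Pu / s * (ρ + 8 * s) ^ (3 - 3 / p) * (l ^ (-1 - 3 / t2) * Fh)) := by
    positivity
  have B1' : J * (l ^ (-(7/2) : ℝ) * U2) ≤
      10 * C0 * V * (U2 / s * (ρ + 8 * s) ^ (3 - 3 / 2 : ℝ)) * (l ^ (-(7/2) : ℝ) * U2) :=
    mul_le_mul_of_nonneg_right I2 (by positivity)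
  have B2' : J * (l ^ (-1 - 3 / t2) * Fh) ≤
      10 * C0 * V * (Pu / s * (ρ + 8 * s) ^ (3 - 3 / p)) * (l ^ (-1 - 3 / t2) * Fh) :=
    mul_le_mul_of_nonneg_right Ip (by positivity)
  have J0 : 0 ≤ J := integral_nonneg fun _ => abs_nonneg _
  have B3 : (ρ + 5 * s) * J * (l ^ (-(7/2) : ℝ) * U2 + l ^ (-1 - 3 / t2) * Fh) ≤
      10 * C0 * V * ((ρ + 8 * s) * (U2 / s * (ρ + 8 * s) ^ (3 - 3 / 2 : ℝ) * (l ^ (-(7/2) : ℝ) * U2)) +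
      (ρ + 8 * s) * (Pu / s * (ρ + 8 * s) ^ (3 - 3 / p) * (l ^ (-1 - 3 / t2) * Fh))) := by
    calc _ ≤ (ρ + 8 * s) * (J * (l ^ (-(7/2) : ℝ) * U2) + J * (l ^ (-1 - 3 / t2) * Fh)) := by
          have : (ρ + 5 * s) ≤ ρ + 8 * s := by linarith
          rw [mul_assoc, ← mul_add]
          exact mul_le_mul_of_nonneg_right this (by positivity)
      _ ≤ _ := by
          have := mul_le_mul_of_nonneg_left (add_le_add B1' B2') pos.le
          refine this.trans (le_of_eq ?_)
          ring
  set q1 := l * (G * (G / s + U2 / s ^ 2)) with hq1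
  set q2 := δ ^ (2 - 3 / p) * (Pu / s * G ^ 2) with hq2
  set q3 := δ ^ (-m) * (Pu / s * Fh) with hq3
  set q4 := (ρ + 8 * s) * (U2 / s * (ρ + 8 * s) ^ (3 - 3 / 2 : ℝ) * (l ^ (-(7/2) : ℝ) * U2))
  set q5 := (ρ + 8 * s) * (Pu / s * (ρ + 8 * s) ^ (3 - 3 / p) * (l ^ (-1 - 3 / t2) * Fh))
  rw [mul_add (ρ + 8 * s)]
  calc _ ≤ 20 * C0 * q1 + 1600 * C0 * q2 + 10 * C0 * q3 + 10 * C0 * V * (q4 + q5) := by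
        refine add_le_add (le_of_eq ?_) B3
        rw [hq1, hq2, hq3]
        ring
    _ ≤ K * q1 + K * q2 + K * q3 + K * (q4 + q5) := by
        have v0 : 0 ≤ 10 * C0 * V := by positivity
        have : 20 * C0 ≤ K := by rw [hK]; linarith
        have : 1600 * C0 ≤ K := by rw [hK]; linarith
        have : 10 * C0 ≤ K := by rw [hK]; linarith
        have : 10 * C0 * V ≤ K := by rw [hK]; linarith
        gcongr
    _ = _ := by ring

end TCM

namespace TCM

/-! ### Admissible exponents and interpolation -/

/-- The sum of two powers of `G` that dominates every intermediate power. -/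
def Hs (σ G : ℝ) : ℝ := G ^ σ + G ^ (2 - σ)

lemma Hs_nonneg {σ G : ℝ} (hG : 0 ≤ G) : 0 ≤ Hs σ G :=
  add_nonneg (Real.rpow_nonneg hG _) (Real.rpow_nonneg hG _)

/-- `Hs σ` dominates all powers with exponent in `[σ, 2 - σ]`. -/
lemma rpow_le_Hs {σ x G : ℝ} (hG : 0 ≤ G) (hσ : 0 ≤ σ) (h1 : σ ≤ x) (h2 : x ≤ 2 - σ) :
    G ^ x ≤ Hs σ G := by
  rcases le_total G 1 with h | h
  · have a := Real.rpow_le_rpow_of_exponent_ge' hG h hσ h1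
    have b := Real.rpow_nonneg hG (2 - σ)
    unfold Hs; linarith
  · have a := Real.rpow_le_rpow_of_exponent_le h h2
    have b := Real.rpow_nonneg hG σ
    unfold Hs; linarith

lemma Hs_le {σ σ' G : ℝ} (hG : 0 ≤ G) (h0 : 0 ≤ σ') (h : σ' ≤ σ) (h1 : σ ≤ 1) :
    Hs σ G ≤ 2 * Hs σ' G := by
  have a := rpow_le_Hs hG h0 h (by linarith)
  have b := rpow_le_Hs (x := 2 - σ) hG h0 (by linarith) (by linarith)
  unfold Hs at *; linarith

/-- The admissibility condition on an exponent pair `(s, a)` relative to `(p, α)`: it says that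
`s < 2p'` and that the cubic flux term built from two factors of growth `a` in `L^s` and one of
growth `α` in `L^p` is bounded. -/
structure Adm (p α s a : ℝ) : Prop where
  s1 : 1 ≤ s
  a0 : 0 ≤ a
  w : 2 - 3 / p < 6 / s - 1
  a1 : a ≤ (6 / s - 1) / 2
  ab : α * (6 / s - 1) + 2 * a * (2 - 3 / p) ≤ 6 / s - 1

lemma w_pos {p : ℝ} (p1 : 3 / 2 < p) : 0 < 2 - 3 / p := by
  have p0 : 0 < p := by linarith
  rw [sub_pos, div_lt_iff₀ p0]; linarith

lemma w_lt {p : ℝ} (p1 : 3 / 2 < p) (p3 : p < 3) : 2 - 3 / p < 1 := by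
  have p0 : 0 < p := by linarith
  have : 1 < 3 / p := by rw [lt_div_iff₀ p0]; linarith
  linarith

/-- In the range of `α` allowed, the pair `(p, α)` is admissible relative to itself. -/
lemma Adm.self {p α : ℝ} (p1 : 3 / 2 < p) (p3 : p < 3) (α0 : 0 ≤ α) (hα : α ≤ 2 / p - 1 / 3) :
    Adm p α p α := by
  have p0 : 0 < p := by linarith
  have e2 : 2 / p = 2 * (1 / p) := by ring
  have e3 : 3 / p = 3 * (1 / p) := by ring
  have e6 : 6 / p = 6 * (1 / p) := by ring
  have : 1 < 3 * (1 / p) := by rw [← e3, lt_div_iff₀ p0]; linarith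
  constructor
  · linarith
  · exact α0
  · rw [e3, e6]; linarith
  · rw [e6]; linarith
  · rw [e3, e6]; nlinarith

/-- `f` has growth `a` in `L^s` and `L^6` norm at most `G` on `A`, up to the factor `L`. -/
structure Fld (A : Set E3) (R L G : ℝ) (f : E3 → ℝ) (s a : ℝ) : Prop where
  cont : Continuous f
  ns : nr s f A ≤ L * R ^ a
  n6 : nr 6 f A ≤ L * G

/-- The constant in the interpolation inequalities. -/
def Vc : ℝ := 8 * (1 + volume.real B1)

lemma Vc_one : 1 ≤ Vc := by
  have : 0 ≤ volume.real B1 := measureReal_nonneg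
  unfold Vc; linarith

/-- Interpolation of `L^σ` between `L^s` and `L^6` with weight `t`; the slack in the exponents is paid
by a power of the volume of `A`. -/
lemma Fld.gen {A : Set E3} (hA : IsCompact A) {R L G s a : ℝ} {f : E3 → ℝ} (h : Fld A R L G f s a)
    (hR : 1 ≤ R) (hL : 0 ≤ L) (hG : 0 ≤ G) (hAR : ∀ x ∈ A, ‖x‖ ≤ 2 * R) (hs : 1 ≤ s) {σ t : ℝ}
    (hσ : 1 ≤ σ) (t0 : 0 ≤ t) (t1 : t ≤ 1) (ht : (1 - t) / s + t / 6 ≤ 1 / σ) {E : ℝ}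
    (hE : (1 - t) * (a - 3 / s) + 3 / σ - t / 2 ≤ E) :
    nr σ f A ≤ Vc * L * (R ^ E * G ^ t) := by
  have R0 : 0 < R := by linarith
  have s0 : 0 < s := by linarith
  have V1 := Vc_one
  have e0 : 0 ≤ 1 / σ - (1 - t) / s - t / 6 := by linarith
  have e1 : 1 / σ - (1 - t) / s - t / 6 ≤ 1 := by
    have := (div_le_one (by linarith : 0 < σ)).2 hσ
    have : 0 ≤ (1 - t) / s := div_nonneg (by linarith) s0.le
    linarith
  have vol : volume.real A ≤ Vc * R ^ 3 := by
    refine (vol_ball_le (by positivity) hAR).trans ?_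
    have : 0 ≤ volume.real B1 := measureReal_nonneg
    have : 0 ≤ R ^ 3 := by positivity
    unfold Vc; nlinarith
  have hv : volume.real A ^ (1 / σ - (1 - t) / s - t / 6) ≤
      Vc * R ^ (3 * (1 / σ - (1 - t) / s - t / 6)) := by
    refine (Real.rpow_le_rpow measureReal_nonneg vol e0).trans ?_
    rw [Real.mul_rpow (by linarith) (by positivity), ← Real.rpow_natCast R 3, ← Real.rpow_mul R0.le]
    push_cast
    refine mul_le_mul_of_nonneg_right ?_ (Real.rpow_nonneg R0.le _)
    calc Vc ^ (1 / σ - (1 - t) / s - t / 6) ≤ Vc ^ (1:ℝ) :=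
          Real.rpow_le_rpow_of_exponent_le V1 e1
      _ = Vc := Real.rpow_one _
  have h1 : nr s f A ^ (1 - t) ≤ L ^ (1 - t) * R ^ (a * (1 - t)) := by
    refine (Real.rpow_le_rpow (nr_nonneg _ _ _) h.ns (by linarith)).trans (le_of_eq ?_)
    rw [Real.mul_rpow hL (Real.rpow_nonneg R0.le _), ← Real.rpow_mul R0.le]
  have h2 : nr 6 f A ^ t ≤ L ^ t * G ^ t := by
    refine (Real.rpow_le_rpow (nr_nonneg _ _ _) h.n6 t0).trans (le_of_eq ?_)
    rw [Real.mul_rpow hL hG]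
  have LL : L ^ (1 - t) * L ^ t = L := by
    rcases hL.eq_or_lt with rfl | h
    · rcases t0.eq_or_lt with rfl | h'
      · simp
      · rw [Real.zero_rpow h'.ne', mul_zero]
    · rw [← Real.rpow_add h]; simp
  have n1 := Real.rpow_nonneg hL (1 - t)
  have n2 := Real.rpow_nonneg hL t
  have n3 := Real.rpow_nonneg hG t
  refine (interp hA h.cont s0 (by linarith) t0 t1 ht).trans ?_
  calc _ ≤ (L ^ (1 - t) * R ^ (a * (1 - t))) * (L ^ t * G ^ t) *
        (Vc * R ^ (3 * (1 / σ - (1 - t) / s - t / 6))) := by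
        have := Real.rpow_nonneg (nr_nonneg s f A) (1 - t)
        have := Real.rpow_nonneg (nr_nonneg 6 f A) t
        have := Real.rpow_nonneg R0.le (a * (1 - t))
        have := Real.rpow_nonneg (measureReal_nonneg : 0 ≤ volume.real A)
          (1 / σ - (1 - t) / s - t / 6)
        gcongr
    _ = Vc * (L ^ (1 - t) * L ^ t) * (R ^ ((1 - t) * (a - 3 / s) + 3 / σ - t / 2) * G ^ t) := by
        rw [show (1 - t) * (a - 3 / s) + 3 / σ - t / 2 =
          a * (1 - t) + 3 * (1 / σ - (1 - t) / s - t / 6) by ring, Real.rpow_add R0]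
        ring
    _ ≤ _ := by
        rw [LL]
        refine mul_le_mul_of_nonneg_left ?_ (by positivity)
        exact mul_le_mul_of_nonneg_right (Real.rpow_le_rpow_of_exponent_le hR hE) n3

/-- The case `σ = 2`, for use in the viscous term and the lower order parts of the pressure flux. -/
lemma Fld.two {A : Set E3} (hA : IsCompact A) {R L G s a : ℝ} {f : E3 → ℝ} (h : Fld A R L G f s a)
    (hR : 1 ≤ R) (hL : 0 ≤ L) (hG : 0 ≤ G) (hAR : ∀ x ∈ A, ‖x‖ ≤ 2 * R) (hs : 1 ≤ s)
    (ha : a ≤ (6 / s - 1) / 2) : nr 2 f A ≤ Vc * L * (R * G ^ (3 / 5 : ℝ)) := by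
  have s0 : 0 < s := by linarith
  have e : 1 / s ≤ 1 := (div_le_one s0).2 hs
  have e3 : 3 / s = 3 * (1 / s) := by ring
  have e6 : 6 / s = 6 * (1 / s) := by ring
  have e5 : (1 - 3 / 5) / s = 2 / 5 * (1 / s) := by ring
  have := h.gen hA hR hL hG hAR hs (σ := 2) (t := 3 / 5) (E := 1) (by norm_num) (by norm_num)
    (by norm_num) (by rw [e5]; linarith) (by rw [e3]; rw [e6] at ha; linarith)
  rwa [Real.rpow_one] at this

/-- Interpolation at an exponent `σ` with `3/σ = 1/2 + y/2`, without loss of volume. -/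
lemma Fld.mid {A : Set E3} (hA : IsCompact A) {R L G s a : ℝ} {f : E3 → ℝ} (h : Fld A R L G f s a)
    (hR : 1 ≤ R) (hL : 0 ≤ L) (hG : 0 ≤ G) (hAR : ∀ x ∈ A, ‖x‖ ≤ 2 * R) (hs : 1 ≤ s) {σ y : ℝ}
    (hσ : 1 ≤ σ) (y0 : 0 ≤ y) (y1 : y < 6 / s - 1) (hy : 6 / σ = 1 + y) :
    nr σ f A ≤ Vc * L * (R ^ (a * y / (6 / s - 1)) * G ^ (1 - y / (6 / s - 1))) := by
  have s0 : 0 < s := by linarith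
  have σ0 : 0 < σ := by linarith
  have K0 : 0 < 6 / s - 1 := by linarith
  have e3 : 3 / s = ((6 / s - 1) + 1) / 2 := by ring
  have es : ∀ x, x / s = x * ((6 / s - 1) + 1) / 6 := fun x => by ring
  have eσ : 3 / σ = (1 + y) / 2 := by rw [← hy]; ring
  have eσ' : 1 / σ = (1 + y) / 6 := by rw [← hy]; ring
  refine h.gen hA hR hL hG hAR hs hσ ?_ ?_ (le_of_eq ?_) (le_of_eq ?_)
  · rw [sub_nonneg, div_le_one K0]; exact y1.le
  · have : 0 ≤ y / (6 / s - 1) := by positivity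
    linarith
  · rw [es, eσ']; generalize 6 / s - 1 = K at *; field_simp; ring
  · rw [e3, eσ]; generalize 6 / s - 1 = K at *; field_simp; ring

end TCM

namespace TCM

/-! ### Choice of the mollification scales -/

lemma inv_scale {R h Λ : ℝ} (hR : 0 < R) (hh : 0 < h) (hk : R / h ≤ Λ) : 1 / h ≤ Λ * R⁻¹ := by
  rw [div_le_iff₀ hh] at *
  have : Λ * R⁻¹ * h = (Λ * h) / R := by ring
  rw [this, le_div_iff₀ hR]; linarith

lemma scale_neg {R h Λ ε x : ℝ} (hR : 0 < R) (hh : 0 < h) (hΛ : 0 < Λ) (hk : R / h ≤ Λ) (hε : 0 < ε)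
    (hx : 0 ≤ x) : (ε * h) ^ (-x) ≤ ε ^ (-x) * (Λ ^ x * R ^ (-x)) := by
  rw [Real.mul_rpow hε.le hh.le]
  refine mul_le_mul_of_nonneg_left ?_ (Real.rpow_nonneg hε.le _)
  rw [Real.rpow_neg hh.le, Real.rpow_neg hR.le, ← Real.inv_rpow hh.le, ← Real.inv_rpow hR.le,
    ← Real.mul_rpow hΛ.le (by positivity)]
  refine Real.rpow_le_rpow (by positivity) ?_ hx
  rw [← one_div]
  exact inv_scale hR hh hk

set_option maxHeartbeats 1000000 in
/-- The choice of the mollification scales `l = ε₁h` and `δ = ε'Λ^{-2/w}R^{κ₀}` in the raw pressure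
estimate, as an inequality between real numbers. -/
lemma press_num {p α m κ0 ε1 : ℝ} (p1 : 3 / 2 < p) (p3 : p < 3) (m0 : 0 < m)
    (k1 : κ0 ≤ 1) (kw : (2 - 3 / p) * κ0 ≤ 1 - α) (ε0 : 0 < ε1) (ε1' : ε1 ≤ 1) :
    ∃ C, 0 ≤ C ∧ ∃ N : ℕ, ∀ {R h T Λ G H S : ℝ}, 1 ≤ R → 0 < h → R / h ≤ Λ → 1 ≤ Λ → 0 < T →
    T ≤ 2 * R → 0 ≤ G → 0 ≤ S → G ^ (8 / 5 : ℝ) ≤ H → G ^ (6 / 5 : ℝ) ≤ H → S ≤ 2 * H →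
    ∃ δ, 0 < δ ∧ δ ≤ ε1 * h ∧
      (ε1 * h) * (G * (G / h + (Vc * Λ * (R * G ^ (3 / 5 : ℝ))) / h ^ 2)) +
      δ ^ (2 - 3 / p) * ((Λ * R ^ α) / h * G ^ 2) +
      δ ^ (-m) * ((Λ * R ^ α) / h * (4 * Vc ^ 2 * Λ ^ 2 * (R ^ (1 - α + m * κ0) * S))) +
      T * ((Vc * Λ * (R * G ^ (3 / 5 : ℝ))) / h * T ^ (3 - 3 / 2 : ℝ) *
          ((ε1 * h) ^ (-(7/2) : ℝ) * (Vc * Λ * (R * G ^ (3 / 5 : ℝ)))) +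
        (Λ * R ^ α) / h * T ^ (3 - 3 / p) * ((ε1 * h) ^ (-1 - (3 + m - 3 / p)) *
          (4 * Vc ^ 2 * Λ ^ 2 * (R ^ (1 - α + m * κ0) * S)))) ≤
      2 * ε1 * G ^ 2 + C * (Λ ^ N * H) := by
  set w := 2 - 3 / p with hw
  have w0 : 0 < w := w_pos p1
  have w1 : w < 1 := w_lt p1 p3
  have V1 := Vc_one
  have V0 : 0 < Vc := by linarith
  set ε' := ε1 ^ (1 / w) with hε'
  have ε'0 : 0 < ε' := Real.rpow_pos_of_pos ε0 _
  have ε'1 : ε' ≤ ε1 := by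
    have : (1:ℝ) ≤ 1 / w := by rw [le_div_iff₀ w0]; linarith
    calc ε' ≤ ε1 ^ (1:ℝ) := Real.rpow_le_rpow_of_exponent_ge ε0 ε1' this
      _ = ε1 := Real.rpow_one _
  have ε'w : ε' ^ w = ε1 := by
    rw [hε', ← Real.rpow_mul ε0.le, one_div_mul_cancel w0.ne', Real.rpow_one]
  set n := 2 / w with hn
  have n1 : 1 ≤ n := by rw [hn, le_div_iff₀ w0]; linarith
  set e := 4 + m - 3 / p with he
  have e0 : 0 ≤ e := by linarith
  set c3 := ε' ^ (-m) * (8 * Vc ^ 2) with hc3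
  set c4 := 2 ^ (5 / 2 : ℝ) * Vc ^ 2 * ε1 ^ (-(7/2) : ℝ) with hc4
  set c5 := 2 ^ (4 - 3 / p) * ε1 ^ (-e) * (8 * Vc ^ 2) with hc5
  have z3 : 0 ≤ c3 := by positivity
  have z4 : 0 ≤ c4 := by positivity
  have z5 : 0 ≤ c5 := by positivity
  obtain ⟨N, hN⟩ := exists_nat_ge (2 + (n * m + 4) + 13 / 2 + (e + 4))
  have nm : 0 ≤ n * m := by positivity
  refine ⟨Vc + c3 + c4 + c5, by positivity, N, ?_⟩
  intro R h T Λ G H S hR hh hk hΛ T0 hT hG S0 H8 H6 HS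
  have R0 : 0 < R := by linarith
  have Λ0 : 0 < Λ := by linarith
  have H0 : 0 ≤ H := (Real.rpow_nonneg hG _).trans H8
  have hinv := inv_scale R0 hh hk
  have G0 : 0 ≤ G ^ (3 / 5 : ℝ) := Real.rpow_nonneg hG _
  have G65 : G ^ (3 / 5 : ℝ) * G ^ (3 / 5 : ℝ) = G ^ (6 / 5 : ℝ) := by
    rw [← Real.rpow_add' hG (by norm_num)]; norm_num
  have G85 : G * G ^ (3 / 5 : ℝ) = G ^ (8 / 5 : ℝ) := by
    nth_rewrite 1 [← Real.rpow_one G]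
    rw [← Real.rpow_add' hG (by norm_num)]; norm_num
  have Λx : ∀ {x : ℝ}, x ≤ N → Λ ^ x ≤ Λ ^ N := by
    intro x hx
    rw [← Real.rpow_natCast]
    exact Real.rpow_le_rpow_of_exponent_le hΛ hx
  have Rp : ∀ x : ℝ, 0 < R ^ x := fun x => Real.rpow_pos_of_pos R0 x
  have Lp : ∀ x : ℝ, 0 < Λ ^ x := fun x => Real.rpow_pos_of_pos Λ0 x
  have L2 : Λ ^ (2:ℝ) = Λ * Λ := by
    rw [show (2:ℝ) = ((2:ℕ):ℝ) by norm_num, Real.rpow_natCast]; ring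
  set δ := ε' * (Λ ^ (-n) * R ^ κ0) with hδ
  have δ0 : 0 < δ := by have := Rp κ0; have := Lp (-n); positivity
  have Pu : Λ * R ^ α / h ≤ Λ * Λ * R ^ (α - 1) := by
    calc Λ * R ^ α / h = Λ * R ^ α * (1 / h) := by ring
      _ ≤ Λ * R ^ α * (Λ * R⁻¹) := by have := Rp α; gcongr
      _ = _ := by rw [Real.rpow_sub_one R0.ne']; ring
  have Pu0 : 0 ≤ Λ * R ^ α / h := by have := Rp α; positivity
  refine ⟨δ, δ0, ?_, ?_⟩
  · have a1 : Λ ^ (-n) ≤ Λ⁻¹ := by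
      rw [← Real.rpow_neg_one]
      exact Real.rpow_le_rpow_of_exponent_le hΛ (by linarith)
    have a2 : R ^ κ0 ≤ R := by
      calc R ^ κ0 ≤ R ^ (1:ℝ) := Real.rpow_le_rpow_of_exponent_le hR k1
        _ = R := Real.rpow_one _
    have a3 : Λ⁻¹ * R ≤ h := by
      rw [div_le_iff₀ hh] at hk
      rw [inv_mul_le_iff₀ Λ0]; exact hk
    have : Λ ^ (-n) * R ^ κ0 ≤ h := le_trans (by have := Rp κ0; gcongr) a3
    rw [hδ]
    exact mul_le_mul ε'1 this (by have := Rp κ0; have := Lp (-n); positivity) ε0.le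
  -- the five contributions, in the order in which they appear
  have t1 : (ε1 * h) * (G * (G / h + (Vc * Λ * (R * G ^ (3 / 5 : ℝ))) / h ^ 2)) ≤
      ε1 * G ^ 2 + Vc * (Λ ^ N * H) := by
    have eq : (ε1 * h) * (G * (G / h + (Vc * Λ * (R * G ^ (3 / 5 : ℝ))) / h ^ 2)) =
        ε1 * G ^ 2 + ε1 * (Vc * (Λ * (R / h) * (G * G ^ (3 / 5 : ℝ)))) := by
      field_simp
    rw [eq, G85]
    have : Λ * (R / h) ≤ Λ ^ N := by
      refine le_trans ?_ (Λx (x := 2) (by linarith))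
      rw [L2]; gcongr
    have : Vc * (Λ * (R / h) * G ^ (8 / 5 : ℝ)) ≤ Vc * (Λ ^ N * H) := by
      have := Real.rpow_nonneg hG (8 / 5 : ℝ)
      gcongr
    have : ε1 * (Vc * (Λ * (R / h) * G ^ (8 / 5 : ℝ))) ≤
        1 * (Vc * (Λ * (R / h) * G ^ (8 / 5 : ℝ))) := by
      have := Real.rpow_nonneg hG (8 / 5 : ℝ)
      refine mul_le_mul_of_nonneg_right ε1' (by positivity)
    linarith
  have t2 : δ ^ w * ((Λ * R ^ α) / h * G ^ 2) ≤ ε1 * G ^ 2 := by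
    have d : δ ^ w = ε1 * ((Λ * Λ)⁻¹ * R ^ (κ0 * w)) := by
      rw [hδ, Real.mul_rpow ε'0.le (by have := Rp κ0; have := Lp (-n); positivity),
        Real.mul_rpow (Lp _).le (Rp _).le, ε'w, ← Real.rpow_mul Λ0.le, ← Real.rpow_mul R0.le,
        show -n * w = -2 by rw [hn]; field_simp, Real.rpow_neg Λ0.le, L2]
    have : δ ^ w * ((Λ * R ^ α) / h) ≤ ε1 := by
      rw [d]
      calc _ ≤ ε1 * ((Λ * Λ)⁻¹ * R ^ (1 - α)) * (Λ * Λ * R ^ (α - 1)) := by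
            refine mul_le_mul ?_ Pu Pu0 (by have := Rp (1 - α); positivity)
            have : R ^ (κ0 * w) ≤ R ^ (1 - α) :=
              Real.rpow_le_rpow_of_exponent_le hR (by linarith)
            gcongr
        _ = ε1 * (R ^ (1 - α) * R ^ (α - 1)) := by field_simp
        _ = ε1 := by rw [← Real.rpow_add R0]; simp
    rw [← mul_assoc]
    exact mul_le_mul_of_nonneg_right this (by positivity)
  set y := 1 - α + m * κ0 with hy
  have FH : 4 * Vc ^ 2 * Λ ^ 2 * (R ^ y * S) ≤ 8 * Vc ^ 2 * (Λ * Λ) * (R ^ y * H) := by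
    have := Rp y
    calc _ ≤ 4 * Vc ^ 2 * Λ ^ 2 * (R ^ y * (2 * H)) := by gcongr
      _ = _ := by ring
  have FH0 : 0 ≤ 4 * Vc ^ 2 * Λ ^ 2 * (R ^ y * S) := by have := Rp y; positivity
  have t3 : δ ^ (-m) * ((Λ * R ^ α) / h * (4 * Vc ^ 2 * Λ ^ 2 * (R ^ y * S))) ≤
      c3 * (Λ ^ N * H) := by
    have d : δ ^ (-m) = ε' ^ (-m) * (Λ ^ (n * m) * R ^ (-(κ0 * m))) := by
      rw [hδ, Real.mul_rpow ε'0.le (by have := Rp κ0; have := Lp (-n); positivity),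
        Real.mul_rpow (Lp _).le (Rp _).le, ← Real.rpow_mul Λ0.le, ← Real.rpow_mul R0.le]
      congr 3 <;> ring_nf
    have rr : R ^ (-(κ0 * m)) * R ^ (α - 1) * R ^ y = 1 := by
      rw [← Real.rpow_add R0, ← Real.rpow_add R0,
        show -(κ0 * m) + (α - 1) + y = 0 by rw [hy]; ring, Real.rpow_zero]
    have ll : Λ ^ (n * m) * (Λ * Λ * (Λ * Λ)) ≤ Λ ^ N := by
      rw [← L2, ← Real.rpow_add Λ0, ← Real.rpow_add Λ0]
      exact Λx (by linarith)
    rw [d]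
    have q1 := Rp (-(κ0 * m)); have q2 := Lp (n * m)
    have q3 := Rp (α - 1); have q4 := Rp y
    calc _ ≤ ε' ^ (-m) * (Λ ^ (n * m) * R ^ (-(κ0 * m))) *
          ((Λ * Λ * R ^ (α - 1)) * (8 * Vc ^ 2 * (Λ * Λ) * (R ^ y * H))) := by
          refine mul_le_mul_of_nonneg_left (mul_le_mul Pu FH FH0 (by positivity)) (by positivity)
      _ = c3 * ((Λ ^ (n * m) * (Λ * Λ * (Λ * Λ))) * H) *
            (R ^ (-(κ0 * m)) * R ^ (α - 1) * R ^ y) := by rw [hc3]; ring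
      _ ≤ _ := by rw [rr, mul_one]; gcongr
  have t4 : T * ((Vc * Λ * (R * G ^ (3 / 5 : ℝ))) / h * T ^ (3 - 3 / 2 : ℝ) *
      ((ε1 * h) ^ (-(7/2) : ℝ) * (Vc * Λ * (R * G ^ (3 / 5 : ℝ))))) ≤ c4 * (Λ ^ N * H) := by
    have a1 : T * T ^ (3 - 3 / 2 : ℝ) ≤ 2 ^ (5 / 2 : ℝ) * R ^ (5 / 2 : ℝ) := by
      rw [← Real.rpow_one_add' T0.le (by norm_num), ← Real.mul_rpow (by norm_num) R0.le,
        show (1 + (3 - 3 / 2) : ℝ) = 5 / 2 by norm_num]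
      exact Real.rpow_le_rpow T0.le hT (by norm_num)
    have a2 := scale_neg (x := 7 / 2) R0 hh Λ0 hk ε0 (by norm_num)
    have ll : Λ * Λ * Λ * Λ ^ (7 / 2 : ℝ) ≤ Λ ^ N := by
      rw [← L2, ← Real.rpow_add_one Λ0.ne', ← Real.rpow_add Λ0]
      exact Λx (by linarith)
    have rr : R ^ (5 / 2 : ℝ) * (R * R * R⁻¹ * R ^ (-(7 / 2) : ℝ)) = 1 := by
      rw [show R * R * R⁻¹ = R by field_simp, mul_comm R, ← Real.rpow_add_one R0.ne',
        ← Real.rpow_add R0]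
      norm_num
    have q1 := Rp (5 / 2 : ℝ); have q2 := Rp (-(7 / 2) : ℝ); have q3 := Lp (7 / 2 : ℝ)
    have q4 := Real.rpow_pos_of_pos T0 (3 - 3 / 2 : ℝ)
    calc _ = (T * T ^ (3 - 3 / 2 : ℝ)) * ((ε1 * h) ^ (-(7/2) : ℝ)) * (1 / h) *
          ((Vc * Λ * R) ^ 2 * (G ^ (3 / 5 : ℝ) * G ^ (3 / 5 : ℝ))) := by ring
      _ ≤ (2 ^ (5 / 2 : ℝ) * R ^ (5 / 2 : ℝ)) *
          (ε1 ^ (-(7/2) : ℝ) * (Λ ^ (7/2 : ℝ) * R ^ (-(7/2) : ℝ))) * (Λ * R⁻¹) *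
          ((Vc * Λ * R) ^ 2 * H) := by
          rw [G65]
          have := Real.rpow_nonneg hG (6 / 5 : ℝ)
          gcongr
      _ = c4 * ((Λ * Λ * Λ * Λ ^ (7 / 2 : ℝ)) * H) *
          (R ^ (5 / 2 : ℝ) * (R * R * R⁻¹ * R ^ (-(7 / 2) : ℝ))) := by rw [hc4]; ring
      _ ≤ _ := by rw [rr, mul_one]; gcongr
  have t5 : T * ((Λ * R ^ α) / h * T ^ (3 - 3 / p) * ((ε1 * h) ^ (-1 - (3 + m - 3 / p)) *
      (4 * Vc ^ 2 * Λ ^ 2 * (R ^ y * S)))) ≤ c5 * (Λ ^ N * H) := by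
    have a1 : T * T ^ (3 - 3 / p) ≤ 2 ^ (4 - 3 / p) * R ^ (4 - 3 / p) := by
      rw [← Real.rpow_one_add' T0.le (by linarith), ← Real.mul_rpow (by norm_num) R0.le,
        show (1 + (3 - 3 / p) : ℝ) = 4 - 3 / p by ring]
      exact Real.rpow_le_rpow T0.le hT (by linarith)
    have a2 := scale_neg (x := e) R0 hh Λ0 hk ε0 e0
    rw [show -1 - (3 + m - 3 / p) = -e by rw [he]; ring]
    have ll : Λ * Λ * (Λ * Λ) * Λ ^ e ≤ Λ ^ N := by
      rw [← L2, ← Real.rpow_add Λ0, ← Real.rpow_add Λ0]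
      exact Λx (by linarith)
    have rr : R ^ (4 - 3 / p) * R ^ (-e) * R ^ (α - 1) * R ^ y ≤ 1 := by
      rw [← Real.rpow_add R0, ← Real.rpow_add R0, ← Real.rpow_add R0]
      refine Real.rpow_le_one_of_one_le_of_nonpos hR ?_
      rw [he, hy]; nlinarith
    have q1 := Rp (4 - 3 / p); have q2 := Rp (-e); have q3 := Lp e
    have q4 := Rp (α - 1); have q6 := Rp y
    have q5 := Real.rpow_pos_of_pos T0 (3 - 3 / p)
    calc _ = (T * T ^ (3 - 3 / p)) * ((ε1 * h) ^ (-e)) * (Λ * R ^ α / h) *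
          (4 * Vc ^ 2 * Λ ^ 2 * (R ^ y * S)) := by ring
      _ ≤ (2 ^ (4 - 3 / p) * R ^ (4 - 3 / p)) * (ε1 ^ (-e) * (Λ ^ e * R ^ (-e))) *
          (Λ * Λ * R ^ (α - 1)) * (8 * Vc ^ 2 * (Λ * Λ) * (R ^ y * H)) := by
          refine mul_le_mul ?_ FH FH0 (by positivity)
          refine mul_le_mul ?_ Pu Pu0 (by positivity)
          refine mul_le_mul a1 a2 (by positivity) (by positivity)
      _ = c5 * ((Λ * Λ * (Λ * Λ) * Λ ^ e) * H) *
          (R ^ (4 - 3 / p) * R ^ (-e) * R ^ (α - 1) * R ^ y) := by rw [hc5]; ring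
      _ ≤ c5 * (Λ ^ N * H) * 1 := by
          refine mul_le_mul ?_ rr (by positivity) (by positivity)
          gcongr
      _ = _ := mul_one _
  rw [mul_add T]
  linarith

/-- The pressure flux through the shell, for `u` and `v` with admissible growth. -/
lemma Sys.press {p α q β C0 : ℝ} (p1 : 3/2 < p) (p3 : p < 3) (α0 : 0 ≤ α) (hα : α ≤ 2 / p - 1 / 3)
    (ad : Adm p α q β) (hC0 : 0 ≤ C0) : ∃ σ, 0 < σ ∧ σ ≤ 1 ∧ ∀ ε : ℝ, 0 < ε → ∃ C, 0 ≤ C ∧ ∃ N : ℕ,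
    ∀ {u v : Fin 3 → E3 → ℝ} {pr θ φ : E3 → ℝ} {R ρ h Λ G : ℝ}, Sys u v pr θ → Geo R ρ h →
    Cut ρ h C0 φ → 1 ≤ Λ → R / h ≤ Λ → 0 ≤ G →
    (∀ i, nr 2 (gr (u i)) (An ρ (ρ + 8 * h)) ≤ G) → (∀ i, nr 2 (gr (v i)) (An ρ (ρ + 8 * h)) ≤ G) →
    (∀ i, nr 6 (u i) (An ρ (ρ + 8 * h)) ≤ G) → (∀ i, nr 6 (v i) (An ρ (ρ + 8 * h)) ≤ G) →
    (∀ i, nr p (u i) (An ρ (ρ + 8 * h)) ≤ Λ * R ^ α) →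
    (∀ i, nr q (v i) (An ρ (ρ + 8 * h)) ≤ Λ * R ^ β) →
    |∑ j, ∫ x, pr x * (u j x * pd3 j φ x)| ≤ ε * G ^ 2 + C * (Λ ^ N * Hs σ G) := by
  have p0 : 0 < p := by linarith
  have ap : Adm p α p α := Adm.self p1 p3 α0 hα
  set w := 2 - 3 / p with hw
  have w0 : 0 < w := w_pos p1
  have w1 : w < 1 := w_lt p1 p3
  set Kp := 6 / p - 1 with hKp
  set Kq := 6 / q - 1 with hKq
  have wp : w < Kp := ap.w
  have wq : w < Kq := ad.w
  have Kp0 : 0 < Kp := by linarith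
  have Kq0 : 0 < Kq := by linarith
  have α1 : α ≤ 1 := by
    have : 2 / p < 4 / 3 := by rw [div_lt_iff₀ p0]; linarith
    linarith
  -- a small gain of integrability `m`, making `2 t2` lie strictly below the critical exponent
  obtain ⟨m, m0, m1, mp, mq⟩ : ∃ m, 0 < m ∧ m ≤ 1 ∧ w + m < Kp ∧ w + m < Kq := by
    refine ⟨min 1 (min ((Kp - w) / 2) ((Kq - w) / 2)), ?_, min_le_left _ _, ?_, ?_⟩
    · refine lt_min one_pos (lt_min ?_ ?_) <;> linarith
    · have := (min_le_right 1 (min ((Kp - w) / 2) ((Kq - w) / 2))).trans (min_le_left _ _)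
      linarith
    · have := (min_le_right 1 (min ((Kp - w) / 2) ((Kq - w) / 2))).trans (min_le_right _ _)
      linarith
  have e3 : 3 / p = 3 * (1 / p) := by ring
  have ip0 : 1 < 3 / p := by linarith
  have ip1 : 3 / p < 2 := by linarith
  set t2 := 1 / (1 + m / 3 - 1 / p) with ht2
  have d0 : 0 < 1 + m / 3 - 1 / p := by linarith
  have it2 : 1 / t2 = 1 + m / 3 - 1 / p := by rw [ht2, one_div_one_div]
  have t21 : 1 ≤ t2 := by rw [ht2, le_div_iff₀ d0]; linarith
  have t20 : 0 < t2 := by linarith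
  have i3 : 3 / t2 = 3 + m - 3 / p := by
    rw [show 3 / t2 = 3 * (1 / t2) by ring, it2]; ring
  have i6 : 6 / (2 * t2) = 1 + (w + m) := by
    rw [show 6 / (2 * t2) = 3 / t2 by field_simp; norm_num, i3, hw]; ring
  obtain ⟨κ0, k1, kw, kp, kq⟩ : ∃ κ0, κ0 ≤ 1 ∧ w * κ0 ≤ 1 - α ∧ 2 * α / Kp ≤ κ0 ∧
      2 * β / Kq ≤ κ0 := by
    have key : ∀ {s a}, Adm p α s a → 2 * a / (6 / s - 1) ≤ 1 ∧
        2 * a / (6 / s - 1) ≤ (1 - α) / w := by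
      intro s a h
      have K0 : 0 < 6 / s - 1 := w0.trans h.w
      have := h.a1
      have := h.ab
      constructor
      · rw [div_le_one K0]; linarith
      · rw [div_le_div_iff₀ K0 w0]; linarith
    refine ⟨min 1 ((1 - α) / w), min_le_left _ _, ?_, ?_, ?_⟩
    · have := min_le_right 1 ((1 - α) / w)
      rw [le_div_iff₀ w0] at this; linarith
    · exact le_min (key ap).1 (key ap).2
    · exact le_min (key ad).1 (key ad).2
  set xp := 1 - (w + m) / Kp with hxp
  set xq := 1 - (w + m) / Kq with hxq
  have xb : ∀ {K}, 0 < K → w + m < K → 0 < 1 - (w + m) / K ∧ 1 - (w + m) / K < 1 := by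
    intro K K0 h
    have a : 0 < (w + m) / K := by positivity
    have b : (w + m) / K < 1 := by rw [div_lt_one K0]; exact h
    constructor <;> linarith
  have xp0 := xb Kp0 mp
  have xq0 := xb Kq0 mq
  obtain ⟨σ, σ0, s1, s2, s3, s4, s5⟩ : ∃ σ, 0 < σ ∧ σ ≤ 2 / 5 ∧ σ ≤ 2 * xp ∧ 2 * xp ≤ 2 - σ ∧
      σ ≤ 2 * xq ∧ 2 * xq ≤ 2 - σ := by
    refine ⟨min (2 / 5) (min (min (2 * xp) (2 - 2 * xp)) (min (2 * xq) (2 - 2 * xq))), ?_, ?_, ?_, ?_,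
      ?_, ?_⟩
    · refine lt_min (by norm_num) (lt_min (lt_min ?_ ?_) (lt_min ?_ ?_)) <;> linarith
    · exact min_le_left _ _
    · exact (min_le_right _ _).trans ((min_le_left _ _).trans (min_le_left _ _))
    · have : _ ≤ 2 - 2 * xp := (min_le_right (2 / 5 : ℝ) _).trans
        ((min_le_left _ (min (2 * xq) (2 - 2 * xq))).trans (min_le_right (2 * xp) _))
      linarith
    · exact (min_le_right _ _).trans ((min_le_right _ _).trans (min_le_left _ _))
    · have : _ ≤ 2 - 2 * xq := (min_le_right (2 / 5 : ℝ) _).trans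
        ((min_le_right (min (2 * xp) (2 - 2 * xp)) _).trans (min_le_right (2 * xq) _))
      linarith
  refine ⟨σ, σ0, by linarith, fun ε hε => ?_⟩
  obtain ⟨C1, c1, H1⟩ := Sys.press_raw p1 p3.le t21 m0 (by rw [it2]; ring) hC0
  set ε1 := min 1 (ε / (2 * (C1 + 1))) with hε1
  have ε0 : 0 < ε1 := lt_min one_pos (by positivity)
  have εe : C1 * (2 * ε1) ≤ ε := by
    have a : ε1 ≤ ε / (2 * (C1 + 1)) := min_le_right _ _
    rw [le_div_iff₀ (by positivity)] at a
    nlinarith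
  obtain ⟨C2, c2, N, H2⟩ := press_num p1 p3 m0 k1 kw ε0 (min_le_left _ _)
  refine ⟨C1 * C2, by positivity, N, ?_⟩
  intro u v pr θ φ R ρ h Λ G sys geo cut Λ1 hk G0 gu gv u6 v6 up vq
  have R1 := geo.R1
  have R0 := geo.R0
  have h0 := geo.h0
  have Λ0 : 0 < Λ := by linarith
  set A := An ρ (ρ + 8 * h) with hA
  have kA : IsCompact A := An_compact _ _
  have hAR : ∀ x ∈ A, ‖x‖ ≤ 2 * R := fun x hx => hx.2.trans (by linarith [geo.top])
  have V1 := Vc_one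
  have gG : G ≤ Λ * G := le_mul_of_one_le_left G0 Λ1
  have fu : ∀ i, Fld A R Λ G (u i) p α := fun i => ⟨(sys.su i).cont, up i, (u6 i).trans gG⟩
  have fv : ∀ i, Fld A R Λ G (v i) q β := fun i => ⟨(sys.sv i).cont, vq i, (v6 i).trans gG⟩
  have mu := fun i => (fu i).mid kA R1 Λ0.le G0 hAR ap.s1 (σ := 2 * t2) (y := w + m) (by linarith)
    (by linarith) mp i6
  have mv := fun i => (fv i).mid kA R1 Λ0.le G0 hAR ad.s1 (σ := 2 * t2) (y := w + m) (by linarith)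
    (by linarith) mq i6
  set S := G ^ (2 * xp) + G ^ (2 * xq) with hS
  have sq : ∀ {K a x : ℝ}, 0 < K → 0 ≤ a → α * K + 2 * a * w ≤ K → 2 * a / K ≤ κ0 →
      (Vc * Λ * (R ^ (a * (w + m) / K) * G ^ x)) * (Vc * Λ * (R ^ (a * (w + m) / K) * G ^ x)) ≤
      Vc ^ 2 * Λ ^ 2 * (R ^ (1 - α + m * κ0) * G ^ (2 * x)) := by
    intro K a x K0 a0 h1 h2
    have g2 : G ^ (2 * x) = G ^ x * G ^ x := by
      rw [mul_comm, Real.rpow_mul G0, show (2:ℝ) = ((2:ℕ):ℝ) by norm_num, Real.rpow_natCast]; ring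
    have r2 : R ^ (a * (w + m) / K) * R ^ (a * (w + m) / K) ≤ R ^ (1 - α + m * κ0) := by
      rw [← Real.rpow_add R0]
      refine Real.rpow_le_rpow_of_exponent_le R1 ?_
      have e1 : a * (w + m) / K + a * (w + m) / K = 2 * a * w / K + m * (2 * a / K) := by ring
      have e2 : 2 * a * w / K ≤ 1 - α := by rw [div_le_iff₀ K0]; linarith
      have e3 : m * (2 * a / K) ≤ m * κ0 := mul_le_mul_of_nonneg_left h2 m0.le
      linarith
    have := Real.rpow_nonneg G0 x
    calc _ = Vc ^ 2 * Λ ^ 2 * ((R ^ (a * (w + m) / K) * R ^ (a * (w + m) / K)) *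
          (G ^ x * G ^ x)) := by ring
      _ ≤ _ := by rw [g2]; gcongr
  have hF : ∀ i j, nr t2 (Fs u v i j) A ≤
      4 * Vc ^ 2 * Λ ^ 2 * (R ^ (1 - α + m * κ0) * S) := by
    intro i j
    have prod : ∀ {f g : E3 → ℝ} {B : ℝ}, Continuous f → Continuous g → nr (2 * t2) f A ≤ B →
        nr (2 * t2) g A ≤ B → nr t2 (fun x => f x * g x) A ≤ B * B := by
      intro f g B cf cg hf hg
      have n := nr_nonneg (2 * t2) f A
      refine (nr_mul kA cf cg (a := 2 * t2) (b := 2 * t2) (by linarith) (by linarith) t20 ?_).trans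
        (mul_le_mul hf hg (nr_nonneg _ _ _) (n.trans hf))
      field_simp; norm_num
    have cu : Continuous fun x => u i x * u j x := (sys.su i).cont.mul (sys.su j).cont
    have cv : Continuous fun x => v i x * v j x := (sys.sv i).cont.mul (sys.sv j).cont
    have cF : Continuous (Fs u v i j) := cu.add cv
    have a1 := (prod (fu i).cont (fu j).cont (mu i) (mu j)).trans (sq Kp0 α0 ap.ab kp)
    have a2 := (prod (fv i).cont (fv j).cont (mv i) (mv j)).trans (sq Kq0 ad.a0 ad.ab kq)
    have := nr_add t21 cu cv cF kA fun x _ => abs_add_le (u i x * u j x) (v i x * v j x)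
    have X : 0 ≤ Vc ^ 2 * Λ ^ 2 * (R ^ (1 - α + m * κ0) * S) := by
      have := Real.rpow_nonneg G0 (2 * xp); have := Real.rpow_nonneg G0 (2 * xq)
      positivity
    have e : 2 * (Vc ^ 2 * Λ ^ 2 * (R ^ (1 - α + m * κ0) * G ^ (2 * xp)) +
        Vc ^ 2 * Λ ^ 2 * (R ^ (1 - α + m * κ0) * G ^ (2 * xq))) =
        2 * (Vc ^ 2 * Λ ^ 2 * (R ^ (1 - α + m * κ0) * S)) := by rw [hS]; ring
    linarith
  have b8 : G ^ (8 / 5 : ℝ) ≤ Hs σ G := rpow_le_Hs G0 σ0.le (by linarith) (by linarith)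
  have b6 : G ^ (6 / 5 : ℝ) ≤ Hs σ G := rpow_le_Hs G0 σ0.le (by linarith) (by linarith)
  have bS : S ≤ 2 * Hs σ G := by
    have := rpow_le_Hs G0 σ0.le s2 s3
    have := rpow_le_Hs G0 σ0.le s4 s5
    linarith
  have S0 : 0 ≤ S := add_nonneg (Real.rpow_nonneg G0 _) (Real.rpow_nonneg G0 _)
  obtain ⟨δ, δ0, δl, hfin⟩ := H2 (T := ρ + 8 * h) R1 h0 hk Λ1 (by linarith [geo.ρ0])
    (by linarith [geo.top]) G0 S0 b8 b6 bS
  have ls : ε1 * h ≤ h := mul_le_of_le_one_left h0.le (min_le_left _ _)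
  have raw := H1 sys geo.ρ0 h0 cut δ0 δl ls gu gv u6 v6 up
    (fun i => (fu i).two kA R1 Λ0.le G0 hAR ap.s1 ap.a1) hF
  rw [i3] at raw
  refine raw.trans ((mul_le_mul_of_nonneg_left hfin c1).trans ?_)
  have : C1 * (2 * ε1) * G ^ 2 ≤ ε * G ^ 2 := mul_le_mul_of_nonneg_right εe (by positivity)
  calc _ = C1 * (2 * ε1) * G ^ 2 + C1 * C2 * (Λ ^ N * Hs σ G) := by ring
    _ ≤ _ := by linarith

end TCM

namespace TCM

/-! ### Cubic and bilinear flux terms -/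

lemma shell_int {f ψ : E3 → ℝ} (hf : Continuous f) {A : Set E3} (hA : IsCompact A)
    (h0 : ∀ x, x ∉ A → ψ x = 0) {B : ℝ} (hB : ∀ x, |ψ x| ≤ B) :
    |∫ x, f x * ψ x| ≤ B * ∫ x in A, |f x| := by
  have e : ∫ x, f x * ψ x = ∫ x in A, f x * ψ x :=
    (setIntegral_eq_integral_of_forall_compl_eq_zero fun x hx => by rw [h0 x hx, mul_zero]).symm
  rw [e, ← integral_const_mul]
  have c : Continuous fun x => B * |f x| := continuous_const.mul hf.abs
  refine norm_integral_le_of_norm_le (f := fun x => f x * ψ x) (intOn c hA)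
    (ae_of_all _ fun x => ?_)
  rw [Real.norm_eq_abs, abs_mul, mul_comm]
  exact mul_le_mul_of_nonneg_right (hB x) (abs_nonneg _)

lemma int_sq (f : E3 → ℝ) (A : Set E3) : ∫ x in A, f x ^ 2 = nr 2 f A ^ 2 := by
  have := nr_pow (s := 2) (by norm_num) f A
  rw [show (2:ℝ) = ((2:ℕ):ℝ) by norm_num] at this
  simp only [Real.rpow_natCast, sq_abs] at this
  rw [← this]; norm_num

variable {u v : Fin 3 → E3 → ℝ} {pr θ : E3 → ℝ}

lemma Qd_nonneg (u v : Fin 3 → E3 → ℝ) (θ : E3 → ℝ) (x : E3) : 0 ≤ Qd u v θ x :=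
  add_nonneg (Finset.sum_nonneg fun _ _ => add_nonneg (mul_self_nonneg _) (mul_self_nonneg _))
    (mul_self_nonneg _)

lemma Sys.int_Qd (h : Sys u v pr θ) {A : Set E3} (hA : IsCompact A) {g : E3 → ℝ} (hg : Continuous g)
    {B : ℝ} (hu : ∀ i, ∫ x in A, g x * u i x ^ 2 ≤ B) (hv : ∀ i, ∫ x in A, g x * v i x ^ 2 ≤ B)
    (ht : ∫ x in A, g x * θ x ^ 2 ≤ B) : ∫ x in A, g x * Qd u v θ x ≤ 7 * B := by
  have I : ∀ {f : E3 → ℝ}, Continuous f → IntegrableOn (fun x => g x * f x ^ 2) A := by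
    intro f hf
    have c : Continuous fun x => g x * f x ^ 2 := hg.mul (hf.pow 2)
    exact intOn c hA
  have Iu := fun i => I (h.su i).cont
  have Iv := fun i => I (h.sv i).cont
  have Iw : ∀ i, IntegrableOn (fun x => g x * u i x ^ 2 + g x * v i x ^ 2) A :=
    fun i => (Iu i).add (Iv i)
  have Is : IntegrableOn (fun x => ∑ i, (g x * u i x ^ 2 + g x * v i x ^ 2)) A :=
    integrable_finsetSum _ fun i _ => Iw i
  have e : ∫ x in A, g x * Qd u v θ x = (∑ i, ((∫ x in A, g x * u i x ^ 2) +
      ∫ x in A, g x * v i x ^ 2)) + ∫ x in A, g x * θ x ^ 2 := by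
    have e1 : ∀ x, g x * Qd u v θ x =
        (∑ i, (g x * u i x ^ 2 + g x * v i x ^ 2)) + g x * θ x ^ 2 := fun x => by
      simp only [Qd, Fin.sum_univ_three]; ring
    simp only [e1]
    rw [integral_add Is (I h.st.cont), integral_finsetSum _ fun i _ => Iw i]
    congr 1
    exact Finset.sum_congr rfl fun i _ => integral_add (Iu i) (Iv i)
  rw [e, Fin.sum_univ_three]
  have := hu 0; have := hu 1; have := hu 2; have := hv 0; have := hv 1; have := hv 2
  linarith

lemma Wd_le (u v : Fin 3 → E3 → ℝ) (θ : E3 → ℝ) (j : Fin 3) (x : E3) :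
    |Wd u v θ j x| ≤ 2 * (∑ i, |u i x| * Qd u v θ x) + |θ x| * |v j x| := by
  have Q0 := Qd_nonneg u v θ x
  have hv : ∀ i, v i x ^ 2 ≤ Qd u v θ x := by
    intro i
    have : v i x * v i x ≤ ∑ i, (u i x * u i x + v i x * v i x) := by
      refine le_trans ?_ (Finset.single_le_sum (f := fun i => u i x * u i x + v i x * v i x)
        (fun i _ => add_nonneg (mul_self_nonneg _) (mul_self_nonneg _)) (Finset.mem_univ i))
      have := mul_self_nonneg (u i x)
      linarith
    have := mul_self_nonneg (θ x)
    unfold Qd; nlinarith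
  have a1 : |1 / 2 * (u j x * Qd u v θ x)| ≤ ∑ i, |u i x| * Qd u v θ x := by
    rw [abs_mul, abs_mul, abs_of_nonneg Q0]
    have : |u j x| * Qd u v θ x ≤ ∑ i, |u i x| * Qd u v θ x :=
      Finset.single_le_sum (f := fun i => |u i x| * Qd u v θ x)
        (fun i _ => mul_nonneg (abs_nonneg _) Q0) (Finset.mem_univ j)
    have : 0 ≤ |u j x| * Qd u v θ x := mul_nonneg (abs_nonneg _) Q0
    rw [abs_of_nonneg (by norm_num : (0:ℝ) ≤ 1 / 2)]
    linarith
  have a2 : |v j x * ∑ i, v i x * u i x| ≤ ∑ i, |u i x| * Qd u v θ x := by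
    rw [Finset.mul_sum]
    refine (Finset.abs_sum_le_sum_abs _ _).trans (Finset.sum_le_sum fun i _ => ?_)
    rw [show v j x * (v i x * u i x) = u i x * (v j x * v i x) by ring, abs_mul]
    refine mul_le_mul_of_nonneg_left ?_ (abs_nonneg _)
    have := hv i; have := hv j
    rw [abs_le]; constructor <;> nlinarith [sq_nonneg (v j x - v i x), sq_nonneg (v j x + v i x)]
  unfold Wd
  refine (abs_add_le _ _).trans (add_le_add ((abs_add_le _ _).trans (by linarith)) ?_)
  rw [abs_mul]

/-- Exponents `tv, tθ` for which the interpolated product of `v` and `θ` in `L² × L²` grows at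
most linearly. -/
structure Bil (q β r γ tv tθ : ℝ) : Prop where
  v0 : 0 ≤ tv
  v1 : tv ≤ 1
  t0 : 0 ≤ tθ
  t1 : tθ ≤ 1
  s0 : 0 < tv + tθ
  s2 : tv + tθ < 2
  iv : (1 - tv) / q + tv / 6 ≤ 1 / 2
  it : (1 - tθ) / r + tθ / 6 ≤ 1 / 2
  e : ((1 - tv) * (β - 3 / q) + 3 / 2 - tv / 2) + ((1 - tθ) * (γ - 3 / r) + 3 / 2 - tθ / 2) ≤ 1

/-- A cubic flux term: Hölder with exponents `p` and `p'`, and interpolation of `f` in `L^{2p'}`. Under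
`Adm` the growth is at most linear in `R`, which the derivative of the cutoff compensates. -/
lemma cubic {A : Set E3} (hA : IsCompact A) {R L G p α s a : ℝ} {g f : E3 → ℝ} (p1 : 3 / 2 < p)
    (hg : Continuous g) (hgp : nr p g A ≤ L * R ^ α) (hf : Fld A R L G f s a) (ad : Adm p α s a)
    (hR : 1 ≤ R) (hL : 0 ≤ L) (hG : 0 ≤ G) (hAR : ∀ x ∈ A, ‖x‖ ≤ 2 * R) :
    ∫ x in A, |g x| * f x ^ 2 ≤
      Vc ^ 2 * L ^ 3 * (R * G ^ (2 * (1 - (2 - 3 / p) / (6 / s - 1)))) := by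
  have p0 : 0 < p := by linarith
  have pm : 0 < p - 1 := by linarith
  have R0 : 0 < R := by linarith
  have w0 := w_pos p1
  have p' : 1 / 2 < p / (p - 1) := by rw [lt_div_iff₀ pm]; linarith
  have i6 : 6 / (2 * (p / (p - 1))) = 1 + (2 - 3 / p) := by field_simp; ring
  have K0 : 0 < 6 / s - 1 := w0.trans ad.w
  have m := hf.mid hA hR hL hG hAR ad.s1 (σ := 2 * (p / (p - 1))) (y := 2 - 3 / p) (by linarith)
    w0.le ad.w i6
  have hh := holder_sq hA hg hf.cont p0 (m := p / (p - 1)) (by positivity) (by field_simp; ring)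
  have ab := ad.ab
  generalize 2 - 3 / p = w at *
  generalize 6 / s - 1 = K at *
  refine hh.trans ?_
  have g2 : G ^ (2 * (1 - w / K)) = (G ^ (1 - w / K)) ^ 2 := by
    rw [mul_comm, Real.rpow_mul hG, show (2:ℝ) = ((2:ℕ):ℝ) by norm_num, Real.rpow_natCast]
  have rr : R ^ α * (R ^ (a * w / K) * R ^ (a * w / K)) ≤ R := by
    rw [← Real.rpow_add R0, ← Real.rpow_add R0]
    calc _ ≤ R ^ (1:ℝ) := by
          refine Real.rpow_le_rpow_of_exponent_le hR ?_
          have : a * w / K + a * w / K = 2 * a * w / K := by ring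
          rw [this]
          have : 2 * a * w / K ≤ 1 - α := by rw [div_le_iff₀ K0]; linarith
          linarith
      _ = R := Real.rpow_one _
  calc nr p g A * nr (2 * (p / (p - 1))) f A ^ 2
      ≤ (L * R ^ α) * (Vc * L * (R ^ (a * w / K) * G ^ (1 - w / K))) ^ 2 :=
        mul_le_mul hgp (pow_le_pow_left₀ (nr_nonneg _ _ _) m 2) (by positivity) (by positivity)
    _ = Vc ^ 2 * L ^ 3 * ((R ^ α * (R ^ (a * w / K) * R ^ (a * w / K))) *
          (G ^ (1 - w / K)) ^ 2) := by ring
    _ ≤ _ := by rw [g2]; gcongr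

lemma en_nonneg (u v : Fin 3 → E3 → ℝ) (θ : E3 → ℝ) (x : E3) : 0 ≤ en u v θ x := by
  unfold en; positivity

lemma Sys.en_cont (h : Sys u v pr θ) : Continuous (en u v θ) :=
  ((continuous_finsetSum _ fun i _ => (h.su i).gr_cont.pow 2).add
    (continuous_finsetSum _ fun i _ => (h.sv i).gr_cont.pow 2)).add (h.st.gr_cont.pow 2)

end TCM

namespace TCM

/-! ### The local energy inequality -/

/-- The local energy inequality: the energy in a ball is controlled by powers of the local norm `G`
with exponents strictly between `0` and `2`, and an arbitrarily small multiple of `G²`. The factor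
`R` lost in the cubic and bilinear fluxes is compensated by the cutoff. -/
lemma propA {p α q β r γ tv tθ : ℝ} (p1 : 3/2 < p) (p3 : p < 3) (α0 : 0 ≤ α)
    (hα : α ≤ 2 / p - 1 / 3) (aq : Adm p α q β) (ar : Adm p α r γ) (bil : Bil q β r γ tv tθ) :
    ∃ σ, 0 < σ ∧ σ ≤ 1 ∧ ∀ ε : ℝ, 0 < ε → ∃ C, 0 ≤ C ∧ ∃ N : ℕ,
    ∀ {u v : Fin 3 → E3 → ℝ} {pr θ : E3 → ℝ} {R ρ h Λ G : ℝ}, Sys u v pr θ → Geo R ρ h →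
    1 ≤ Λ → R / h ≤ Λ → 0 ≤ G →
    (∀ i, nr 2 (gr (u i)) (An ρ (ρ + 8 * h)) ≤ G) → (∀ i, nr 2 (gr (v i)) (An ρ (ρ + 8 * h)) ≤ G) →
    (∀ i, nr 6 (u i) (An ρ (ρ + 8 * h)) ≤ G) → (∀ i, nr 6 (v i) (An ρ (ρ + 8 * h)) ≤ G) →
    (∀ i, nr p (u i) (An ρ (ρ + 8 * h)) ≤ Λ * R ^ α) →
    (∀ i, nr q (v i) (An ρ (ρ + 8 * h)) ≤ Λ * R ^ β) →
    nr r θ (An (ρ + 3 * h) (ρ + 5 * h)) ≤ Λ * R ^ γ →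
    nr 6 θ (An (ρ + 3 * h) (ρ + 5 * h)) ≤ Λ * G →
    ∫ x in closedBall (0:E3) ρ, en u v θ x ≤ ε * G ^ 2 + C * (Λ ^ N * Hs σ G) := by
  obtain ⟨C0, c0, Hcut⟩ := exists_cut
  obtain ⟨σ1, σ10, σ11, Hp⟩ := Sys.press p1 p3 α0 hα aq c0
  have ap : Adm p α p α := Adm.self p1 p3 α0 hα
  have w0 := w_pos p1
  have V1 := Vc_one
  have xb : ∀ {s a}, Adm p α s a → 0 < 1 - (2 - 3 / p) / (6 / s - 1) ∧
      1 - (2 - 3 / p) / (6 / s - 1) < 1 := by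
    intro s a h
    have K0 := w0.trans h.w
    have a1 : 0 < (2 - 3 / p) / (6 / s - 1) := div_pos w0 K0
    have a2 : (2 - 3 / p) / (6 / s - 1) < 1 := by rw [div_lt_one K0]; exact h.w
    constructor <;> linarith
  have xp := xb ap
  have xq := xb aq
  have xr := xb ar
  set yp := 1 - (2 - 3 / p) / (6 / p - 1) with hyp
  set yq := 1 - (2 - 3 / p) / (6 / q - 1) with hyq
  set yr := 1 - (2 - 3 / p) / (6 / r - 1) with hyr
  have pick : ∀ {l : List ℝ}, (∀ y ∈ l, 0 < y ∧ y < 2) → ∃ σ, 0 < σ ∧ σ ≤ σ1 ∧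
      ∀ y ∈ l, σ ≤ y ∧ y ≤ 2 - σ := by
    intro l
    induction l with
    | nil => exact fun _ => ⟨σ1, σ10, le_rfl, by simp⟩
    | cons y l ih =>
      intro hl
      obtain ⟨σ, a, b, c⟩ := ih fun z hz => hl z (List.mem_cons_of_mem _ hz)
      have hy := hl y List.mem_cons_self
      refine ⟨min σ (min y (2 - y)), lt_min a (lt_min hy.1 (by linarith [hy.2])),
        (min_le_left _ _).trans b, fun z hz => ?_⟩
      have m1 := min_le_left σ (min y (2 - y))
      have m2 := (min_le_right σ (min y (2 - y))).trans (min_le_left _ _)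
      have m3 := (min_le_right σ (min y (2 - y))).trans (min_le_right _ _)
      rcases List.mem_cons.1 hz with rfl | hz
      · exact ⟨m2, by linarith⟩
      · have := c z hz
        exact ⟨m1.trans this.1, by linarith [this.2]⟩
  obtain ⟨σ, σ0, σσ, hσ⟩ := pick (l := [6 / 5, 2 * yp, 2 * yq, 2 * yr, tv + tθ]) (by
    simp only [List.forall_mem_cons, List.not_mem_nil, false_imp_iff, implies_true, and_true]
    refine ⟨by norm_num, ⟨?_, ?_⟩, ⟨?_, ?_⟩, ⟨?_, ?_⟩, bil.s0, bil.s2⟩ <;> linarith)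
  simp only [List.forall_mem_cons, List.not_mem_nil, false_imp_iff, implies_true, and_true] at hσ
  obtain ⟨h6, hsp, hsq, hsr, hst⟩ := hσ
  refine ⟨σ, σ0, σσ.trans σ11, fun ε hε => ?_⟩
  obtain ⟨C1, c1, N, Hp⟩ := Hp ε hε
  refine ⟨21 / 2 * C0 * Vc ^ 2 + 130 * C0 * Vc ^ 2 + 2 * C1, by positivity, N + 4, ?_⟩
  intro u v pr θ R ρ h Λ G sys geo Λ1 hk G0 gu gv u6 v6 up vq tr t6
  have R1 := geo.R1
  have R0 := geo.R0
  have h0 := geo.h0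
  have Λ0 : 0 < Λ := by linarith
  obtain ⟨φ, cut⟩ := Hcut ρ h geo.ρ0 h0
  have kA' : IsCompact (An ρ (ρ + 8 * h)) := An_compact _ _
  set A := An (ρ + 3 * h) (ρ + 5 * h) with hA
  have kA : IsCompact A := An_compact _ _
  have AA : A ⊆ An ρ (ρ + 8 * h) := An_mono (by linarith) (by linarith)
  have hAR : ∀ x ∈ A, ‖x‖ ≤ 2 * R := fun x hx => hx.2.trans (by linarith [geo.top])
  have gG : G ≤ Λ * G := le_mul_of_one_le_left G0 Λ1
  have cu := fun i => (sys.su i).cont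
  have cv := fun i => (sys.sv i).cont
  have ct := sys.st.cont
  have p0 : 0 < p := by linarith
  have q0 : 0 < q := by linarith [aq.s1]
  have upA := fun i => (nr_mono_set p0 (cu i) kA' AA).trans (up i)
  have fu : ∀ i, Fld A R Λ G (u i) p α := fun i => ⟨cu i, upA i,
    (nr_mono_set (by norm_num) (cu i) kA' AA).trans ((u6 i).trans gG)⟩
  have fv : ∀ i, Fld A R Λ G (v i) q β := fun i => ⟨cv i,
    (nr_mono_set q0 (cv i) kA' AA).trans (vq i),
    (nr_mono_set (by norm_num) (cv i) kA' AA).trans ((v6 i).trans gG)⟩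
  have ft : Fld A R Λ G θ r γ := ⟨ct, tr, t6⟩
  have H0 := Hs_nonneg (σ := σ) G0
  set H := Hs σ G with hH
  have hinv := inv_scale R0 h0 hk
  have hinv0 : 0 ≤ 1 / h := by positivity
  have C0h : C0 / h ≤ C0 * (Λ * R⁻¹) := by
    rw [div_eq_mul_one_div]; gcongr
  have C0h2 : C0 / h ^ 2 ≤ C0 * (Λ * R⁻¹) ^ 2 := by
    have : C0 / h ^ 2 = C0 * (1 / h) ^ 2 := by field_simp
    rw [this]; gcongr
  have ΛN : ∀ {k : ℕ}, k ≤ 4 → Λ ^ k * H ≤ Λ ^ (N + 4) * H := by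
    intro k hk
    exact mul_le_mul_of_nonneg_right (pow_le_pow_right₀ Λ1 (by omega)) H0
  -- the viscous term carries two derivatives of the cutoff, which compensate `R ^ 2`
  have iQ1 : ∫ x in A, |Qd u v θ x| ≤ 7 * (Vc ^ 2 * Λ ^ 2 * (R ^ 2 * H)) := by
    have sqb : ∀ {f s a}, Fld A R Λ G f s a → Adm p α s a →
        ∫ x in A, (1:ℝ) * f x ^ 2 ≤ Vc ^ 2 * Λ ^ 2 * (R ^ 2 * H) := by
      intro f s a hf ad
      simp only [one_mul]
      rw [int_sq]
      have m := hf.two kA R1 Λ0.le G0 hAR ad.s1 ad.a1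
      have g2 : (G ^ (3 / 5 : ℝ)) ^ 2 ≤ H := by
        rw [← Real.rpow_natCast, ← Real.rpow_mul G0]
        refine rpow_le_Hs G0 σ0.le ?_ ?_ <;> push_cast <;> linarith
      calc nr 2 f A ^ 2 ≤ (Vc * Λ * (R * G ^ (3 / 5 : ℝ))) ^ 2 :=
            pow_le_pow_left₀ (nr_nonneg _ _ _) m 2
        _ = Vc ^ 2 * Λ ^ 2 * (R ^ 2 * (G ^ (3 / 5 : ℝ)) ^ 2) := by ring
        _ ≤ _ := by gcongr
    have := sys.int_Qd kA (g := fun _ => (1:ℝ)) continuous_const (fun i => sqb (fu i) ap)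
      (fun i => sqb (fv i) aq) (sqb ft ar)
    simp only [one_mul] at this
    simpa only [abs_of_nonneg (Qd_nonneg u v θ _)] using this
  have T1 : |∑ j, (1 / 2 * ∫ x, Qd u v θ x * pd3 j (pd3 j φ) x)| ≤
      21 / 2 * C0 * Vc ^ 2 * (Λ ^ (N + 4) * H) := by
    have b : ∀ j : Fin 3, |1 / 2 * ∫ x, Qd u v θ x * pd3 j (pd3 j φ) x| ≤
        7 / 2 * C0 * Vc ^ 2 * (Λ ^ (N + 4) * H) := by
      intro j
      have s := shell_int sys.sQ.cont kA
        (fun x hx => pd3_off kA.isClosed (fun y hy => cut.off j y hy) j hx) (cut.d2 j j)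
      have : |∫ x, Qd u v θ x * pd3 j (pd3 j φ) x| ≤ 7 * C0 * Vc ^ 2 * (Λ ^ (N + 4) * H) := by
        refine s.trans ?_
        calc _ ≤ C0 * (Λ * R⁻¹) ^ 2 * (7 * (Vc ^ 2 * Λ ^ 2 * (R ^ 2 * H))) :=
              mul_le_mul C0h2 iQ1 (integral_nonneg fun _ => abs_nonneg _) (by positivity)
          _ = 7 * C0 * Vc ^ 2 * (Λ ^ 4 * H) := by field_simp
          _ ≤ _ := mul_le_mul_of_nonneg_left (ΛN le_rfl) (by positivity)
      rw [abs_mul, abs_of_nonneg (by norm_num : (0:ℝ) ≤ 1 / 2)]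
      linarith
    refine (abs_sum3 b).trans (le_of_eq (by ring))
  -- the transport term carries one derivative of the cutoff, which compensates `R`
  have cQ := sys.sQ.cont
  have iW : ∀ j, ∫ x in A, |Wd u v θ j x| ≤ 43 * (Vc ^ 2 * Λ ^ 3 * (R * H)) := by
    intro j
    have I1 : ∀ i, IntegrableOn (fun x => |u i x| * Qd u v θ x) A := fun i => by
      have c : Continuous fun x => |u i x| * Qd u v θ x := (cu i).abs.mul cQ
      exact intOn c kA
    have I1s : IntegrableOn (fun x => ∑ i, |u i x| * Qd u v θ x) A :=
      integrable_finsetSum _ fun i _ => I1 i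
    have I2 : IntegrableOn (fun x => |θ x| * |v j x|) A := by
      have c : Continuous fun x => |θ x| * |v j x| := ct.abs.mul (cv j).abs
      exact intOn c kA
    have I3 : IntegrableOn (fun x => 2 * ∑ i, |u i x| * Qd u v θ x) A := I1s.const_mul 2
    have Ir : IntegrableOn (fun x => 2 * (∑ i, |u i x| * Qd u v θ x) + |θ x| * |v j x|) A :=
      I3.add I2
    have Il : IntegrableOn (fun x => |Wd u v θ j x|) A := intOn (sys.sW j).cont.abs kA
    have m : ∫ x in A, |Wd u v θ j x| ≤
        ∫ x in A, (2 * (∑ i, |u i x| * Qd u v θ x) + |θ x| * |v j x|) :=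
      setIntegral_mono Il Ir fun x => Wd_le u v θ j x
    rw [integral_add I3 I2, integral_const_mul, integral_finsetSum _ fun i _ => I1 i] at m
    have cub : ∀ i {f s a}, Fld A R Λ G f s a → Adm p α s a →
        σ ≤ 2 * (1 - (2 - 3 / p) / (6 / s - 1)) ∧ 2 * (1 - (2 - 3 / p) / (6 / s - 1)) ≤ 2 - σ →
        ∫ x in A, |u i x| * f x ^ 2 ≤ Vc ^ 2 * Λ ^ 3 * (R * H) := by
      intro i f s a hf ad hs
      refine (cubic kA p1 (cu i) (upA i) hf ad R1 Λ0.le G0 hAR).trans ?_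
      have := rpow_le_Hs G0 σ0.le hs.1 hs.2
      gcongr
    have b1 : ∀ i, ∫ x in A, |u i x| * Qd u v θ x ≤ 7 * (Vc ^ 2 * Λ ^ 3 * (R * H)) := fun i =>
      sys.int_Qd kA (cu i).abs (fun k => cub i (fu k) ap hsp) (fun k => cub i (fv k) aq hsq)
        (cub i ft ar hsr)
    have b2 : ∫ x in A, |θ x| * |v j x| ≤ Vc ^ 2 * Λ ^ 3 * (R * H) := by
      have m1 := (fv j).gen kA R1 Λ0.le G0 hAR aq.s1 (σ := 2) (by norm_num) bil.v0 bil.v1 bil.iv le_rfl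
      have m2 := ft.gen kA R1 Λ0.le G0 hAR ar.s1 (σ := 2) (by norm_num) bil.t0 bil.t1 bil.it le_rfl
      have hh := holder2 kA ct (cv j) (a := 2) (b := 2) (by norm_num) (by norm_num) (by norm_num)
      rw [show (1 - 1 / 2 - 1 / 2 : ℝ) = 0 by norm_num, Real.rpow_zero, mul_one] at hh
      have be := bil.e
      set ev := (1 - tv) * (β - 3 / q) + 3 / 2 - tv / 2
      set et := (1 - tθ) * (γ - 3 / r) + 3 / 2 - tθ / 2
      have rr : R ^ et * R ^ ev ≤ R := by
        rw [← Real.rpow_add R0]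
        calc _ ≤ R ^ (1:ℝ) := Real.rpow_le_rpow_of_exponent_le R1 (by linarith)
          _ = R := Real.rpow_one _
      have gg : G ^ tθ * G ^ tv ≤ H := by
        rw [← Real.rpow_add_of_nonneg G0 bil.t0 bil.v0]
        exact rpow_le_Hs G0 σ0.le (by linarith [hst.1]) (by linarith [hst.2])
      have e1 := Real.rpow_nonneg G0 tθ
      have e2 := Real.rpow_nonneg G0 tv
      calc _ ≤ nr 2 θ A * nr 2 (v j) A := hh
        _ ≤ (Vc * Λ * (R ^ et * G ^ tθ)) * (Vc * Λ * (R ^ ev * G ^ tv)) :=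
            mul_le_mul m2 m1 (nr_nonneg _ _ _) (by positivity)
        _ = Vc ^ 2 * Λ ^ 2 * ((R ^ et * R ^ ev) * (G ^ tθ * G ^ tv)) := by ring
        _ ≤ Vc ^ 2 * Λ ^ 3 * (R * H) := by
            have : Λ ^ 2 ≤ Λ ^ 3 := pow_le_pow_right₀ Λ1 (by norm_num)
            gcongr
    have s3 : ∑ i, ∫ x in A, |u i x| * Qd u v θ x ≤ 21 * (Vc ^ 2 * Λ ^ 3 * (R * H)) := by
      rw [Fin.sum_univ_three]
      have := b1 0; have := b1 1; have := b1 2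
      linarith
    linarith
  have T2 : |∑ j, ∫ x, Wd u v θ j x * pd3 j φ x| ≤ 130 * C0 * Vc ^ 2 * (Λ ^ (N + 4) * H) := by
    have b : ∀ j : Fin 3, |∫ x, Wd u v θ j x * pd3 j φ x| ≤
        43 * C0 * Vc ^ 2 * (Λ ^ (N + 4) * H) := by
      intro j
      refine (shell_int (sys.sW j).cont kA (fun x hx => cut.off j x hx) (cut.d1 j)).trans ?_
      calc _ ≤ C0 * (Λ * R⁻¹) * (43 * (Vc ^ 2 * Λ ^ 3 * (R * H))) :=
            mul_le_mul C0h (iW j) (integral_nonneg fun _ => abs_nonneg _) (by positivity)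
        _ = 43 * C0 * Vc ^ 2 * (Λ ^ 4 * H) := by field_simp
        _ ≤ _ := mul_le_mul_of_nonneg_left (ΛN le_rfl) (by positivity)
    refine (abs_sum3 b).trans ?_
    have : 0 ≤ C0 * Vc ^ 2 * (Λ ^ (N + 4) * H) := by positivity
    linarith
  have T3 := Hp sys geo cut Λ1 hk G0 gu gv u6 v6 up vq
  have T3' : C1 * (Λ ^ N * Hs σ1 G) ≤ 2 * C1 * (Λ ^ (N + 4) * H) := by
    have a := Hs_le G0 σ0.le σσ σ11
    have b : Λ ^ N ≤ Λ ^ (N + 4) := pow_le_pow_right₀ Λ1 (by omega)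
    have c := Hs_nonneg (σ := σ1) G0
    calc _ ≤ C1 * (Λ ^ (N + 4) * (2 * H)) := by gcongr
      _ = _ := by ring
  -- the cutoff dominates the indicator of the ball
  have ecut : ∫ x in closedBall (0:E3) ρ, en u v θ x ≤ ∫ x, en u v θ x * φ x := by
    have e : ∫ x in closedBall (0:E3) ρ, en u v θ x =
        ∫ x in closedBall (0:E3) ρ, en u v θ x * φ x := by
      refine setIntegral_congr_fun measurableSet_closedBall fun x hx => ?_
      have : ‖x‖ ≤ ρ := by simpa using hx
      rw [cut.one x (by linarith), mul_one]
    rw [e]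
    exact setIntegral_le_integral (sm_int sys.en_cont cut.sm.cont cut.hc)
      (ae_of_all _ fun x => mul_nonneg (en_nonneg _ _ _ _) (cut.nn x))
  rw [sys.energy cut.sm cut.hc] at ecut
  have l1 := le_abs_self (∑ j, (1 / 2 * ∫ x, Qd u v θ x * pd3 j (pd3 j φ) x))
  have l2 := le_abs_self (∑ j, ∫ x, Wd u v θ j x * pd3 j φ x)
  have l3 := le_abs_self (∑ j, ∫ x, pr x * (u j x * pd3 j φ x))
  have fin : (21 / 2 * C0 * Vc ^ 2 + 130 * C0 * Vc ^ 2 + 2 * C1) * (Λ ^ (N + 4) * H) =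
      21 / 2 * C0 * Vc ^ 2 * (Λ ^ (N + 4) * H) + 130 * C0 * Vc ^ 2 * (Λ ^ (N + 4) * H) +
      2 * C1 * (Λ ^ (N + 4) * H) := by ring
  linarith

end TCM

namespace TCM

/-! ### Absorption, iteration and tails -/

/-- Young's inequality for `Hs`: intermediate powers are absorbed into `G²`. -/
lemma Hs_young {σ ε : ℝ} (σ0 : 0 < σ) (σ1 : σ ≤ 1) (ε0 : 0 < ε) : ∃ C, 0 ≤ C ∧ ∃ n : ℕ,
    ∀ {G K : ℝ}, 0 ≤ G → 1 ≤ K → K * Hs σ G ≤ ε * G ^ 2 + C * K ^ n := by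
  obtain ⟨n, hn⟩ := exists_nat_ge (2 / σ)
  have n1 : (1:ℝ) ≤ n := by
    have : 1 ≤ 2 / σ := by rw [le_div_iff₀ σ0]; linarith
    linarith
  refine ⟨2 * (1 + 2 / ε) ^ n, by positivity, n + 1, ?_⟩
  intro G K G0 K1
  have K0 : 0 < K := by linarith
  set Y := 1 + 2 * K / ε with hY
  have Y1 : 1 ≤ Y := by
    have : 0 ≤ 2 * K / ε := by positivity
    linarith
  have Y0 : 0 < Y := by linarith
  have KY : 2 * K ≤ ε * Y := by
    have : ε * Y = ε + 2 * K := by rw [hY]; field_simp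
    linarith
  rcases le_total (Y ^ (1 / σ)) G with h | h
  · have G1 : 1 ≤ G := (Real.one_le_rpow Y1 (by positivity)).trans h
    have a : Y ≤ G ^ σ := by
      have := Real.rpow_le_rpow (by positivity) h σ0.le
      rwa [← Real.rpow_mul Y0.le, one_div_mul_cancel σ0.ne', Real.rpow_one] at this
    have b : G ^ σ ≤ G ^ (2 - σ) := Real.rpow_le_rpow_of_exponent_le G1 (by linarith)
    have c : G ^ σ * G ^ (2 - σ) = G ^ 2 := by
      rw [← Real.rpow_add (by linarith), ← Real.rpow_natCast]; norm_num
    have d : 0 ≤ G ^ (2 - σ) := Real.rpow_nonneg G0 _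
    calc K * Hs σ G ≤ K * (2 * G ^ (2 - σ)) := by
          unfold Hs
          refine mul_le_mul_of_nonneg_left (by linarith) K0.le
      _ = 2 * K * G ^ (2 - σ) := by ring
      _ ≤ ε * G ^ σ * G ^ (2 - σ) := by
          refine mul_le_mul_of_nonneg_right (KY.trans ?_) d
          gcongr
      _ = ε * G ^ 2 := by rw [mul_assoc, c]
      _ ≤ _ := by
          have : 0 ≤ 2 * (1 + 2 / ε) ^ n * K ^ (n + 1) := by positivity
          linarith
  · have pw : ∀ {x : ℝ}, 0 ≤ x → x ≤ 2 → G ^ x ≤ Y ^ n := by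
      intro x x0 x2
      refine (Real.rpow_le_rpow G0 h x0).trans ?_
      rw [← Real.rpow_mul Y0.le, ← Real.rpow_natCast]
      refine Real.rpow_le_rpow_of_exponent_le Y1 (le_trans ?_ hn)
      rw [one_div_mul_eq_div]
      gcongr
    have y2 : Y ≤ (1 + 2 / ε) * K := by
      have : (1 + 2 / ε) * K = K + 2 * K / ε := by ring
      rw [this, hY]; linarith
    have a := pw σ0.le (by linarith)
    have b := pw (x := 2 - σ) (by linarith) (by linarith)
    calc K * Hs σ G ≤ K * (2 * Y ^ n) := by
          unfold Hs
          refine mul_le_mul_of_nonneg_left (by linarith) K0.le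
      _ ≤ K * (2 * ((1 + 2 / ε) * K) ^ n) := by gcongr
      _ = 2 * (1 + 2 / ε) ^ n * K ^ (n + 1) := by rw [mul_pow]; ring
      _ ≤ _ := by
          have : 0 ≤ ε * G ^ 2 := by positivity
          linarith

/-- The hole-filling iteration along radii converging geometrically to `3R/2`. -/
lemma iterate (N : ℕ) : ∃ C, 0 ≤ C ∧ ∀ {F : ℝ → ℝ} {R A : ℝ}, 0 < R → 0 ≤ A → Monotone F →
    (∀ ρ h, R ≤ ρ → 0 < h → ρ + 16 * h ≤ 3 / 2 * R →
      F ρ ≤ 1 / 2 * F (ρ + 16 * h) + A * (R / h) ^ N) → F R ≤ C * A := by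
  set μ : ℝ := 1 - 1 / (3 * (N + 1)) with hμ
  have N0 : (0:ℝ) ≤ N := Nat.cast_nonneg N
  have d0 : 0 < 1 / (3 * ((N:ℝ) + 1)) := by positivity
  have d1 : 1 / (3 * ((N:ℝ) + 1)) ≤ 1 / 3 := by
    apply one_div_le_one_div_of_le <;> linarith
  have μ0 : 0 < μ := by linarith
  have μ1 : μ < 1 := by linarith
  have μN : 2 / 3 ≤ μ ^ N := by
    have hb := one_add_mul_le_pow (a := -(1 / (3 * ((N:ℝ) + 1)))) (by linarith) N
    have e : (N:ℝ) * (1 / (3 * ((N:ℝ) + 1))) ≤ 1 / 3 := by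
      rw [mul_one_div, div_le_div_iff₀ (by positivity) (by norm_num)]; linarith
    have hm : 1 + -(1 / (3 * ((N:ℝ) + 1))) = μ := by rw [hμ]; ring
    rw [hm] at hb
    linarith
  set D := (32 / (1 - μ)) ^ N with hD
  have m0 : 0 < 1 - μ := by linarith
  have D0 : 0 ≤ D := by positivity
  refine ⟨4 * D, by positivity, ?_⟩
  intro F R A R0 A0 mono step
  set ρ : ℕ → ℝ := fun k => R + R / 2 * (1 - μ ^ k) with hρ
  have ind : ∀ k : ℕ, F R ≤ (1 / 2) ^ k * F (ρ k) + 4 * D * A * (1 - (3 / 4) ^ k) := by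
    intro k
    induction k with
    | zero => simp [hρ]
    | succ k ih =>
      have μk : 0 < μ ^ k := by positivity
      have μk1 : μ ^ k ≤ 1 := pow_le_one₀ μ0.le μ1.le
      have hh : 0 < R / 32 * (μ ^ k * (1 - μ)) := by positivity
      have e : ρ k + 16 * (R / 32 * (μ ^ k * (1 - μ))) = ρ (k + 1) := by
        simp only [hρ, pow_succ]; ring
      have s := step (ρ k) _ (by
        have : 0 ≤ R / 2 * (1 - μ ^ k) := mul_nonneg (by linarith) (by linarith)
        simp only [hρ]; linarith) hh (by
        rw [e]
        have : 0 < R / 2 * μ ^ (k + 1) := by positivity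
        simp only [hρ]; linarith)
      rw [e] at s
      have q : R / (R / 32 * (μ ^ k * (1 - μ))) = 32 / (1 - μ) * (μ ^ k)⁻¹ := by
        field_simp
      rw [q, mul_pow, ← hD] at s
      have r : (1 / 2 : ℝ) ^ k * ((μ ^ k)⁻¹) ^ N ≤ (3 / 4) ^ k := by
        have : (1 / 2 : ℝ) ^ k * ((μ ^ k)⁻¹) ^ N = (1 / 2 * (μ ^ N)⁻¹) ^ k := by
          rw [mul_pow, inv_pow, inv_pow, ← pow_mul, ← pow_mul, mul_comm k N]
        rw [this]
        refine pow_le_pow_left₀ (by positivity) ?_ k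
        have : (μ ^ N)⁻¹ ≤ (2 / 3)⁻¹ := inv_anti₀ (by norm_num) μN
        linarith
      have s2 := mul_le_mul_of_nonneg_left s (by positivity : (0:ℝ) ≤ (1 / 2) ^ k)
      have r2 := mul_le_mul_of_nonneg_left r (mul_nonneg D0 A0)
      rw [pow_succ (1 / 2 : ℝ), pow_succ (3 / 4 : ℝ)]
      have e1 : (1 / 2 : ℝ) ^ k * (1 / 2 * F (ρ (k + 1)) + A * (D * ((μ ^ k)⁻¹) ^ N)) =
        (1 / 2) ^ k * (1 / 2) * F (ρ (k + 1)) + D * A * ((1 / 2) ^ k * ((μ ^ k)⁻¹) ^ N) := by ring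
      have e2 : 4 * D * A * (1 - (3 / 4) ^ k * (3 / 4)) =
        4 * D * A * (1 - (3 / 4) ^ k) + D * A * (3 / 4) ^ k := by ring
      linarith
  have lim : Tendsto (fun k : ℕ => (1 / 2 : ℝ) ^ k * F (3 / 2 * R) +
      4 * D * A * (1 - (3 / 4) ^ k)) atTop (nhds (0 * F (3 / 2 * R) + 4 * D * A * (1 - 0))) := by
    refine ((tendsto_pow_atTop_nhds_zero_of_lt_one (by norm_num) (by norm_num)).mul_const _).add ?_
    exact (tendsto_const_nhds.sub
      (tendsto_pow_atTop_nhds_zero_of_lt_one (by norm_num) (by norm_num))).const_mul _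
  have := ge_of_tendsto' lim (b := F R) fun k => (ind k).trans (by
    have : F (ρ k) ≤ F (3 / 2 * R) := mono (by
      have : 0 < R / 2 * μ ^ k := by positivity
      simp only [hρ]; linarith)
    have : (1 / 2 : ℝ) ^ k * F (ρ k) ≤ (1 / 2) ^ k * F (3 / 2 * R) :=
      mul_le_mul_of_nonneg_left this (by positivity)
    linarith)
  linarith

/-- A nonnegative function with bounded integrals over balls has small integrals over far shells. -/
lemma tail_shell {g : E3 → ℝ} (hg : Continuous g) (g0 : ∀ x, 0 ≤ g x) {B : ℝ}
    (hB : ∀ t, ∫ x in closedBall (0:E3) t, g x ≤ B) :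
    Tendsto (fun R => ∫ x in An R (3 / 2 * R), g x) atTop (nhds 0) := by
  have I : ∀ t, IntegrableOn g (closedBall (0:E3) t) := fun t => intOn hg (isCompact_closedBall _ _)
  set F : ℝ → ℝ := fun t => ∫ x in closedBall (0:E3) t, g x with hF
  have mono : Monotone F := fun a b h => setIntegral_mono_set (I b) (ae_of_all _ g0)
    (ae_of_all _ (closedBall_subset_closedBall h))
  have bdd : BddAbove (Set.range F) := ⟨B, by rintro _ ⟨t, rfl⟩; exact hB t⟩
  have lim := tendsto_atTop_ciSup mono bdd
  have l1 : Tendsto (fun R : ℝ => 3 / 2 * R) atTop atTop :=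
    tendsto_id.const_mul_atTop (by norm_num)
  have l2 : Tendsto (fun R : ℝ => R - 1) atTop atTop := tendsto_atTop_add_const_right _ _ tendsto_id
  have l3 := (lim.comp l1).sub (lim.comp l2)
  rw [sub_self] at l3
  refine squeeze_zero' (Eventually.of_forall fun R => integral_nonneg g0) ?_ l3
  filter_upwards [eventually_ge_atTop 0] with R hR
  simp only [Function.comp, hF]
  have sub : closedBall (0:E3) (R - 1) ⊆ closedBall 0 (3 / 2 * R) :=
    closedBall_subset_closedBall (by linarith)
  rw [← setIntegral_sdiff measurableSet_closedBall (I _) sub]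
  refine setIntegral_mono_set ((I _).mono_set Set.sdiff_subset) (ae_of_all _ g0)
    (ae_of_all _ fun x hx => ?_)
  refine ⟨by simpa using hx.2, ?_⟩
  have := hx.1
  simp only [mem_closedBall, dist_zero_right, not_le]
  linarith

end TCM

namespace TCM

/-! ### Uniform Dirichlet bound from good scales -/

/-- The growth hypotheses at the scale `R`, on the shell `R ≤ |x| ≤ 3R/2`. -/
structure Good (u v : Fin 3 → E3 → ℝ) (θ : E3 → ℝ) (p α q β lam γ M R : ℝ) : Prop where
  hu : ∀ i, nr p (u i) (An R (3 / 2 * R)) ≤ M * R ^ α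
  hv : ∀ i, nr q (v i) (An R (3 / 2 * R)) ≤ M * R ^ β
  ht : nr lam (gr θ) (An R (3 / 2 * R)) ≤ M * R ^ γ

lemma An_sub_ball (a b : ℝ) : An a b ⊆ closedBall (0:E3) b := fun x hx => by simpa using hx.2

lemma en_shift (u v : Fin 3 → E3 → ℝ) (θ : E3 → ℝ) (c : ℝ) :
    en u v (fun x => θ x - c) = en u v θ := by
  funext x
  unfold en gr
  rw [fderiv_sub_const]

lemma nr_le_en {f g : E3 → ℝ} (hf : Continuous f) (hg : Continuous g) (h : ∀ x, f x ^ 2 ≤ g x)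
    {A : Set E3} (hA : IsCompact A) : nr 2 f A ≤ √(∫ x in A, g x) := by
  refine Real.le_sqrt_of_sq_le ?_
  have c2 : Continuous fun x => f x ^ 2 := hf.pow 2
  rw [← int_sq]
  exact integral_mono (intOn c2 hA) (intOn hg hA) h

lemma gr_u_le (u v : Fin 3 → E3 → ℝ) (θ : E3 → ℝ) (i : Fin 3) (x : E3) :
    gr (u i) x ^ 2 ≤ en u v θ x := by
  have := Finset.single_le_sum (f := fun i => gr (u i) x ^ 2) (fun _ _ => sq_nonneg _)
    (Finset.mem_univ i)
  have b : 0 ≤ ∑ i, gr (v i) x ^ 2 := by positivity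
  unfold en
  nlinarith [sq_nonneg (gr θ x)]

lemma gr_v_le (u v : Fin 3 → E3 → ℝ) (θ : E3 → ℝ) (i : Fin 3) (x : E3) :
    gr (v i) x ^ 2 ≤ en u v θ x := by
  have := Finset.single_le_sum (f := fun i => gr (v i) x ^ 2) (fun _ _ => sq_nonneg _)
    (Finset.mem_univ i)
  have b : 0 ≤ ∑ i, gr (u i) x ^ 2 := by positivity
  unfold en
  nlinarith [sq_nonneg (gr θ x)]

lemma gr_t_le (u v : Fin 3 → E3 → ℝ) (θ : E3 → ℝ) (x : E3) : gr θ x ^ 2 ≤ en u v θ x := by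
  have a : 0 ≤ ∑ i, gr (v i) x ^ 2 := by positivity
  have b : 0 ≤ ∑ i, gr (u i) x ^ 2 := by positivity
  unfold en
  linarith

/-- The energy estimate at a good scale.  The temperature enters through `θ - c` with `c` a local
mean, which is controlled by `∇θ` through the Poincaré–Sobolev inequality. -/
lemma step {p α q β lam r γ tv tθ M : ℝ} (p1 : 3/2 < p) (p3 : p < 3) (α0 : 0 ≤ α)
    (hα : α ≤ 2 / p - 1 / 3) (hl : 1 ≤ lam) (hr : 0 < r) (hlr : 1 / r = 1 / lam - 1 / 3)
    (aq : Adm p α q β) (ar : Adm p α r γ) (bil : Bil q β r γ tv tθ) (M0 : 0 ≤ M) :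
    ∃ σ, 0 < σ ∧ σ ≤ 1 ∧ ∀ ε : ℝ, 0 < ε → ∃ C, 0 ≤ C ∧ ∃ N : ℕ,
    ∀ {u v : Fin 3 → E3 → ℝ} {pr θ : E3 → ℝ} {R ρ h G : ℝ}, Sys u v pr θ →
    Good u v θ p α q β lam γ M R → Geo R ρ h → 0 ≤ G →
    √(∫ x in An ρ (ρ + 8 * h), en u v θ x) ≤ G →
    (∀ i, nr 6 (u i) (An ρ (ρ + 8 * h)) ≤ G) → (∀ i, nr 6 (v i) (An ρ (ρ + 8 * h)) ≤ G) →
    ∫ x in closedBall (0:E3) ρ, en u v θ x ≤ ε * G ^ 2 + C * ((R / h) ^ N * Hs σ G) := by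
  obtain ⟨σ, σ0, σ1, HA⟩ := propA p1 p3 α0 hα aq ar bil
  obtain ⟨Cr, Cr0, Hr⟩ := poincare_sobolev hl hr hlr
  obtain ⟨C6, C60, H6⟩ := poincare_sobolev (lam := 2) (r := 6) (by norm_num) (by norm_num)
    (by norm_num)
  refine ⟨σ, σ0, σ1, fun ε ε0 => ?_⟩
  obtain ⟨C, C0, N, H⟩ := HA ε ε0
  set D := 1 + M + Cr * M + C6 with hD
  have CM : 0 ≤ Cr * M := mul_nonneg Cr0 M0
  have D1 : 1 ≤ D := by linarith
  refine ⟨C * D ^ N, by positivity, 4 * N, ?_⟩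
  intro u v pr θ R ρ h G S good g G0 en6 u6 v6
  have k1 := g.k1
  have h0 := g.h0
  have k4 : R / h ≤ (R / h) ^ 4 := le_self_pow₀ k1 (by norm_num)
  have kk : 1 ≤ (R / h) ^ 4 := k1.trans k4
  have le : ∀ {a : ℝ}, 0 ≤ a → a ≤ D → a ≤ D * (R / h) ^ 4 := fun a0 aD =>
    aD.trans (le_mul_of_one_le_right (by linarith) kk)
  have sub : An ρ (ρ + 8 * h) ⊆ An R (3 / 2 * R) := An_mono g.Rρ g.top
  have R0 := g.R0
  set x0 : E3 := EuclideanSpace.single (0 : Fin 3) (ρ + 4 * h) with hx0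
  have nx : ‖x0‖ = ρ + 4 * h := by
    rw [hx0, PiLp.norm_single, Real.norm_of_nonneg (by linarith [g.ρ0])]
  have mx : x0 ∈ An (ρ + 2 * h) (ρ + 6 * h) := ⟨by rw [nx]; linarith, by rw [nx]; linarith⟩
  have key := H (S.shift (mol h θ x0)) g (Λ := D * (R / h) ^ 4) (G := G) (le zero_le_one D1)
    (k4.trans (le_mul_of_one_le_left (by linarith) D1)) G0
    (fun i => (nr_le_en (S.su i).gr_cont S.en_cont (gr_u_le u v θ i) (An_compact _ _)).trans en6)
    (fun i => (nr_le_en (S.sv i).gr_cont S.en_cont (gr_v_le u v θ i) (An_compact _ _)).trans en6)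
    u6 v6
    (fun i => ((nr_mono_set (by linarith) (S.su i).cont (An_compact _ _) sub).trans (good.hu i)).trans
      (mul_le_mul_of_nonneg_right (le M0 (by linarith)) (by positivity)))
    (fun i => ((nr_mono_set (by linarith [aq.s1]) (S.sv i).cont (An_compact _ _) sub).trans
      (good.hv i)).trans
      (mul_le_mul_of_nonneg_right (le M0 (by linarith)) (by positivity)))
    (by
      refine (Hr R ρ h g θ S.st x0 mx).trans ?_
      have a := (nr_mono_set (by linarith) S.st.gr_cont (An_compact _ _) sub).trans good.ht
      calc Cr * (R / h) ^ 4 * nr lam (gr θ) (An ρ (ρ + 8 * h))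
          ≤ Cr * (R / h) ^ 4 * (M * R ^ γ) := mul_le_mul_of_nonneg_left a (by positivity)
        _ = (Cr * M) * ((R / h) ^ 4 * R ^ γ) := by ring
        _ ≤ D * ((R / h) ^ 4 * R ^ γ) :=
          mul_le_mul_of_nonneg_right (by linarith) (by positivity)
        _ = _ := by ring)
    (by
      refine (H6 R ρ h g θ S.st x0 mx).trans ?_
      have a := (nr_le_en S.st.gr_cont S.en_cont (gr_t_le u v θ) (An_compact ρ (ρ + 8 * h))).trans
        en6
      calc C6 * (R / h) ^ 4 * nr 2 (gr θ) (An ρ (ρ + 8 * h))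
          ≤ C6 * (R / h) ^ 4 * G := mul_le_mul_of_nonneg_left a (by positivity)
        _ ≤ _ := by gcongr; linarith)
  rw [en_shift] at key
  refine key.trans (le_of_eq ?_)
  rw [mul_pow, ← pow_mul]; ring

/-- Good scales give a bound for the Dirichlet integral, uniform in the scale. -/
lemma stage1 {p α q β lam r γ tv tθ M : ℝ} (p1 : 3/2 < p) (p3 : p < 3) (α0 : 0 ≤ α)
    (hα : α ≤ 2 / p - 1 / 3) (hl : 1 ≤ lam) (hr : 0 < r) (hlr : 1 / r = 1 / lam - 1 / 3)
    (aq : Adm p α q β) (ar : Adm p α r γ) (bil : Bil q β r γ tv tθ) (M0 : 0 ≤ M) :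
    ∃ C, 0 ≤ C ∧ ∀ {u v : Fin 3 → E3 → ℝ} {pr θ : E3 → ℝ} {R : ℝ}, Sys u v pr θ → 1 ≤ R →
    Good u v θ p α q β lam γ M R → ∫ x in closedBall (0:E3) R, en u v θ x ≤ C := by
  obtain ⟨σ, σ0, σ1, Hs⟩ := step p1 p3 α0 hα hl hr hlr aq ar bil M0
  obtain ⟨C6, C60, H6⟩ := l6_ball
  have ap : Adm p α p α := Adm.self p1 p3 α0 hα
  set ε := 1 / (8 * (1 + C6) ^ 2) with hε
  have ε0 : 0 < ε := by positivity
  obtain ⟨C, C0, N, H⟩ := Hs ε ε0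
  obtain ⟨C2, C20, n, Y⟩ := Hs_young σ0 σ1 (ε := ε / (C + 1)) (by positivity)
  obtain ⟨C3, C30, I⟩ := iterate (8 + N * n)
  refine ⟨C3 * (M ^ 2 / 2 + C * C2), by positivity, ?_⟩
  intro u v pr θ R S R1 good
  refine I (F := fun t => ∫ x in closedBall (0:E3) t, en u v θ x) (by linarith) (by positivity)
    (fun a b hab => setIntegral_mono_set (intOn S.en_cont (isCompact_closedBall _ _))
      (ae_of_all _ (en_nonneg u v θ)) (ae_of_all _ (closedBall_subset_closedBall hab))) ?_
  intro ρ h hρ h0 top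
  have g : Geo R ρ h := ⟨R1, h0, hρ, by linarith⟩
  have g' : Geo R (ρ + 8 * h) h := ⟨R1, h0, by linarith, by linarith⟩
  have sub : An (ρ + 8 * h) (ρ + 8 * h + 8 * h) ⊆ An R (3 / 2 * R) := An_mono g'.Rρ g'.top
  have e16 : ρ + 8 * h + 8 * h = ρ + 16 * h := by ring
  have k1 := g.k1
  set κ := R / h with hκ
  set X := ∫ x in closedBall (0:E3) (ρ + 16 * h), en u v θ x with hX
  have X0 : 0 ≤ X := integral_nonneg (en_nonneg u v θ)
  have b6 : ∀ {f : E3 → ℝ} {s a : ℝ}, Sm f → (∀ x, gr f x ^ 2 ≤ en u v θ x) → 1 ≤ s →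
      a ≤ (6 / s - 1) / 2 → nr s f (An R (3 / 2 * R)) ≤ M * R ^ a →
      nr 6 f (An ρ (ρ + 8 * h)) ≤ (1 + C6) * (√X + κ ^ 4 * M) := by
    intro f s a hf hgr hs ha hM
    have t1 := H6 R (ρ + 8 * h) h g' f hf s a M hs (by
      have : 6 / s = 2 * (3 / s) := by ring
      linarith) M0 ((nr_mono_set (by linarith) hf.cont (An_compact _ _) sub).trans hM)
    rw [e16] at t1
    have t2 : nr 2 (gr f) (closedBall 0 (ρ + 16 * h)) ≤ √X :=
      nr_le_en hf.gr_cont S.en_cont hgr (isCompact_closedBall _ _)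
    have t3 : nr 6 f (An ρ (ρ + 8 * h)) ≤ nr 6 f (closedBall 0 (ρ + 8 * h)) :=
      nr_mono_set (by norm_num) hf.cont (isCompact_closedBall _ _) (An_sub_ball _ _)
    have t4 : 0 ≤ √X + κ ^ 4 * M := by positivity
    have t5 : C6 * (nr 2 (gr f) (closedBall 0 (ρ + 16 * h)) + κ ^ 4 * M) ≤
      C6 * (√X + κ ^ 4 * M) := by gcongr
    linarith
  have G0 : 0 ≤ (1 + C6) * (√X + κ ^ 4 * M) := by positivity
  have eb : √(∫ x in An ρ (ρ + 8 * h), en u v θ x) ≤ (1 + C6) * (√X + κ ^ 4 * M) := by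
    have a : √(∫ x in An ρ (ρ + 8 * h), en u v θ x) ≤ √X :=
      Real.sqrt_le_sqrt (setIntegral_mono_set (intOn S.en_cont (isCompact_closedBall _ _))
        (ae_of_all _ (en_nonneg u v θ))
        (ae_of_all _ ((An_sub_ball _ _).trans (closedBall_subset_closedBall (by linarith)))))
    have b : 0 ≤ C6 * √X := by positivity
    have c : 0 ≤ (1 + C6) * (κ ^ 4 * M) := by positivity
    linarith
  have key := H S good g G0 eb
    (fun i => b6 (S.su i) (gr_u_le u v θ i) (by linarith) ap.a1 (good.hu i))
    (fun i => b6 (S.sv i) (gr_v_le u v θ i) aq.s1 aq.a1 (good.hv i))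
  set G := (1 + C6) * (√X + κ ^ 4 * M) with hG
  have y := Y G0 (one_le_pow₀ (n := N) k1)
  have G2 : G ^ 2 ≤ 2 * (1 + C6) ^ 2 * (X + κ ^ 8 * M ^ 2) := by
    have sq := Real.sq_sqrt X0
    have : (√X + κ ^ 4 * M) ^ 2 ≤ 2 * (X + κ ^ 8 * M ^ 2) := by
      nlinarith [sq_nonneg (√X - κ ^ 4 * M)]
    calc G ^ 2 = (1 + C6) ^ 2 * (√X + κ ^ 4 * M) ^ 2 := by rw [hG]; ring
      _ ≤ (1 + C6) ^ 2 * (2 * (X + κ ^ 8 * M ^ 2)) := by gcongr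
      _ = _ := by ring
  have εG : 2 * ε * G ^ 2 ≤ 1 / 2 * X + M ^ 2 / 2 * κ ^ 8 := by
    have e : 2 * ε * (2 * (1 + C6) ^ 2 * (X + κ ^ 8 * M ^ 2)) = 1 / 2 * X + M ^ 2 / 2 * κ ^ 8 := by
      rw [hε]; field_simp; ring
    rw [← e]
    exact mul_le_mul_of_nonneg_left G2 (by positivity)
  have y2 : C * (κ ^ N * TCM.Hs σ G) ≤ ε * G ^ 2 + C * C2 * κ ^ (N * n) := by
    refine (mul_le_mul_of_nonneg_left y C0).trans ?_
    rw [← pow_mul]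
    have : C * (ε / (C + 1) * G ^ 2) ≤ ε * G ^ 2 := by
      have : C * (ε / (C + 1)) ≤ ε := by
        rw [mul_div_assoc', div_le_iff₀ (by positivity)]; nlinarith
      calc C * (ε / (C + 1) * G ^ 2) = C * (ε / (C + 1)) * G ^ 2 := by ring
        _ ≤ _ := by gcongr
    linarith
  have p8 : κ ^ 8 ≤ κ ^ (8 + N * n) := pow_le_pow_right₀ k1 (by omega)
  have pn : κ ^ (N * n) ≤ κ ^ (8 + N * n) := pow_le_pow_right₀ k1 (by omega)
  have q8 : M ^ 2 / 2 * κ ^ 8 ≤ M ^ 2 / 2 * κ ^ (8 + N * n) := by gcongr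
  have qn : C * C2 * κ ^ (N * n) ≤ C * C2 * κ ^ (8 + N * n) := by gcongr
  change ∫ x in closedBall (0:E3) ρ, en u v θ x ≤ 1 / 2 * X + _
  linarith

end TCM

namespace TCM

/-! ### Vanishing of the energy -/

lemma gr_zero_const {f : E3 → ℝ} (hf : Sm f) (h : ∀ x, gr f x = 0) (x : E3) : f x = f 0 :=
  is_const_of_fderiv_eq_zero hf.diff (fun y => norm_eq_zero.1 (h y)) x 0

/-- A constant with bounded `L⁶` norms on all balls vanishes. -/
lemma const_zero {f : E3 → ℝ} {B : ℝ} (hc : ∀ x, f x = f 0)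
    (hB : ∀ t, nr 6 f (closedBall 0 t) ≤ B) : f 0 = 0 := by
  by_contra hne
  have a0 : 0 < |f 0| ^ (6:ℝ) := Real.rpow_pos_of_pos (abs_pos.2 hne) _
  have v0 : 0 < volume.real (ball (0:E3) 1) :=
    ENNReal.toReal_pos (measure_ball_pos _ _ one_pos).ne' measure_ball_lt_top.ne
  have e : ∀ t : ℝ, 1 ≤ t → t * (volume.real (ball (0:E3) 1) * |f 0| ^ (6:ℝ)) ≤ B ^ (6:ℝ) := by
    intro t ht
    have h1 := Real.rpow_le_rpow (nr_nonneg _ _ _) (hB t) (by norm_num : (0:ℝ) ≤ 6)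
    rw [nr_pow (by norm_num)] at h1
    have h2 : ∀ x, |f x| ^ (6:ℝ) = |f 0| ^ (6:ℝ) := fun x => by rw [hc x]
    simp only [h2, setIntegral_const, smul_eq_mul] at h1
    rw [Measure.addHaar_real_closedBall _ _ (by linarith), finrank_E3] at h1
    have h3 : t ≤ t ^ 3 := le_self_pow₀ ht (by norm_num)
    have h4 : t * (volume.real (ball (0:E3) 1) * |f 0| ^ (6:ℝ)) ≤
      t ^ 3 * (volume.real (ball (0:E3) 1) * |f 0| ^ (6:ℝ)) := by gcongr
    linarith
  have k0 := mul_pos v0 a0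
  set K := volume.real (ball (0:E3) 1) * |f 0| ^ (6:ℝ)
  have := e (1 + |B ^ (6:ℝ)| / K) (by
    have : 0 ≤ |B ^ (6:ℝ)| / K := by positivity
    linarith)
  have e2 : (1 + |B ^ (6:ℝ)| / K) * K = K + |B ^ (6:ℝ)| := by field_simp
  linarith [le_abs_self (B ^ (6:ℝ))]

/-- The Liouville theorem in terms of the admissibility conditions `Adm` and `Bil`. -/
theorem core {p α q β lam r γ tv tθ M : ℝ} (p1 : 3/2 < p) (p3 : p < 3) (α0 : 0 ≤ α)
    (hα : α ≤ 2 / p - 1 / 3) (hl : 1 ≤ lam) (hr : 0 < r) (hlr : 1 / r = 1 / lam - 1 / 3)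
    (aq : Adm p α q β) (ar : Adm p α r γ) (bil : Bil q β r γ tv tθ) (M0 : 0 ≤ M)
    {u v : Fin 3 → E3 → ℝ} {pr θ : E3 → ℝ} (S : Sys u v pr θ)
    (fr : ∃ᶠ R in atTop, Good u v θ p α q β lam γ M R) :
    (∀ i x, u i x = 0) ∧ (∀ i x, v i x = 0) ∧ ∀ x, θ x = θ 0 := by
  obtain ⟨C, C0, H1⟩ := stage1 p1 p3 α0 hα hl hr hlr aq ar bil M0
  obtain ⟨C6, C60, H6⟩ := l6_ball
  obtain ⟨σ, σ0, σ1, Hst⟩ := step p1 p3 α0 hα hl hr hlr aq ar bil M0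
  obtain ⟨C2, C20, N, H2⟩ := Hst 1 one_pos
  have ap : Adm p α p α := Adm.self p1 p3 α0 hα
  set F : ℝ → ℝ := fun t => ∫ x in closedBall (0:E3) t, en u v θ x with hF
  have mono : Monotone F := fun a b hab =>
    setIntegral_mono_set (intOn S.en_cont (isCompact_closedBall _ _))
      (ae_of_all _ (en_nonneg u v θ)) (ae_of_all _ (closedBall_subset_closedBall hab))
  have pick : ∀ t : ℝ, ∃ R, t ≤ R ∧ 1 ≤ R ∧ Good u v θ p α q β lam γ M R := fun t => by
    obtain ⟨R, a, b, c⟩ := (fr.and_eventually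
      ((eventually_ge_atTop t).and (eventually_ge_atTop (1:ℝ)))).exists
    exact ⟨R, b, c, a⟩
  have FC : ∀ t, F t ≤ C := fun t => by
    obtain ⟨R, a, b, c⟩ := pick t
    exact (mono a).trans (H1 S b c)
  have geo : ∀ {R : ℝ}, 1 ≤ R → Geo R R (R / 16) := fun h => ⟨h, by linarith, le_rfl, by linarith⟩
  have rat : ∀ {R : ℝ}, 1 ≤ R → R / (R / 16) = 16 := fun h => by field_simp
  have tops : ∀ R : ℝ, R + 8 * (R / 16) = 3 / 2 * R := fun R => by ring
  set B := C6 * (√C + 16 ^ 4 * M) with hB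
  -- at a good scale the lower-order term in `l6_ball` stays bounded, since `a ≤ 3 / s - 1 / 2`
  have b6 : ∀ {f : E3 → ℝ} {s a : ℝ}, Sm f → (∀ x, gr f x ^ 2 ≤ en u v θ x) → 1 ≤ s →
      a ≤ (6 / s - 1) / 2 → (∀ R, Good u v θ p α q β lam γ M R →
        nr s f (An R (3 / 2 * R)) ≤ M * R ^ a) → ∀ t, nr 6 f (closedBall 0 t) ≤ B := by
    intro f s a hf hgr hs ha hM t
    obtain ⟨R, tR, R1, good⟩ := pick t
    have t1 := H6 R R (R / 16) (geo R1) f hf s a M hs (by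
      have : 6 / s = 2 * (3 / s) := by ring
      linarith) M0 (by rw [tops]; exact hM R good)
    rw [rat R1] at t1
    have t2 : nr 2 (gr f) (closedBall 0 (R + 8 * (R / 16))) ≤ √C :=
      (nr_le_en hf.gr_cont S.en_cont hgr (isCompact_closedBall _ _)).trans
        (Real.sqrt_le_sqrt (FC _))
    refine (nr_mono_set (by norm_num) hf.cont (isCompact_closedBall _ _)
      (closedBall_subset_closedBall tR)).trans (t1.trans ?_)
    rw [hB]
    gcongr
  have bu : ∀ i t, nr 6 (u i) (closedBall 0 t) ≤ B := fun i =>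
    b6 (S.su i) (gr_u_le u v θ i) (by linarith) ap.a1 fun R g => g.hu i
  have bv : ∀ i t, nr 6 (v i) (closedBall 0 t) ≤ B := fun i =>
    b6 (S.sv i) (gr_v_le u v θ i) aq.s1 aq.a1 fun R g => g.hv i
  have dec : ∀ {f : E3 → ℝ}, Continuous f → (∀ t, nr 6 f (closedBall 0 t) ≤ B) →
      Tendsto (fun R => nr 6 f (An R (3 / 2 * R))) atTop (nhds 0) := by
    intro f hf hb
    have t := tail_shell (cont_abs_rpow hf (by norm_num : (0:ℝ) ≤ 6))
      (fun x => Real.rpow_nonneg (abs_nonneg _) _) (B := B ^ (6:ℝ)) fun t => by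
        rw [← nr_pow (by norm_num)]
        exact Real.rpow_le_rpow (nr_nonneg _ _ _) (hb t) (by norm_num)
    have := t.rpow_const (p := 1 / 6) (Or.inr (by norm_num))
    rwa [Real.zero_rpow (by norm_num)] at this
  have dE : Tendsto (fun R => √(∫ x in An R (3 / 2 * R), en u v θ x)) atTop (nhds 0) := by
    have := (tail_shell S.en_cont (en_nonneg u v θ) FC).sqrt
    rwa [Real.sqrt_zero] at this
  set G : ℝ → ℝ := fun R => √(∫ x in An R (3 / 2 * R), en u v θ x) +
    ((∑ i, nr 6 (u i) (An R (3 / 2 * R))) + ∑ i, nr 6 (v i) (An R (3 / 2 * R))) with hG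
  have dG : Tendsto G atTop (nhds 0) := by
    have a := tendsto_finsetSum (Finset.univ : Finset (Fin 3))
      fun i _ => dec (S.su i).cont (bu i)
    have b := tendsto_finsetSum (Finset.univ : Finset (Fin 3))
      fun i _ => dec (S.sv i).cont (bv i)
    have := dE.add (a.add b)
    simpa using this
  have lim : Tendsto (fun R => 1 * G R ^ 2 + C2 * (16 ^ N * Hs σ (G R))) atTop (nhds 0) := by
    have a := dG.rpow_const (p := σ) (Or.inr σ0.le)
    have b := dG.rpow_const (p := 2 - σ) (Or.inr (by linarith))
    rw [Real.zero_rpow σ0.ne'] at a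
    rw [Real.zero_rpow (by linarith)] at b
    have := ((dG.pow 2).const_mul 1).add (((a.add b).const_mul (16 ^ N)).const_mul C2)
    simpa [Hs] using this
  have F0 : ∀ t, F t ≤ 0 := by
    intro t
    by_contra! hpos
    obtain ⟨R, good, tR, R1, hlt⟩ := (fr.and_eventually ((eventually_ge_atTop t).and
      ((eventually_ge_atTop (1:ℝ)).and (lim.eventually_lt_const hpos)))).exists
    have su0 : ∀ (w : Fin 3 → E3 → ℝ) (i : Fin 3), nr 6 (w i) (An R (3 / 2 * R)) ≤
        ∑ i, nr 6 (w i) (An R (3 / 2 * R)) := fun w i =>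
      Finset.single_le_sum (f := fun i => nr 6 (w i) (An R (3 / 2 * R)))
        (fun _ _ => nr_nonneg _ _ _) (Finset.mem_univ i)
    have nn : ∀ (w : Fin 3 → E3 → ℝ), 0 ≤ ∑ i, nr 6 (w i) (An R (3 / 2 * R)) := fun w =>
      Finset.sum_nonneg fun _ _ => nr_nonneg _ _ _
    have s0 := Real.sqrt_nonneg (∫ x in An R (3 / 2 * R), en u v θ x)
    have nu := nn u
    have nv := nn v
    have key := H2 (G := G R) S good (geo R1) (by simp only [hG]; linarith)
      (by rw [tops]; simp only [hG]; linarith)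
      (fun i => by rw [tops]; have := su0 u i; simp only [hG]; linarith)
      (fun i => by rw [tops]; have := su0 v i; simp only [hG]; linarith)
    rw [rat R1] at key
    have := mono tR
    simp only [hF] at this hlt
    linarith
  have en0 : ∀ x, en u v θ x = 0 := by
    intro x
    set t := ‖x‖ + 1
    have z : ∫ x in closedBall (0:E3) t, en u v θ x = 0 :=
      le_antisymm (F0 t) (integral_nonneg (en_nonneg u v θ))
    rw [integral_eq_zero_iff_of_nonneg (en_nonneg u v θ)
      (intOn S.en_cont (isCompact_closedBall _ _))] at z
    have z2 : en u v θ =ᵐ[volume.restrict (ball (0:E3) t)] (fun _ => (0:ℝ)) :=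
      ae_mono (Measure.restrict_mono ball_subset_closedBall le_rfl) z
    exact Measure.eqOn_open_of_ae_eq z2 isOpen_ball S.en_cont.continuousOn continuousOn_const
      (by simp [t])
  have gz : ∀ {f : E3 → ℝ}, (∀ x, gr f x ^ 2 ≤ en u v θ x) → ∀ x, gr f x = 0 := fun hgr x => by
    have := hgr x
    rw [en0 x] at this
    exact pow_eq_zero_iff (two_ne_zero) |>.1 (le_antisymm this (sq_nonneg _))
  have cu : ∀ i x, u i x = u i 0 := fun i => gr_zero_const (S.su i) (gz (gr_u_le u v θ i))
  have cv : ∀ i x, v i x = v i 0 := fun i => gr_zero_const (S.sv i) (gz (gr_v_le u v θ i))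
  exact ⟨fun i x => (cu i x).trans (const_zero (cu i) (bu i)),
    fun i x => (cv i x).trans (const_zero (cv i) (bv i)),
    gr_zero_const S.st (gz (gr_t_le u v θ))⟩

end TCM

namespace TCM

/-! ### Reduction of the parameter conditions -/

/-- Hölder's inequality on the shell trades integrability for growth: `a - 3/s` is preserved. -/
lemma shell_holder : ∃ W : ℝ, 1 ≤ W ∧ ∀ {f : E3 → ℝ} {s s' a a' M R : ℝ}, Continuous f → 1 ≤ s' →
    s' ≤ s → a' - 3 / s' = a - 3 / s → 0 ≤ M → 1 ≤ R → nr s f (An R (3 / 2 * R)) ≤ M * R ^ a →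
    nr s' f (An R (3 / 2 * R)) ≤ W * M * R ^ a' := by
  have V0 : 0 ≤ volume.real B1 := measureReal_nonneg
  refine ⟨1 + volume.real B1 * (27 / 8), by linarith, ?_⟩
  set W := 1 + volume.real B1 * (27 / 8) with hW
  have W1 : 1 ≤ W := by linarith
  intro f s s' a a' M R hf s1 ss ha M0 R1 h
  have s0 : 0 < s := by linarith
  have s'0 : 0 < s' := by linarith
  have R0 : 0 < R := by linarith
  have x0 : 1 / s ≤ 1 / s' := one_div_le_one_div_of_le s'0 ss
  have x1 : 1 / s' ≤ 1 := by rw [div_le_one s'0]; exact s1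
  have i := interp (An_compact R (3 / 2 * R)) hf s0 s'0 le_rfl zero_le_one
    (by simpa using x0)
  simp only [sub_zero, Real.rpow_one, Real.rpow_zero, mul_one, zero_div] at i
  set x := 1 / s' - 1 / s with hx
  have sp : 0 < 1 / s := by positivity
  have v : volume.real (An R (3 / 2 * R)) ≤ W * R ^ (3:ℝ) := by
    have := vol_ball_le (A := An R (3 / 2 * R)) (b := 3 / 2 * R) (by positivity) fun y hy => hy.2
    have e : R ^ (3:ℝ) = R ^ 3 := by norm_cast
    have : volume.real B1 * (3 / 2 * R) ^ 3 = volume.real B1 * (27 / 8) * R ^ 3 := by ring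
    rw [e, hW, add_mul]
    have : 0 < R ^ 3 := by positivity
    linarith
  have vx : volume.real (An R (3 / 2 * R)) ^ x ≤ W * R ^ (3 * x) := by
    calc volume.real (An R (3 / 2 * R)) ^ x ≤ (W * R ^ (3:ℝ)) ^ x :=
          Real.rpow_le_rpow measureReal_nonneg v (by linarith)
      _ = W ^ x * R ^ (3 * x) := by
          rw [Real.mul_rpow (by linarith) (by positivity), ← Real.rpow_mul R0.le]
      _ ≤ W ^ (1:ℝ) * R ^ (3 * x) := by gcongr; linarith
      _ = _ := by rw [Real.rpow_one]
  calc nr s' f (An R (3 / 2 * R)) ≤ _ := i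
    _ ≤ M * R ^ a * (W * R ^ (3 * x)) :=
        mul_le_mul h vx (Real.rpow_nonneg measureReal_nonneg _) (by positivity)
    _ = W * M * (R ^ a * R ^ (3 * x)) := by ring
    _ = W * M * R ^ a' := by
        rw [← Real.rpow_add R0]
        congr 2
        have e1 : 3 / s' = 3 * (1 / s') := by ring
        have e2 : 3 / s = 3 * (1 / s) := by ring
        rw [e1, e2] at ha
        rw [hx]; linarith

/-- For an exponent `s` below `2p'` the weighted condition is exactly `Adm`; for `s ≥ 2p'` the strict
condition leaves room to lower `s` slightly below `2p'` at the cost of a larger growth rate. -/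
lemma side {p α s a : ℝ} (p1 : 3 / 2 < p) (p3 : p < 3) (α0 : 0 ≤ α) (s1 : 1 ≤ s) (a0 : 0 ≤ a)
    (a1 : a ≤ 3 / s - 1 / 2)
    (h : (3 - 3 / p < 6 / s ∧ α + ((4 * p - 6) * s) / ((6 - s) * p) * a ≤ 1) ∨
      (6 / s ≤ 3 - 3 / p ∧ α + 2 * a < 3 / p + 6 / s - 2)) :
    ∃ s' a', 1 ≤ s' ∧ s' ≤ s ∧ a' - 3 / s' = a - 3 / s ∧ Adm p α s' a' ∧
      (s < 2 → s' = s ∧ a' = a) ∧ (2 ≤ s → 2 ≤ s') := by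
  have p0 : 0 < p := by linarith
  have s0 : 0 < s := by linarith
  have w0 := w_pos p1
  have w1 := w_lt p1 p3
  have e6 : 6 / s = 2 * (3 / s) := by ring
  rcases h with ⟨h1, h2⟩ | ⟨h1, h2⟩
  · refine ⟨s, a, s1, le_rfl, rfl, ⟨s1, a0, by linarith, by linarith, ?_⟩, fun _ => ⟨rfl, rfl⟩, id⟩
    have K0 : 0 < 6 / s - 1 := by linarith
    have s6 : 0 < 6 - s := by
      have : 6 / s - 1 = (6 - s) / s := by field_simp
      rw [this] at K0
      exact (div_pos_iff_of_pos_right s0).1 K0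
    have e : ((4 * p - 6) * s) / ((6 - s) * p) * a * (6 / s - 1) = 2 * a * (2 - 3 / p) := by
      field_simp
      ring
    have := mul_le_mul_of_nonneg_right h2 K0.le
    rw [add_mul, e] at this
    linarith
  · set w := 2 - 3 / p with hw
    have δ0 : 0 < 1 - (α + (2 * a - 6 / s + 1) + w) := by linarith
    set δ := 1 - (α + (2 * a - 6 / s + 1) + w) with hδ
    have c0 : 0 < α + w + 1 := by linarith
    set η := min 1 (w * δ / (α + w + 1)) with hη
    have η0 : 0 < η := lt_min one_pos (by positivity)
    have η1 : η ≤ 1 := min_le_left _ _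
    have η2 : η * (α + w + 1) ≤ w * δ := by
      rw [← le_div_iff₀ c0]; exact min_le_right _ _
    have k0 : 0 < 1 + w + η := by linarith
    have e3 : 3 / (6 / (1 + w + η)) = (1 + w + η) / 2 := by field_simp; norm_num
    have e7 : 6 / (6 / (1 + w + η)) = 1 + w + η := by field_simp
    have t2 : 2 ≤ 6 / (1 + w + η) := by rw [le_div_iff₀ k0]; linarith
    refine ⟨6 / (1 + w + η), a + (1 + w + η) / 2 - 3 / s, by linarith, ?_, by rw [e3]; ring, ?_, ?_,
      fun _ => t2⟩
    · rw [div_le_iff₀ k0]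
      have : 6 = s * (6 / s) := by field_simp
      nlinarith
    · refine ⟨by linarith, by linarith, by rw [e7]; linarith, by rw [e7]; linarith, ?_⟩
      rw [e7]
      have : α * (1 + w + η - 1) + 2 * (a + (1 + w + η) / 2 - 3 / s) * w - (1 + w + η - 1) =
          η * (α + w + 1) - w * δ - 2 * η := by rw [hδ, e6]; ring
      linarith
    · intro h
      have : 3 < 6 / s := by rw [lt_div_iff₀ s0]; linarith
      have : 0 < 3 / p := by positivity
      linarith

/-- Interpolation parameters for the bilinear flux `θ v`. -/
lemma bil_exists {q β r γ : ℝ} (q1 : 1 ≤ q) (r1 : 1 ≤ r)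
    (h : (q < 2 ∧ r < 2 ∧ 2 * q / (6 - q) * β + 2 * r / (6 - r) * γ ≤ 1) ∨
      (q < 2 ∧ 2 ≤ r ∧ 2 * q / (6 - q) * β + γ ≤ 3 / r - 1 / 2) ∨
      (2 ≤ q ∧ r < 2 ∧ β + 2 * r / (6 - r) * γ ≤ 3 / q - 1 / 2) ∨
      (2 ≤ q ∧ 2 ≤ r ∧ β + γ < 3 / q + 3 / r - 2)) : ∃ tv tθ, Bil q β r γ tv tθ := by
  -- below exponent `2`, the parameter interpolating `L²` between `Lˢ` and `L⁶`
  have low : ∀ {s a : ℝ}, 1 ≤ s → s < 2 → 0 < 1 - 2 * s / (6 - s) ∧ 1 - 2 * s / (6 - s) < 1 ∧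
      (1 - (1 - 2 * s / (6 - s))) / s + (1 - 2 * s / (6 - s)) / 6 = 1 / 2 ∧
      (1 - (1 - 2 * s / (6 - s))) * (a - 3 / s) + 3 / 2 - (1 - 2 * s / (6 - s)) / 2 =
        2 * s / (6 - s) * a := by
    intro s a s1 s2
    have s6 : 0 < 6 - s := by linarith
    have s0 : 0 < s := by linarith
    refine ⟨?_, ?_, ?_, ?_⟩
    · rw [sub_pos, div_lt_one s6]; linarith
    · have : 0 < 2 * s / (6 - s) := by positivity
      linarith
    · field_simp; ring
    · field_simp; ring
  have high : ∀ {s : ℝ}, 2 ≤ s → 1 / s ≤ 1 / 2 := fun hs =>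
    one_div_le_one_div_of_le (by norm_num) hs
  rcases h with ⟨h1, h2, h3⟩ | ⟨h1, h2, h3⟩ | ⟨h1, h2, h3⟩ | ⟨h1, h2, h3⟩
  · obtain ⟨a, b, c, d⟩ := low (a := β) q1 h1
    obtain ⟨a', b', c', d'⟩ := low (a := γ) r1 h2
    exact ⟨_, _, ⟨a.le, b.le, a'.le, b'.le, by linarith, by linarith, c.le, c'.le,
      by rw [d, d']; exact h3⟩⟩
  · obtain ⟨a, b, c, d⟩ := low (a := β) q1 h1
    refine ⟨_, 0, ⟨a.le, b.le, le_rfl, zero_le_one, by linarith, by linarith, c.le, ?_, ?_⟩⟩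
    · simpa using high h2
    · rw [d]; linarith
  · obtain ⟨a', b', c', d'⟩ := low (a := γ) r1 h2
    refine ⟨0, _, ⟨le_rfl, zero_le_one, a'.le, b'.le, by linarith, by linarith, ?_, c'.le, ?_⟩⟩
    · simpa using high h1
    · rw [d']; linarith
  · set δ := 3 / q + 3 / r - 2 - (β + γ) with hδ
    have δ0 : 0 < δ := by linarith
    have c0 : 0 < |3 / q - β| + 1 := by positivity
    set τ := min 1 (δ / (|3 / q - β| + 1)) with hτ
    have τ0 : 0 < τ := lt_min one_pos (by positivity)
    have τ1 : τ ≤ 1 := min_le_left _ _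
    have τ2 : τ * (|3 / q - β| + 1) ≤ δ := by
      rw [← le_div_iff₀ c0]; exact min_le_right _ _
    refine ⟨τ, 0, ⟨τ0.le, τ1, le_rfl, zero_le_one, by linarith, by linarith, ?_, ?_, ?_⟩⟩
    · have := high h1
      have e : (1 - τ) / q = (1 - τ) * (1 / q) := by ring
      rw [e]
      nlinarith
    · simpa using high h2
    · have := le_abs_self (3 / q - β)
      nlinarith

end TCM

namespace TCM

/-! ### Good scales from the lower limit -/

lemma An_sub_Ann {R : ℝ} (R1 : 1 ≤ R) : An R (3 / 2 * R) ⊆ Ann R := fun x hx =>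
  ⟨by simpa using lt_of_le_of_lt hx.2 (by linarith : 3 / 2 * R < 2 * R), by simpa using hx.1⟩

/-- A bound on a scaled norm over the annulus gives one for any continuous function dominated on the
smaller shell. -/
lemma nr_of_LpS {F : Type*} [NormedAddCommGroup F] {f : E3 → F} (hf : Continuous f) {s a R : ℝ}
    {M : ℝ≥0} (hs : 0 < s) (R1 : 1 ≤ R) (h : ENNReal.ofReal (R ^ (-a)) * LpS f s (Ann R) ≤ M)
    {g : E3 → ℝ} (hg : Continuous g) (hgf : ∀ x, |g x| ≤ ‖f x‖) :
    nr s g (An R (3 / 2 * R)) ≤ M * R ^ a := by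
  have R0 : 0 < R := by linarith
  have hn : Continuous fun x => ‖f x‖ := hf.norm
  have h1 : LpS f s (An R (3 / 2 * R)) ≤ LpS f s (Ann R) :=
    eLpNorm_mono_measure _ (Measure.restrict_mono (An_sub_Ann R1) le_rfl)
  have h2 : ENNReal.ofReal (R ^ (-a)) * LpS f s (An R (3 / 2 * R)) ≤ M :=
    (mul_le_mul_right h1 _).trans h
  unfold LpS at h2
  rw [nr_eLpNorm hs hf (An_compact _ _), ← ENNReal.ofReal_mul (by positivity),
    ← ENNReal.ofReal_coe_nnreal, ENNReal.ofReal_le_ofReal_iff (NNReal.coe_nonneg M), Real.rpow_neg R0.le,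
    inv_mul_le_iff₀ (by positivity)] at h2
  refine (nr_mono hs hg hn (An_compact _ _) fun x _ => ?_).trans (by linarith)
  simpa using hgf x

/-- The finite lower limit provides arbitrarily large good scales. -/
lemma frequently_good {u v : E3 → E3} {pr θ : E3 → ℝ} (h : IsTCMSolution u pr v θ)
    {p q lam α β γ : ℝ} (p0 : 0 < p) (q0 : 0 < q) (l0 : 0 < lam)
    (hliminf : Filter.liminf (fun R => Xn u α p R + Yn v β q R + Zgradn θ γ lam R) atTop < ⊤) :
    ∃ M : ℝ, 0 ≤ M ∧ ∃ᶠ R in atTop, 1 ≤ R ∧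
      Good (fun i y => u y i) (fun i y => v y i) θ p α q β lam γ M R := by
  obtain ⟨M, hM, -⟩ := ENNReal.lt_iff_exists_nnreal_btwn.1 hliminf
  refine ⟨M, M.2, ((Filter.frequently_lt_of_liminf_lt (by isBoundedDefault) hM).and_eventually
    (eventually_ge_atTop 1)).mono ?_⟩
  rintro R ⟨hR, R1⟩
  have hX : Xn u α p R ≤ M := le_trans (le_self_add.trans le_self_add) hR.le
  have hY : Yn v β q R ≤ M := le_trans (le_add_self.trans le_self_add) hR.le
  have hZ : Zgradn θ γ lam R ≤ M := le_trans le_add_self hR.le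
  have cg : Continuous (gradient θ) := by
    unfold gradient
    exact (InnerProductSpace.toDual ℝ E3).symm.continuous.comp (Sm.fderiv h.smooth_θ).continuous
  refine ⟨R1, fun i => ?_, fun i => ?_, ?_⟩
  · exact nr_of_LpS h.smooth_u.continuous p0 R1 hX (comp_sm h.smooth_u i).cont
      fun x => PiLp.norm_apply_le (u x) i
  · exact nr_of_LpS h.smooth_v.continuous q0 R1 hY (comp_sm h.smooth_v i).cont
      fun x => PiLp.norm_apply_le (v x) i
  · exact nr_of_LpS cg l0 R1 hZ (Sm.gr_cont h.smooth_θ) fun x => by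
      rw [norm_gradient, abs_of_nonneg (gr_nonneg _ _)]

end TCM

theorem liouville_tcm_cor2
    (u : E3 → E3) (pr : E3 → ℝ) (v : E3 → E3) (θ : E3 → ℝ)
    (hsol : IsTCMSolution u pr v θ)
    (p q lam α β γ : ℝ)
    (hp : 3 / 2 < p ∧ p < 3) (hq : 1 ≤ q ∧ q ≤ 6) (hlam : 1 ≤ lam ∧ lam ≤ 2)
    (hα : 0 ≤ α ∧ α ≤ 2 / p - 1 / 3) (hβ : 0 ≤ β ∧ β ≤ 3 / q - 1 / 2)
    (hγ : 0 ≤ γ ∧ γ ≤ 3 / lam - 3 / 2)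
    (hliminf : Filter.liminf (fun R => Xn u α p R + Yn v β q R + Zgradn θ γ lam R) atTop < ⊤)
    (hA : ((1 ≤ q ∧ q < 2) ∧ (1 ≤ lam ∧ lam < 6 / 5) ∧
      α + ((4 * p - 6) * q) / ((6 - q) * p) * β ≤ 1 ∧
      α + ((4 * p - 6) * lam) / ((6 - 3 * lam) * p) * γ ≤ 1 ∧
      2 * q / (6 - q) * β + 2 * lam / (6 - 3 * lam) * γ ≤ 1) ∨
      ((1 ≤ q ∧ q < 2) ∧ (6 / 5 ≤ lam ∧ lam < 6 * p / (5 * p - 3)) ∧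
      α + ((4 * p - 6) * q) / ((6 - q) * p) * β ≤ 1 ∧
      α + ((4 * p - 6) * lam) / ((6 - 3 * lam) * p) * γ ≤ 1 ∧
      2 * q / (6 - q) * β + γ ≤ (6 - 3 * lam) / (2 * lam)) ∨
      ((1 ≤ q ∧ q < 2) ∧ (6 * p / (5 * p - 3) ≤ lam ∧ lam ≤ 2) ∧
      α + ((4 * p - 6) * q) / ((6 - q) * p) * β ≤ 1 ∧
      α + 2 * γ < 3 / p + 6 / lam - 4 ∧
      2 * q / (6 - q) * β + γ ≤ (6 - 3 * lam) / (2 * lam)) ∨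
      ((2 ≤ q ∧ q < 2 * (p / (p - 1))) ∧ (1 ≤ lam ∧ lam < 6 / 5) ∧
      α + ((4 * p - 6) * q) / ((6 - q) * p) * β ≤ 1 ∧
      α + ((4 * p - 6) * lam) / ((6 - 3 * lam) * p) * γ ≤ 1 ∧
      β + 2 * lam / (6 - 3 * lam) * γ ≤ (6 - q) / (2 * q)) ∨
      ((2 ≤ q ∧ q < 2 * (p / (p - 1))) ∧ (6 / 5 ≤ lam ∧ lam < 6 * p / (5 * p - 3)) ∧
      α + ((4 * p - 6) * q) / ((6 - q) * p) * β ≤ 1 ∧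
      α + ((4 * p - 6) * lam) / ((6 - 3 * lam) * p) * γ ≤ 1 ∧
      β + γ < 3 / q + 3 / lam - 3) ∨
      ((2 ≤ q ∧ q < 2 * (p / (p - 1))) ∧ (6 * p / (5 * p - 3) ≤ lam ∧ lam ≤ 2) ∧
      α + ((4 * p - 6) * q) / ((6 - q) * p) * β ≤ 1 ∧
      α + 2 * γ < 3 / p + 6 / lam - 4 ∧
      β + γ < 3 / q + 3 / lam - 3) ∨
      ((2 * (p / (p - 1)) ≤ q ∧ q ≤ 6) ∧ (1 ≤ lam ∧ lam < 6 / 5) ∧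
      α + 2 * β < 3 / p + 6 / q - 2 ∧
      α + ((4 * p - 6) * lam) / ((6 - 3 * lam) * p) * γ ≤ 1 ∧
      β + 2 * lam / (6 - 3 * lam) * γ ≤ (6 - q) / (2 * q)) ∨
      ((2 * (p / (p - 1)) ≤ q ∧ q ≤ 6) ∧ (6 / 5 ≤ lam ∧ lam < 6 * p / (5 * p - 3)) ∧
      α + 2 * β < 3 / p + 6 / q - 2 ∧
      α + ((4 * p - 6) * lam) / ((6 - 3 * lam) * p) * γ ≤ 1 ∧
      β + γ < 3 / q + 3 / lam - 3)) :
    (∀ x : E3, u x = 0) ∧ (∀ x : E3, v x = 0) ∧ ∃ c : ℝ, ∀ x : E3, θ x = c := by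
  obtain ⟨p1, p3⟩ := hp
  obtain ⟨q1, -⟩ := hq
  obtain ⟨l1, l2⟩ := hlam
  obtain ⟨α0, hα⟩ := hα
  obtain ⟨β0, hβ⟩ := hβ
  obtain ⟨γ0, hγ⟩ := hγ
  have p0 : 0 < p := by linarith
  have q0 : 0 < q := by linarith
  have l0 : 0 < lam := by linarith
  have l3 : 0 < 3 - lam := by linarith
  have S := TCM.Sys.of_sol hsol
  obtain ⟨M, M0, fr⟩ := TCM.frequently_good hsol p0 q0 l0 hliminf
  obtain ⟨W, W1, HW⟩ := TCM.shell_holder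
  -- the Sobolev exponent of `lam`, in terms of which all conditions on `(lam, γ)` are those on `(q, β)`
  obtain ⟨r, hr⟩ : ∃ r, r = 3 * lam / (3 - lam) := ⟨_, rfl⟩
  have r0 : 0 < r := by rw [hr]; positivity
  have e1 : 3 / r = 3 / lam - 1 := by rw [hr]; field_simp
  have e6 : 6 / r = 6 / lam - 2 := by rw [hr]; field_simp; ring
  have d6 : 6 - r = 3 * (6 - 3 * lam) / (3 - lam) := by rw [hr]; field_simp; ring
  have r1 : 3 / 2 ≤ r := by rw [hr, le_div_iff₀ l3]; linarith
  have c1 : 2 * lam / (6 - 3 * lam) = 2 * r / (6 - r) := by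
    rw [d6, hr]
    rcases eq_or_ne (6 - 3 * lam) 0 with h | h
    · simp [h]
    · field_simp
  have c2 : ((4 * p - 6) * lam) / ((6 - 3 * lam) * p) = ((4 * p - 6) * r) / ((6 - r) * p) := by
    rw [d6, hr]
    rcases eq_or_ne (6 - 3 * lam) 0 with h | h
    · simp [h]
    · field_simp
  have c3 : (6 - 3 * lam) / (2 * lam) = 3 / r - 1 / 2 := by rw [e1]; field_simp; ring
  have c4 : (6 - q) / (2 * q) = 3 / q - 1 / 2 := by field_simp; ring
  have rlow : lam < 6 / 5 → r < 2 := fun h => by rw [hr, div_lt_iff₀ l3]; linarith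
  have rhigh : 6 / 5 ≤ lam → 2 ≤ r := fun h => by rw [hr, le_div_iff₀ l3]; linarith
  have k0 : 0 < 5 * p - 3 := by linarith
  have pp : 0 < p - 1 := by linarith
  have r2 : lam < 6 * p / (5 * p - 3) → 3 - 3 / p < 6 / r := fun h => by
    rw [lt_div_iff₀ k0] at h
    rw [e6, ← sub_pos]
    have : 6 / lam - 2 - (3 - 3 / p) = (6 * p - lam * (5 * p - 3)) / (lam * p) := by
      field_simp; ring
    rw [this]
    exact div_pos (by linarith) (by positivity)
  have r3 : 6 * p / (5 * p - 3) ≤ lam → 6 / r ≤ 3 - 3 / p := fun h => by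
    rw [div_le_iff₀ k0] at h
    rw [e6, ← sub_nonneg]
    have : 3 - 3 / p - (6 / lam - 2) = (lam * (5 * p - 3) - 6 * p) / (lam * p) := by
      field_simp; ring
    rw [this]
    exact div_nonneg (by linarith) (by positivity)
  have q2 : q < 2 * (p / (p - 1)) → 3 - 3 / p < 6 / q := fun h => by
    rw [← mul_div_assoc, lt_div_iff₀ pp] at h
    rw [← sub_pos]
    have : 6 / q - (3 - 3 / p) = 3 * (2 * p - q * (p - 1)) / (q * p) := by field_simp; ring
    rw [this]
    exact div_pos (by linarith) (by positivity)
  have q3 : 2 * (p / (p - 1)) ≤ q → 6 / q ≤ 3 - 3 / p := fun h => by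
    rw [← mul_div_assoc, div_le_iff₀ pp] at h
    rw [← sub_nonneg]
    have : 3 - 3 / p - 6 / q = 3 * (q * (p - 1) - 2 * p) / (q * p) := by field_simp; ring
    rw [this]
    exact div_nonneg (by linarith) (by positivity)
  have pd : 2 < 2 * (p / (p - 1)) := by
    have : 1 < p / (p - 1) := by rw [lt_div_iff₀ pp]; linarith
    linarith
  have pl : 6 / 5 < 6 * p / (5 * p - 3) := by
    rw [div_lt_div_iff₀ (by norm_num) k0]; linarith
  have hA' : ((3 - 3 / p < 6 / q ∧ α + ((4 * p - 6) * q) / ((6 - q) * p) * β ≤ 1) ∨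
        (6 / q ≤ 3 - 3 / p ∧ α + 2 * β < 3 / p + 6 / q - 2)) ∧
      ((3 - 3 / p < 6 / r ∧ α + ((4 * p - 6) * r) / ((6 - r) * p) * γ ≤ 1) ∨
        (6 / r ≤ 3 - 3 / p ∧ α + 2 * γ < 3 / p + 6 / r - 2)) ∧
      ((q < 2 ∧ r < 2 ∧ 2 * q / (6 - q) * β + 2 * r / (6 - r) * γ ≤ 1) ∨
        (q < 2 ∧ 2 ≤ r ∧ 2 * q / (6 - q) * β + γ ≤ 3 / r - 1 / 2) ∨
        (2 ≤ q ∧ r < 2 ∧ β + 2 * r / (6 - r) * γ ≤ 3 / q - 1 / 2) ∨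
        (2 ≤ q ∧ 2 ≤ r ∧ β + γ < 3 / q + 3 / r - 2)) := by
    rw [c1, c2, c3, c4] at hA
    have e6' : 3 / p + 6 / lam - 4 = 3 / p + 6 / r - 2 := by rw [e6]; ring
    have e1' : 3 / q + 3 / lam - 3 = 3 / q + 3 / r - 2 := by rw [e1]; ring
    rw [e6', e1'] at hA
    rcases hA with ⟨⟨-, a⟩, ⟨-, b⟩, c, d, e⟩ | ⟨⟨-, a⟩, ⟨b', b⟩, c, d, e⟩ |
      ⟨⟨-, a⟩, ⟨b, -⟩, c, d, e⟩ | ⟨⟨a', a⟩, ⟨-, b⟩, c, d, e⟩ | ⟨⟨a', a⟩, ⟨b', b⟩, c, d, e⟩ |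
      ⟨⟨a', a⟩, ⟨b, -⟩, c, d, e⟩ | ⟨⟨a, -⟩, ⟨-, b⟩, c, d, e⟩ | ⟨⟨a, -⟩, ⟨b', b⟩, c, d, e⟩
    · exact ⟨.inl ⟨q2 (by linarith), c⟩, .inl ⟨r2 (by linarith), d⟩, .inl ⟨a, rlow b, e⟩⟩
    · exact ⟨.inl ⟨q2 (by linarith), c⟩, .inl ⟨r2 b, d⟩, .inr (.inl ⟨a, rhigh b', e⟩)⟩
    · exact ⟨.inl ⟨q2 (by linarith), c⟩, .inr ⟨r3 b, d⟩,
        .inr (.inl ⟨a, rhigh (by linarith), e⟩)⟩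
    · exact ⟨.inl ⟨q2 a, c⟩, .inl ⟨r2 (by linarith), d⟩, .inr (.inr (.inl ⟨a', rlow b, e⟩))⟩
    · exact ⟨.inl ⟨q2 a, c⟩, .inl ⟨r2 b, d⟩, .inr (.inr (.inr ⟨a', rhigh b', e⟩))⟩
    · exact ⟨.inl ⟨q2 a, c⟩, .inr ⟨r3 b, d⟩, .inr (.inr (.inr ⟨a', rhigh (by linarith), e⟩))⟩
    · exact ⟨.inr ⟨q3 a, c⟩, .inl ⟨r2 (by linarith), d⟩,
        .inr (.inr (.inl ⟨by linarith, rlow b, e⟩))⟩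
    · exact ⟨.inr ⟨q3 a, c⟩, .inl ⟨r2 b, d⟩, .inr (.inr (.inr ⟨by linarith, rhigh b', e⟩))⟩
  obtain ⟨sv, st, sb⟩ := hA'
  obtain ⟨q', β', q1', qq, eq, aq, ql, qh⟩ := TCM.side p1 p3 α0 q1 β0 hβ sv
  obtain ⟨r', γ', r1', rr, er, ar, rl, rh⟩ := TCM.side p1 p3 α0 (by linarith) γ0 (by linarith) st
  have r0' : 0 < r' := by linarith
  obtain ⟨tv, tθ, bil⟩ : ∃ tv tθ, TCM.Bil q' β' r' γ' tv tθ := by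
    refine TCM.bil_exists q1' r1' ?_
    rcases sb with ⟨a, b, c⟩ | ⟨a, b, c⟩ | ⟨a, b, c⟩ | ⟨a, b, c⟩
    · obtain ⟨rfl, rfl⟩ := ql a
      obtain ⟨rfl, rfl⟩ := rl b
      exact .inl ⟨a, b, c⟩
    · obtain ⟨rfl, rfl⟩ := ql a
      exact .inr (.inl ⟨a, rh b, by linarith⟩)
    · obtain ⟨rfl, rfl⟩ := rl b
      exact .inr (.inr (.inl ⟨qh a, b, by linarith⟩))
    · exact .inr (.inr (.inr ⟨qh a, rh b, by linarith⟩))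
  have r32 : 3 / 2 ≤ r' := by
    rcases lt_or_ge r 2 with h | h
    · rw [(rl h).1]; exact r1
    · linarith [rh h]
  have k3 : 0 < 3 + r' := by linarith
  have el : 1 / r' = 1 / (3 * r' / (3 + r')) - 1 / 3 := by field_simp; ring
  have el3 : 3 / r' = 3 / (3 * r' / (3 + r')) - 1 := by field_simp; ring
  have lge : 1 ≤ 3 * r' / (3 + r') := by rw [le_div_iff₀ k3]; linarith
  have lle : 3 * r' / (3 + r') ≤ lam := by
    rw [div_le_iff₀ k3]
    have : r * (3 - lam) = 3 * lam := by rw [hr]; field_simp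
    nlinarith
  have fr' : ∃ᶠ R in atTop, TCM.Good (fun i y => u y i) (fun i y => v y i) θ p α q' β'
      (3 * r' / (3 + r')) γ' (W * M) R := by
    refine fr.mono ?_
    rintro R ⟨R1, g⟩
    exact ⟨fun i => HW (S.su i).cont (by linarith) le_rfl rfl M0 R1 (g.hu i),
      fun i => HW (S.sv i).cont q1' qq eq M0 R1 (g.hv i),
      HW S.st.gr_cont lge lle (by linarith) M0 R1 g.ht⟩
  obtain ⟨hu, hv, ht⟩ := TCM.core p1 p3 α0 hα lge r0' el aq ar bil (by positivity) S fr'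
  exact ⟨fun x => by ext i; exact hu i x, fun x => by ext i; exact hv i x, θ 0, ht⟩
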